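/- Let R : P₂ → ℝ be Lebesgue measurable and C ∈ ℝ. There exists a Lebesgue measurable L : (0,1) → ℝ solving the perturbed Spence-Abel system almost everywhere with data (R, C) if and only if R satisfies the 6-term equation almost everywhere and the symmetry equation almost everywhere. -/

import Mathlib

open MeasureTheory Set

/-- The parameter space `P₂ = {(x,y) : 0 < x < y < 1}`. -/
def P2 : Set (ℝ × ℝ) := {p | 0 < p.1 ∧ p.1 < p.2 ∧ p.2 < 1}

/-- The parameter space `P₃ = {(x,y,z) : 0 < x < y < z < 1}`. -/
def P3 : Set (ℝ × ℝ × ℝ) := {p | 0 < p.1 ∧ p.1 < p.2.1 ∧ p.2.1 < p.2.2 ∧ p.2.2 < 1}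

/-- `L` solves the perturbed Spence–Abel system almost everywhere with data `(R, C)`. -/
def SolvesAE (R : ℝ × ℝ → ℝ) (C : ℝ) (L : ℝ → ℝ) : Prop :=
  (∀ᵐ p ∂(volume.restrict P2),
    L p.1 - L p.2 - L (p.1 / p.2) - L ((p.2 - 1) / (p.1 - 1))
      + L (p.1 * (p.2 - 1) / (p.2 * (p.1 - 1))) = R p) ∧
  (∀ᵐ x ∂(volume.restrict (Set.Ioo (0:ℝ) 1)), L (1 - x) = C - L x)

/-- `R` satisfies the 6-term equation almost everywhere on `P₃`. -/
def SixTermAE (R : ℝ × ℝ → ℝ) : Prop :=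
  ∀ᵐ p ∂(volume.restrict P3),
    R (p.1, p.2.1) - R (p.1, p.2.2) + R (p.2.1, p.2.2)
      - R (p.1 / p.2.2, p.2.1 / p.2.2)
      - R ((p.2.2 - 1) / (p.1 - 1), (p.2.2 - 1) / (p.2.1 - 1))
      + R (p.1 * (p.2.2 - 1) / (p.2.2 * (p.1 - 1)),
           p.2.1 * (p.2.2 - 1) / (p.2.2 * (p.2.1 - 1))) = 0

/-- `R` satisfies the symmetry equation almost everywhere on `P₂`. -/
def SymmAE (R : ℝ × ℝ → ℝ) : Prop :=
  ∀ᵐ p ∂(volume.restrict P2), R (1 - p.2, (1 - p.2) / (1 - p.1)) = R p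

/-!
For any `L` the five-term expression `fiveTerm L` satisfies the 6-term equation identically, and the
symmetry equation follows from the reflection equation; the point is the converse.

Let `c y` be an approximate median of `R (·, y)` on the slice at height `y`. The 6-term equation at
`(v, w, y)` expresses `R (v, y) - R (w, y)` through values of `R` at points that spread over the
unit square, so the deviation of `R` from `c` has uniformly small tails on slices, and the 6-term
equation at `(v, x, y)` with a well-chosen `v` bounds `R + fiveTerm c` locally. Once `R` is replaced
by this locally bounded function, averaging the same two identities over `v` and `w` against bump
functions shows that, modulo five-term expressions, `R` is locally `C²`: the arguments are Möbius
functions of the integration variables, so a change of variables moves the dependence on `(x, y)`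
from `R` to the densities.

For `R` of class `C²` the function `(y - x) ^ 2 * ∂ₓ∂ᵧR` is, in logarithmic coordinates, an additive
cocycle on `(0, ∞)`, hence a coboundary. Subtracting the five-term expression of a double primitive
leaves a function `f x + g y`, which the 6-term equation forces to be a five-term expression.

If `fiveTerm L = R` is symmetric, then `L x + L (1 - x)` is almost everywhere constant; the constant
is adjusted to `C` by a multiple of the Rogers dilogarithm, which up to an additive constant solves
the homogeneous equation.
-/

open scoped ContDiff Topology

/-- The left-hand side of the five-term (Spence–Abel) equation at `p = (x, y)`, with the
fractions of `SolvesAE` rewritten as quotients of numbers that are positive on `P₂`. -/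
noncomputable def fiveTerm (L : ℝ → ℝ) (p : ℝ × ℝ) : ℝ :=
  L p.1 - L p.2 - L (p.1 / p.2) - L ((1 - p.2) / (1 - p.1))
    + L (p.1 * (1 - p.2) / (p.2 * (1 - p.1)))

/-- The left-hand side of the six-term equation at `(v, x, y) ∈ P₃`. -/
noncomputable def sixTerm (R : ℝ × ℝ → ℝ) (v x y : ℝ) : ℝ :=
  R (v, x) - R (v, y) + R (x, y) - R (v / y, x / y)
    - R ((1 - y) / (1 - v), (1 - y) / (1 - x))
    + R (v * (1 - y) / (y * (1 - v)), x * (1 - y) / (y * (1 - x)))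

section FiveAndSixTerms

lemma sub_one_div_sub_one (x y : ℝ) : (y - 1) / (x - 1) = (1 - y) / (1 - x) := by
  rw [← neg_sub 1 y, ← neg_sub 1 x, neg_div_neg_eq]

lemma mul_sub_one_div_mul_sub_one (x y : ℝ) :
    x * (y - 1) / (y * (x - 1)) = x * (1 - y) / (y * (1 - x)) := by
  rw [mul_div_mul_comm, sub_one_div_sub_one, ← mul_div_mul_comm]

lemma solvesAE_iff_fiveTerm {R : ℝ × ℝ → ℝ} {C : ℝ} {L : ℝ → ℝ} :
    SolvesAE R C L ↔ (∀ᵐ p ∂(volume.restrict P2), fiveTerm L p = R p) ∧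
      ∀ᵐ x ∂(volume.restrict (Ioo (0 : ℝ) 1)), L (1 - x) = C - L x := by
  simp only [SolvesAE, fiveTerm, mul_sub_one_div_mul_sub_one, sub_one_div_sub_one]

lemma sixTermAE_iff_sixTerm {R : ℝ × ℝ → ℝ} :
    SixTermAE R ↔ ∀ᵐ p ∂(volume.restrict P3), sixTerm R p.1 p.2.1 p.2.2 = 0 := by
  simp only [SixTermAE, sixTerm, mul_sub_one_div_mul_sub_one, sub_one_div_sub_one]

lemma fiveTerm_add_const_mul (L M : ℝ → ℝ) (k : ℝ) (p : ℝ × ℝ) :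
    fiveTerm (fun x => L x + k * M x) p = fiveTerm L p + k * fiveTerm M p := by
  unfold fiveTerm; ring

lemma fiveTerm_add (L M : ℝ → ℝ) (p : ℝ × ℝ) :
    fiveTerm (fun x => L x + M x) p = fiveTerm L p + fiveTerm M p := by
  unfold fiveTerm; ring

lemma fiveTerm_const (m : ℝ) (p : ℝ × ℝ) : fiveTerm (fun _ => m) p = -m := by
  unfold fiveTerm; ring

lemma sixTerm_add (R S : ℝ × ℝ → ℝ) (v x y : ℝ) :
    sixTerm (fun p => R p + S p) v x y = sixTerm R v x y + sixTerm S v x y := by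
  unfold sixTerm; ring

lemma sixTerm_sub (R S : ℝ × ℝ → ℝ) (v x y : ℝ) :
    sixTerm (fun p => R p - S p) v x y = sixTerm R v x y - sixTerm S v x y := by
  unfold sixTerm; ring

lemma one_sub_one_sub_div_one_sub {x y : ℝ} (hx : 1 - x ≠ 0) :
    1 - (1 - y) / (1 - x) = (y - x) / (1 - x) := by
  rw [one_sub_div hx, sub_sub_sub_cancel_left]

lemma one_sub_mul_one_sub_div {x y : ℝ} (hx : 1 - x ≠ 0) (hy : y ≠ 0) :
    1 - x * (1 - y) / (y * (1 - x)) = (y - x) / (y * (1 - x)) := by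
  rw [one_sub_div (mul_ne_zero hy hx)]
  ring

lemma sixTerm_fiveTerm_eq_zero (L : ℝ → ℝ) {v x y : ℝ} (hp : (v, x, y) ∈ P3) :
    sixTerm (fiveTerm L) v x y = 0 := by
  obtain ⟨hv, hvx, hxy, hy⟩ : 0 < v ∧ v < x ∧ x < y ∧ y < 1 := hp
  have v_ne : v ≠ 0 := by linarith
  have x_ne : x ≠ 0 := by linarith
  have y_ne : y ≠ 0 := by linarith
  have one_sub_v : 1 - v ≠ 0 := by linarith
  have one_sub_x : 1 - x ≠ 0 := by linarith
  have one_sub_y : 1 - y ≠ 0 := by linarith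
  have y_sub_v : y - v ≠ 0 := by linarith
  have y_sub_x : y - x ≠ 0 := by linarith
  have div_ratio : v / y / (x / y) = v / x := by field_simp
  have div_phi : (y - x) / y / ((y - v) / y) = (y - x) / (y - v) := by field_simp
  have div_psi : v / y * ((y - x) / y) / (x / y * ((y - v) / y)) =
      v * (y - x) / (x * (y - v)) := by field_simp
  have phi_ratio : (1 - y) / (1 - v) / ((1 - y) / (1 - x)) = (1 - x) / (1 - v) := by field_simp
  have phi_phi : (y - x) / (1 - x) / ((y - v) / (1 - v)) =
      (y - x) * (1 - v) / ((1 - x) * (y - v)) := by field_simp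
  have phi_psi : (1 - y) / (1 - v) * ((y - x) / (1 - x)) /
      ((1 - y) / (1 - x) * ((y - v) / (1 - v))) = (y - x) / (y - v) := by field_simp
  have psi_ratio : v * (1 - y) / (y * (1 - v)) / (x * (1 - y) / (y * (1 - x))) =
      v * (1 - x) / (x * (1 - v)) := by field_simp
  have psi_phi : (y - x) / (y * (1 - x)) / ((y - v) / (y * (1 - v))) =
      (y - x) * (1 - v) / ((1 - x) * (y - v)) := by field_simp
  have psi_psi : v * (1 - y) / (y * (1 - v)) * ((y - x) / (y * (1 - x))) /
      (x * (1 - y) / (y * (1 - x)) * ((y - v) / (y * (1 - v)))) =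
      v * (y - x) / (x * (y - v)) := by field_simp
  simp only [sixTerm, fiveTerm, one_sub_div y_ne, one_sub_one_sub_div_one_sub one_sub_v,
    one_sub_one_sub_div_one_sub one_sub_x, one_sub_mul_one_sub_div one_sub_v y_ne,
    one_sub_mul_one_sub_div one_sub_x y_ne, div_ratio, div_phi, div_psi, phi_ratio, phi_phi,
    phi_psi, psi_ratio, psi_phi, psi_psi]
  ring

lemma symm_fst_div_snd {x y : ℝ} (hy : 1 - y ≠ 0) :
    (1 - y) / ((1 - y) / (1 - x)) = 1 - x :=
  div_div_cancel₀ hy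

lemma symm_one_sub_div {x y : ℝ} (hx : 1 - x ≠ 0) (hy : y ≠ 0) :
    (1 - (1 - y) / (1 - x)) / (1 - (1 - y)) = 1 - x * (1 - y) / (y * (1 - x)) := by
  rw [one_sub_one_sub_div_one_sub hx, one_sub_mul_one_sub_div hx hy, sub_sub_cancel, div_div,
    mul_comm y]

lemma symm_mul_one_sub_div {x y : ℝ} (hx : 1 - x ≠ 0) (hy : 1 - y ≠ 0) (hy₀ : y ≠ 0) :
    (1 - y) * (1 - (1 - y) / (1 - x)) / ((1 - y) / (1 - x) * (1 - (1 - y))) = 1 - x / y := by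
  rw [one_sub_one_sub_div_one_sub hx, one_sub_div hy₀, sub_sub_cancel]
  field_simp

lemma fiveTerm_symm_sub_fiveTerm (L : ℝ → ℝ) {x y : ℝ} (hp : (x, y) ∈ P2) :
    fiveTerm L (1 - y, (1 - y) / (1 - x)) - fiveTerm L (x, y) =
      (L (1 - y) + L y) - (L (1 - x) + L x)
      - (L (1 - x * (1 - y) / (y * (1 - x))) + L (x * (1 - y) / (y * (1 - x))))
      + (L (1 - x / y) + L (x / y)) := by
  obtain ⟨hx, hxy, hy⟩ : 0 < x ∧ x < y ∧ y < 1 := hp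
  have y_ne : y ≠ 0 := by linarith
  have one_sub_x : 1 - x ≠ 0 := by linarith
  have one_sub_y : 1 - y ≠ 0 := by linarith
  simp only [fiveTerm, symm_fst_div_snd one_sub_y, symm_one_sub_div one_sub_x y_ne,
    symm_mul_one_sub_div one_sub_x one_sub_y y_ne]
  ring

end FiveAndSixTerms

section Simplices

lemma isOpen_P2 : IsOpen P2 :=
  (isOpen_lt (by fun_prop) (by fun_prop)).and
    ((isOpen_lt (by fun_prop) (by fun_prop)).and (isOpen_lt (by fun_prop) (by fun_prop)))

lemma isOpen_P3 : IsOpen P3 :=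
  (isOpen_lt (by fun_prop) (by fun_prop)).and ((isOpen_lt (by fun_prop) (by fun_prop)).and
    ((isOpen_lt (by fun_prop) (by fun_prop)).and (isOpen_lt (by fun_prop) (by fun_prop))))

lemma measurableSet_P2 : MeasurableSet P2 := isOpen_P2.measurableSet

lemma measurableSet_P3 : MeasurableSet P3 := isOpen_P3.measurableSet

/-- A family of increasing charts `f y : (0, y) → (0, 1)`, `0 < y < 1`, with inverses `g y` that
are differentiable in both variables. The arguments in the five- and six-term equations are
obtained from three such families. -/
structure IsIncreasingChart (f g : ℝ → ℝ → ℝ) : Prop where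
  mem_Ioo : ∀ {y t}, 0 < t → t < y → y < 1 → f y t ∈ Ioo (0 : ℝ) 1
  lt : ∀ {y v x}, 0 < v → v < x → x < y → y < 1 → f y v < f y x
  left_inv : ∀ {y t}, 0 < t → t < y → y < 1 → g y (f y t) = t
  differentiableAt : ∀ {y s}, y ∈ Ioo (0 : ℝ) 1 → s ∈ Ioo (0 : ℝ) 1 →
    DifferentiableAt ℝ (fun q : ℝ × ℝ => g q.2 q.1) (s, y)

lemma isIncreasingChart_div : IsIncreasingChart (fun y t => t / y) (fun y s => s * y) where
  mem_Ioo ht hty _ := ⟨div_pos ht (ht.trans hty), (div_lt_one (ht.trans hty)).2 hty⟩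
  lt hv hvx hxy _ := div_lt_div_of_pos_right hvx (by linarith)
  left_inv ht hty _ := div_mul_cancel₀ _ (ht.trans hty).ne'
  differentiableAt _ _ := by fun_prop

lemma isIncreasingChart_one_sub_div :
    IsIncreasingChart (fun y t => (1 - y) / (1 - t)) (fun y s => 1 - (1 - y) / s) where
  mem_Ioo ht hty hy := ⟨div_pos (by linarith) (by linarith),
    (div_lt_one (by linarith)).2 (by linarith)⟩
  lt _ hvx hxy hy := div_lt_div_of_pos_left (by linarith) (by linarith) (by linarith)
  left_inv _ _ hy := by
    rw [div_div_cancel₀ (by linarith), sub_sub_cancel]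
  differentiableAt _ hs := by
    have := hs.1.ne'
    fun_prop (disch := assumption)

lemma isIncreasingChart_mul_one_sub_div :
    IsIncreasingChart (fun y t => t * (1 - y) / (y * (1 - t)))
      (fun y s => s * y / (1 - y + s * y)) where
  mem_Ioo {y t} ht hty hy := by
    have pos_y : 0 < y := ht.trans hty
    have pos_sub : 0 < 1 - t := by linarith
    refine ⟨div_pos (mul_pos ht (by linarith)) (by positivity), ?_⟩
    rw [div_lt_one (by positivity)]
    linarith
  lt {y v x} hv hvx hxy hy := by
    have pos_y : 0 < y := by linarith
    have pos_v : 0 < 1 - v := by linarith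
    have pos_x : 0 < 1 - x := by linarith
    rw [div_lt_div_iff₀ (by positivity) (by positivity)]
    have : 0 < (x - v) * (y * (1 - y)) := mul_pos (by linarith) (mul_pos pos_y (by linarith))
    linarith
  left_inv {y t} ht hty hy := by
    have y_ne : y ≠ 0 := by linarith
    have one_sub_t : 1 - t ≠ 0 := by linarith
    have one_sub_y : 1 - y ≠ 0 := by linarith
    have den : 1 - y + t * (1 - y) / (y * (1 - t)) * y = (1 - y) / (1 - t) := by
      field_simp; ring
    rw [den]
    field_simp
  differentiableAt {y s} hy hs := by
    have : 1 - y + s * y ≠ 0 := by linarith [hy.2, mul_pos hs.1 hy.1]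
    fun_prop (disch := assumption)

lemma IsIncreasingChart.mem_P2 {f g : ℝ → ℝ → ℝ} (h : IsIncreasingChart f g) {v x y : ℝ}
    (hp : (v, x, y) ∈ P3) : (f y v, f y x) ∈ P2 :=
  ⟨(h.mem_Ioo hp.1 (hp.2.1.trans hp.2.2.1) hp.2.2.2).1, h.lt hp.1 hp.2.1 hp.2.2.1 hp.2.2.2,
    (h.mem_Ioo (hp.1.trans hp.2.1) hp.2.2.1 hp.2.2.2).2⟩

lemma IsIncreasingChart.mem_Ioo_of_mem_P2 {f g : ℝ → ℝ → ℝ} (h : IsIncreasingChart f g)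
    {p : ℝ × ℝ} (hp : p ∈ P2) : f p.2 p.1 ∈ Ioo (0 : ℝ) 1 :=
  h.mem_Ioo hp.1 hp.2.1 hp.2.2

lemma div_mem_Ioo_of_mem_P2 {p : ℝ × ℝ} (hp : p ∈ P2) : p.1 / p.2 ∈ Ioo (0 : ℝ) 1 :=
  isIncreasingChart_div.mem_Ioo_of_mem_P2 hp

lemma one_sub_div_mem_Ioo_of_mem_P2 {p : ℝ × ℝ} (hp : p ∈ P2) :
    (1 - p.2) / (1 - p.1) ∈ Ioo (0 : ℝ) 1 :=
  isIncreasingChart_one_sub_div.mem_Ioo_of_mem_P2 hp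

lemma mul_one_sub_div_mem_Ioo_of_mem_P2 {p : ℝ × ℝ} (hp : p ∈ P2) :
    p.1 * (1 - p.2) / (p.2 * (1 - p.1)) ∈ Ioo (0 : ℝ) 1 :=
  isIncreasingChart_mul_one_sub_div.mem_Ioo_of_mem_P2 hp

end Simplices

section AlmostEverywhere

lemma ae_restrict_comp_of_leftInvOn {E : Type*} [NormedAddCommGroup E] [NormedSpace ℝ E]
    [FiniteDimensional ℝ E] [MeasurableSpace E] [BorelSpace E] (μ : Measure E)
    [μ.IsAddHaarMeasure] {F G : E → E} {U V : Set E} (hU : MeasurableSet U)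
    (hG : DifferentiableOn ℝ G V) (hF : MapsTo F U V) (hGF : LeftInvOn G F U) {Q : E → Prop}
    (hQ : ∀ᵐ q ∂μ, q ∈ V → Q q) : ∀ᵐ p ∂(μ.restrict U), Q (F p) := by
  rw [ae_restrict_iff' hU]
  have image_null : μ (G '' {q | ¬(q ∈ V → Q q)}) = 0 :=
    addHaar_image_eq_zero_of_differentiableOn_of_addHaar_eq_zero μ
      (hG.mono fun q hq => (Classical.not_imp.1 hq).1) hQ
  refine measure_mono_null (fun p hp => ?_) image_null
  obtain ⟨hpU, hpQ⟩ := Classical.not_imp.1 hp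
  exact ⟨F p, Classical.not_imp.2 ⟨hF hpU, hpQ⟩, hGF hpU⟩

instance : (volume : Measure (ℝ × ℝ × ℝ)).IsAddHaarMeasure :=
  Measure.prod.instIsAddHaarMeasure (volume : Measure ℝ) (volume : Measure (ℝ × ℝ))

lemma quasiMeasurePreserving_fst_fst_snd :
    Measure.QuasiMeasurePreserving (fun q : ℝ × ℝ × ℝ => (q.1, q.2.1)) volume volume :=
  Measure.quasiMeasurePreserving_fst.comp
    (volume_preserving_prodAssoc (α₁ := ℝ) (β₁ := ℝ) (γ₁ := ℝ)).symm.quasiMeasurePreserving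

lemma quasiMeasurePreserving_fst_snd_snd :
    Measure.QuasiMeasurePreserving (fun q : ℝ × ℝ × ℝ => (q.1, q.2.2)) volume volume :=
  quasiMeasurePreserving_fst_fst_snd.comp
    ((MeasurePreserving.id volume).prod Measure.measurePreserving_swap).quasiMeasurePreserving

lemma IsIncreasingChart.ae_P3 {f g : ℝ → ℝ → ℝ} (h : IsIncreasingChart f g) {Q : ℝ × ℝ → Prop}
    (hQ : ∀ᵐ q ∂(volume.restrict P2), Q q) :
    ∀ᵐ p ∂(volume.restrict P3), Q (f p.2.2 p.1, f p.2.2 p.2.1) := by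
  refine ae_restrict_comp_of_leftInvOn volume (F := fun p => (f p.2.2 p.1, f p.2.2 p.2.1, p.2.2))
    (G := fun q => (g q.2.2 q.1, g q.2.2 q.2.1, q.2.2)) (Q := fun q => Q (q.1, q.2.1))
    (V := {q | (q.1, q.2.1) ∈ P2 ∧ q.2.2 ∈ Ioo (0 : ℝ) 1}) measurableSet_P3 ?_ ?_ ?_ ?_
  · rintro ⟨s, t, y⟩ ⟨hst, hy⟩
    have diff_s := h.differentiableAt hy ⟨hst.1, hst.2.1.trans hst.2.2⟩
    have diff_t := h.differentiableAt hy ⟨hst.1.trans hst.2.1, hst.2.2⟩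
    have fst_comp : DifferentiableAt ℝ (fun q : ℝ × ℝ × ℝ => g q.2.2 q.1) (s, t, y) :=
      diff_s.comp (s, t, y) (f := fun q : ℝ × ℝ × ℝ => (q.1, q.2.2)) (by fun_prop)
    have snd_comp : DifferentiableAt ℝ (fun q : ℝ × ℝ × ℝ => g q.2.2 q.2.1) (s, t, y) :=
      diff_t.comp (s, t, y) (f := fun q : ℝ × ℝ × ℝ => (q.2.1, q.2.2)) (by fun_prop)
    exact (fst_comp.prodMk (snd_comp.prodMk (by fun_prop))).differentiableWithinAt
  · rintro ⟨v, x, y⟩ hp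
    exact ⟨h.mem_P2 hp, (hp.1.trans hp.2.1).trans hp.2.2.1, hp.2.2.2⟩
  · rintro ⟨v, x, y⟩ hp
    exact Prod.ext (h.left_inv hp.1 (hp.2.1.trans hp.2.2.1) hp.2.2.2)
      (Prod.ext (h.left_inv (hp.1.trans hp.2.1) hp.2.2.1 hp.2.2.2) rfl)
  · filter_upwards [quasiMeasurePreserving_fst_fst_snd.ae
      ((ae_restrict_iff' measurableSet_P2).1 hQ)] with q hq hqV
    exact hq hqV.1

lemma IsIncreasingChart.ae_P2 {f g : ℝ → ℝ → ℝ} (h : IsIncreasingChart f g) {Q : ℝ → Prop}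
    (hQ : ∀ᵐ s ∂(volume.restrict (Ioo (0 : ℝ) 1)), Q s) :
    ∀ᵐ p ∂(volume.restrict P2), Q (f p.2 p.1) := by
  refine ae_restrict_comp_of_leftInvOn volume (F := fun p => (f p.2 p.1, p.2))
    (G := fun q => (g q.2 q.1, q.2)) (Q := fun q => Q q.1)
    (V := Ioo (0 : ℝ) 1 ×ˢ Ioo (0 : ℝ) 1) measurableSet_P2 ?_ ?_ ?_ ?_
  · rintro ⟨s, y⟩ ⟨hs, hy⟩
    exact ((h.differentiableAt hy hs).prodMk (by fun_prop)).differentiableWithinAt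
  · rintro ⟨x, y⟩ hp
    exact ⟨h.mem_Ioo_of_mem_P2 hp, hp.1.trans hp.2.1, hp.2.2⟩
  · rintro ⟨x, y⟩ hp
    exact Prod.ext (h.left_inv hp.1 hp.2.1 hp.2.2) rfl
  · filter_upwards [Measure.quasiMeasurePreserving_fst.ae
      ((ae_restrict_iff' measurableSet_Ioo).1 hQ)] with q hq hqV
    exact hq hqV.1

lemma ae_P2_fst {Q : ℝ → Prop} (hQ : ∀ᵐ s ∂(volume.restrict (Ioo (0 : ℝ) 1)), Q s) :
    ∀ᵐ p ∂(volume.restrict P2), Q p.1 :=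
  (Measure.quasiMeasurePreserving_fst.restrict (t := Ioo 0 1)
    fun _ hp => ⟨hp.1, hp.2.1.trans hp.2.2⟩).ae hQ

lemma ae_P2_snd {Q : ℝ → Prop} (hQ : ∀ᵐ s ∂(volume.restrict (Ioo (0 : ℝ) 1)), Q s) :
    ∀ᵐ p ∂(volume.restrict P2), Q p.2 :=
  (Measure.quasiMeasurePreserving_snd.restrict (t := Ioo 0 1)
    fun _ hp => ⟨hp.1.trans hp.2.1, hp.2.2⟩).ae hQ

lemma ae_P2_symm {Q : ℝ × ℝ → Prop} (hQ : ∀ᵐ q ∂(volume.restrict P2), Q q) :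
    ∀ᵐ p ∂(volume.restrict P2), Q (1 - p.2, (1 - p.2) / (1 - p.1)) := by
  refine ae_restrict_comp_of_leftInvOn volume (F := fun p => (1 - p.2, (1 - p.2) / (1 - p.1)))
    (G := fun p => (1 - p.1 / p.2, 1 - p.1)) measurableSet_P2 ?_ ?_ ?_
    ((ae_restrict_iff' measurableSet_P2).1 hQ)
  · intro p hp
    have : p.2 ≠ 0 := (hp.1.trans hp.2.1).ne'
    exact DifferentiableAt.differentiableWithinAt (by fun_prop (disch := assumption))
  · rintro ⟨x, y⟩ ⟨hx, hxy, hy⟩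
    simp only at hx hxy hy
    refine ⟨by simp only; linarith, ?_, (one_sub_div_mem_Ioo_of_mem_P2 ⟨hx, hxy, hy⟩).2⟩
    exact (lt_div_iff₀ (by linarith)).2 (by nlinarith)
  · rintro ⟨x, y⟩ ⟨hx, hxy, hy⟩
    simp only at hx hxy hy
    have one_sub_y : 1 - y ≠ 0 := by linarith
    ext
    · simp only [div_div_cancel₀ one_sub_y, sub_sub_cancel]
    · simp only [sub_sub_cancel]

lemma ae_sixTerm_congr {R S : ℝ × ℝ → ℝ} (h : ∀ᵐ p ∂(volume.restrict P2), R p = S p) :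
    ∀ᵐ p ∂(volume.restrict P3), sixTerm R p.1 p.2.1 p.2.2 = sixTerm S p.1 p.2.1 p.2.2 := by
  have at_vx : ∀ᵐ p ∂(volume.restrict P3), R (p.1, p.2.1) = S (p.1, p.2.1) :=
    (quasiMeasurePreserving_fst_fst_snd.restrict (t := P2)
      fun _ hp => ⟨hp.1, hp.2.1, hp.2.2.1.trans hp.2.2.2⟩).ae h
  have at_vy : ∀ᵐ p ∂(volume.restrict P3), R (p.1, p.2.2) = S (p.1, p.2.2) :=
    (quasiMeasurePreserving_fst_snd_snd.restrict (t := P2)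
      fun _ hp => ⟨hp.1, hp.2.1.trans hp.2.2.1, hp.2.2.2⟩).ae h
  have at_xy : ∀ᵐ p ∂(volume.restrict P3), R p.2 = S p.2 :=
    (Measure.quasiMeasurePreserving_snd.restrict (t := P2)
      fun _ hp => ⟨hp.1.trans hp.2.1, hp.2.2⟩).ae h
  filter_upwards [at_vx, at_vy, at_xy, isIncreasingChart_div.ae_P3 h,
    isIncreasingChart_one_sub_div.ae_P3 h, isIncreasingChart_mul_one_sub_div.ae_P3 h]
    with p h_vx h_vy h_xy h_div h_phi h_psi
  rw [sixTerm, h_vx, h_vy, h_xy, h_div, h_phi, h_psi, sixTerm]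

lemma SixTermAE.congr {R S : ℝ × ℝ → ℝ} (hR : SixTermAE R)
    (h : ∀ᵐ p ∂(volume.restrict P2), R p = S p) : SixTermAE S := by
  rw [sixTermAE_iff_sixTerm] at hR ⊢
  filter_upwards [hR, ae_sixTerm_congr h] with p hp hRS
  rw [← hRS, hp]

lemma sixTermAE_fiveTerm (L : ℝ → ℝ) : SixTermAE (fiveTerm L) :=
  sixTermAE_iff_sixTerm.2 <| (ae_restrict_mem measurableSet_P3).mono
    fun _ hp => sixTerm_fiveTerm_eq_zero L hp

lemma SixTermAE.add {R S : ℝ × ℝ → ℝ} (hR : SixTermAE R) (hS : SixTermAE S) :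
    SixTermAE fun p => R p + S p := by
  rw [sixTermAE_iff_sixTerm] at hR hS ⊢
  filter_upwards [hR, hS] with p hRp hSp
  rw [sixTerm_add, hRp, hSp, add_zero]

lemma SolvesAE.sixTermAE {R : ℝ × ℝ → ℝ} {C : ℝ} {L : ℝ → ℝ} (h : SolvesAE R C L) :
    SixTermAE R :=
  (sixTermAE_fiveTerm L).congr (solvesAE_iff_fiveTerm.1 h).1

lemma SolvesAE.symmAE {R : ℝ × ℝ → ℝ} {C : ℝ} {L : ℝ → ℝ} (h : SolvesAE R C L) :
    SymmAE R := by
  obtain ⟨five, reflect⟩ := solvesAE_iff_fiveTerm.1 h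
  unfold SymmAE
  filter_upwards [five, ae_P2_symm five, ae_P2_fst reflect, ae_P2_snd reflect,
    isIncreasingChart_div.ae_P2 reflect, isIncreasingChart_mul_one_sub_div.ae_P2 reflect,
    ae_restrict_mem measurableSet_P2] with p h_five h_symm h_fst h_snd h_div h_psi hp
  have key := fiveTerm_symm_sub_fiveTerm L (x := p.1) (y := p.2) hp
  rw [h_symm, h_five, h_fst, h_snd, h_div, h_psi] at key
  linarith

end AlmostEverywhere

section Calculus

lemma hasDerivAt_integral_of_continuousOn {f : ℝ → ℝ} {s : Set ℝ} (hs : IsOpen s)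
    [hs' : s.OrdConnected] (hf : ContinuousOn f s) {a x : ℝ} (ha : a ∈ s) (hx : x ∈ s) :
    HasDerivAt (fun u => ∫ t in a..u, f t) (f x) x :=
  intervalIntegral.integral_hasDerivAt_right
    (hf.mono (hs'.uIcc_subset ha hx)).intervalIntegrable
    (hf.stronglyMeasurableAtFilter hs x hx) (hf.continuousAt (hs.mem_nhds hx))

lemma eq_of_hasDerivAt_zero {f : ℝ → ℝ} {s : Set ℝ} (hs : IsOpen s) (hs' : IsPreconnected s)
    (hf : ∀ x ∈ s, HasDerivAt f 0 x) {x y : ℝ} (hx : x ∈ s) (hy : y ∈ s) : f x = f y :=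
  hs.is_const_of_deriv_eq_zero hs'
    (fun z hz => (hf z hz).differentiableAt.differentiableWithinAt)
    (fun z hz => (hf z hz).deriv) hx hy

lemma hasDerivAt_div_right (x y : ℝ) : HasDerivAt (fun x => x / y) (1 / y) x := by
  simpa using (hasDerivAt_id x).div_const y

lemma hasDerivAt_one_sub_div (x y : ℝ) (hx : 1 - x ≠ 0) :
    HasDerivAt (fun x => (1 - y) / (1 - x)) ((1 - y) / (1 - x) ^ 2) x :=
  ((hasDerivAt_const x (1 - y)).div ((hasDerivAt_id x).const_sub 1) hx).congr_deriv (by simp)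

lemma hasDerivAt_mul_one_sub_div (x y : ℝ) (hx : 1 - x ≠ 0) (hy : y ≠ 0) :
    HasDerivAt (fun x => x * (1 - y) / (y * (1 - x))) ((1 - y) / (y * (1 - x) ^ 2)) x :=
  (((hasDerivAt_id x).mul_const (1 - y)).div (((hasDerivAt_id x).const_sub 1).const_mul y)
    (mul_ne_zero hy hx)).congr_deriv (by simp only [id_eq]; field_simp; ring)

lemma hasDerivAt_fiveTerm_fst {L l : ℝ → ℝ} (hL : ∀ x ∈ Ioo (0 : ℝ) 1, HasDerivAt L (l x) x)
    {x y : ℝ} (hp : (x, y) ∈ P2) :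
    HasDerivAt (fun x => fiveTerm L (x, y))
      (l x - l (x / y) * (1 / y) - l ((1 - y) / (1 - x)) * ((1 - y) / (1 - x) ^ 2)
        + l (x * (1 - y) / (y * (1 - x))) * ((1 - y) / (y * (1 - x) ^ 2))) x := by
  have ⟨hx, hxy, hy⟩ : 0 < x ∧ x < y ∧ y < 1 := hp
  have one_sub_x : 1 - x ≠ 0 := by linarith
  have y_ne : y ≠ 0 := by linarith
  exact ((((hL x ⟨hx, by linarith⟩).sub_const (L y)).sub
    ((hL _ (div_mem_Ioo_of_mem_P2 hp)).comp x (hasDerivAt_div_right x y))).sub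
    ((hL _ (one_sub_div_mem_Ioo_of_mem_P2 hp)).comp x (hasDerivAt_one_sub_div x y one_sub_x))).add
    ((hL _ (mul_one_sub_div_mem_Ioo_of_mem_P2 hp)).comp x
      (hasDerivAt_mul_one_sub_div x y one_sub_x y_ne))

end Calculus

section RogersDilogarithm

/-- The derivative of (twice) the Rogers dilogarithm. -/
noncomputable def rogersDeriv (t : ℝ) : ℝ := -(Real.log (1 - t) / t + Real.log t / (1 - t))

/-- Twice the Rogers dilogarithm, normalised to vanish at `1/2`; its five-term expression is a
nonzero constant. -/
noncomputable def rogers (x : ℝ) : ℝ := ∫ t in (1 / 2 : ℝ)..x, rogersDeriv t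

lemma continuousOn_rogersDeriv : ContinuousOn rogersDeriv (Ioo 0 1) := by
  intro t ht
  have t_ne : t ≠ 0 := ht.1.ne'
  have one_sub_t : 1 - t ≠ 0 := by linarith [ht.2]
  unfold rogersDeriv
  exact ContinuousAt.continuousWithinAt (by fun_prop (disch := assumption))

lemma rogersDeriv_pos {t : ℝ} (ht : t ∈ Ioo (0 : ℝ) 1) : 0 < rogersDeriv t := by
  have one_sub_t : 0 < 1 - t := by linarith [ht.2]
  exact neg_pos.2 (add_neg
    (div_neg_of_neg_of_pos (Real.log_neg one_sub_t (by linarith [ht.1])) ht.1)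
    (div_neg_of_neg_of_pos (Real.log_neg ht.1 ht.2) one_sub_t))

lemma hasDerivAt_rogers {x : ℝ} (hx : x ∈ Ioo (0 : ℝ) 1) :
    HasDerivAt rogers (rogersDeriv x) x :=
  hasDerivAt_integral_of_continuousOn isOpen_Ioo continuousOn_rogersDeriv (by norm_num) hx

lemma strictMonoOn_rogers : StrictMonoOn rogers (Ioo 0 1) := by
  refine strictMonoOn_of_deriv_pos (convex_Ioo _ _)
    (fun x hx => (hasDerivAt_rogers hx).continuousAt.continuousWithinAt) fun x hx => ?_
  rw [interior_Ioo] at hx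
  rw [(hasDerivAt_rogers hx).deriv]
  exact rogersDeriv_pos hx

lemma rogers_half : rogers (1 / 2) = 0 := intervalIntegral.integral_same

lemma rogers_one_sub {x : ℝ} (hx : x ∈ Ioo (0 : ℝ) 1) : rogers (1 - x) = -rogers x := by
  have hasDerivAt_sum : ∀ z ∈ Ioo (0 : ℝ) 1,
      HasDerivAt (fun x => rogers (1 - x) + rogers x) 0 z := by
    intro z hz
    have hz' : 1 - z ∈ Ioo (0 : ℝ) 1 := ⟨by linarith [hz.2], by linarith [hz.1]⟩
    refine (((hasDerivAt_rogers hz').comp z ((hasDerivAt_id z).const_sub 1)).add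
      (hasDerivAt_rogers hz)).congr_deriv ?_
    rw [rogersDeriv, rogersDeriv, sub_sub_cancel]
    ring
  have sum_eq := eq_of_hasDerivAt_zero isOpen_Ioo isPreconnected_Ioo hasDerivAt_sum hx
    (show (1 / 2 : ℝ) ∈ Ioo (0 : ℝ) 1 by norm_num)
  norm_num [rogers_half] at sum_eq
  linarith

lemma hasDerivAt_fiveTerm_rogers_fst {x y : ℝ} (hp : (x, y) ∈ P2) :
    HasDerivAt (fun x => fiveTerm rogers (x, y)) 0 x := by
  refine (hasDerivAt_fiveTerm_fst (fun x hx => hasDerivAt_rogers hx) hp).congr_deriv ?_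
  obtain ⟨hx, hxy, hy⟩ : 0 < x ∧ x < y ∧ y < 1 := hp
  have x_ne : x ≠ 0 := by linarith
  have y_ne : y ≠ 0 := by linarith
  have one_sub_x : 1 - x ≠ 0 := by linarith
  have one_sub_y : 1 - y ≠ 0 := by linarith
  have y_sub_x : y - x ≠ 0 := by linarith
  unfold rogersDeriv
  rw [one_sub_div y_ne, one_sub_one_sub_div_one_sub one_sub_x,
    one_sub_mul_one_sub_div one_sub_x y_ne, Real.log_div y_sub_x y_ne,
    Real.log_div y_sub_x one_sub_x, Real.log_div y_sub_x (mul_ne_zero y_ne one_sub_x),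
    Real.log_div x_ne y_ne, Real.log_div one_sub_y one_sub_x,
    Real.log_div (mul_ne_zero x_ne one_sub_y) (mul_ne_zero y_ne one_sub_x),
    Real.log_mul y_ne one_sub_x, Real.log_mul x_ne one_sub_y]
  field_simp
  ring

lemma fiveTerm_rogers_congr_fst {x x' y : ℝ} (hp : (x, y) ∈ P2) (hp' : (x', y) ∈ P2) :
    fiveTerm rogers (x, y) = fiveTerm rogers (x', y) :=
  eq_of_hasDerivAt_zero (f := fun x => fiveTerm rogers (x, y)) isOpen_Ioo isPreconnected_Ioo
    (fun _ hz => hasDerivAt_fiveTerm_rogers_fst ⟨hz.1, hz.2, hp.2.2⟩)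
    ⟨hp.1, hp.2.1⟩ ⟨hp'.1, hp'.2.1⟩

lemma fiveTerm_rogers_symm {x y : ℝ} (hp : (x, y) ∈ P2) :
    fiveTerm rogers (1 - y, (1 - y) / (1 - x)) = fiveTerm rogers (x, y) := by
  have key := fiveTerm_symm_sub_fiveTerm rogers hp
  rw [rogers_one_sub ⟨hp.1.trans hp.2.1, hp.2.2⟩, rogers_one_sub ⟨hp.1, hp.2.1.trans hp.2.2⟩,
    rogers_one_sub (mul_one_sub_div_mem_Ioo_of_mem_P2 hp),
    rogers_one_sub (div_mem_Ioo_of_mem_P2 hp)] at key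
  linarith

-- The symmetry moves `y` to any prescribed `z ∈ (1 - y, 1)`, and the value ignores `x`.
lemma fiveTerm_rogers_eq_of_one_sub_lt {p q : ℝ × ℝ} (hp : p ∈ P2) (hq : q ∈ P2)
    (h : 1 - p.2 < q.2) : fiveTerm rogers p = fiveTerm rogers q := by
  obtain ⟨x, y⟩ := p
  obtain ⟨w, z⟩ := q
  obtain ⟨hx, hxy, hy⟩ : 0 < x ∧ x < y ∧ y < 1 := hp
  obtain ⟨hw, hwz, hz⟩ : 0 < w ∧ w < z ∧ z < 1 := hq
  simp only at h
  have z_pos : 0 < z := by linarith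
  have hx' : (1 - (1 - y) / z, y) ∈ P2 := by
    refine ⟨?_, ?_, hy⟩ <;> simp only
    · linarith [(div_lt_one z_pos).2 h]
    · linarith [(lt_div_iff₀ z_pos).2 (show (1 - y) * z < 1 - y by nlinarith)]
  rw [fiveTerm_rogers_congr_fst ⟨hx, hxy, hy⟩ hx', ← fiveTerm_rogers_symm hx', sub_sub_cancel,
    div_div_cancel₀ (by linarith),
    fiveTerm_rogers_congr_fst (x' := w) ⟨by linarith, h, hz⟩ ⟨hw, hwz, hz⟩]

lemma fiveTerm_rogers_eq {p q : ℝ × ℝ} (hp : p ∈ P2) (hq : q ∈ P2) :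
    fiveTerm rogers p = fiveTerm rogers q := by
  obtain ⟨z, hz, hz_one⟩ := exists_between
    (max_lt (sub_lt_self 1 (hp.1.trans hp.2.1)) (sub_lt_self 1 (hq.1.trans hq.2.1)))
  obtain ⟨hpz, hqz⟩ := max_lt_iff.1 hz
  have hz_pos : 0 < z := by linarith [hp.2.2]
  have mid : (z / 2, z) ∈ P2 := ⟨by simp only; linarith, by simp only; linarith, hz_one⟩
  rw [fiveTerm_rogers_eq_of_one_sub_lt hp mid hpz, fiveTerm_rogers_eq_of_one_sub_lt hq mid hqz]

lemma exists_fiveTerm_eq_zero_and_add_one_sub_eq : ∃ (M : ℝ → ℝ) (r : ℝ), r ≠ 0 ∧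
    ContinuousOn M (Ioo 0 1) ∧ (∀ p ∈ P2, fiveTerm M p = 0) ∧
      ∀ x ∈ Ioo (0 : ℝ) 1, M x + M (1 - x) = r := by
  obtain ⟨r, hr⟩ : ∃ r, r = fiveTerm rogers (1 / 4, 1 / 2) := ⟨_, rfl⟩
  have base : ((1 / 4 : ℝ), (1 / 2 : ℝ)) ∈ P2 := by refine ⟨?_, ?_, ?_⟩ <;> norm_num
  have r_neg : r < 0 := by
    have div_gt : rogers (1 / 4) < rogers ((1 / 4) / (1 / 2)) :=
      strictMonoOn_rogers (by norm_num) (by norm_num) (by norm_num)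
    have psi_lt_phi : rogers ((1 / 4) * (1 - 1 / 2) / ((1 / 2) * (1 - 1 / 4))) <
        rogers ((1 - 1 / 2) / (1 - 1 / 4)) :=
      strictMonoOn_rogers (by norm_num) (by norm_num) (by norm_num)
    simp only [hr, fiveTerm]
    linarith [rogers_half]
  refine ⟨fun x => rogers x + r, 2 * r, by linarith, ?_, fun p hp => ?_, fun x hx => ?_⟩
  · exact fun x hx =>
      ((hasDerivAt_rogers hx).continuousAt.add continuousAt_const).continuousWithinAt
  · rw [fiveTerm_add, fiveTerm_const, fiveTerm_rogers_eq hp base, ← hr, add_neg_cancel]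
  · simp only [rogers_one_sub hx]
    ring

end RogersDilogarithm

section ReflectionConstant

lemma ae_eq_const_of_ae_P2_eq {N : ℝ → ℝ} (h : ∀ᵐ p ∂(volume.restrict P2), N p.1 = N p.2) :
    ∃ c, ∀ᵐ x ∂(volume.restrict (Ioo (0 : ℝ) 1)), N x = c := by
  have fibre : ∀ᵐ x : ℝ, ∀ᵐ y : ℝ, (x, y) ∈ P2 → N x = N y :=
    Measure.ae_ae_of_ae_prod ((ae_restrict_iff' measurableSet_P2).1 h)
  obtain ⟨x₀, h₀, hx₀⟩ := (Measure.dense_of_ae fibre).exists_between (zero_lt_one' ℝ)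
  refine ⟨N x₀, (ae_restrict_iff' measurableSet_Ioo).2 ?_⟩
  filter_upwards [fibre] with x hx hxI
  obtain ⟨y, ⟨hy₀, hy⟩, hyI⟩ := (Measure.dense_of_ae (Filter.Eventually.and h₀ hx)).exists_between
    (max_lt hx₀.2 hxI.2)
  obtain ⟨hx₀y, hxy⟩ := max_lt_iff.1 hyI.1
  rw [hy ⟨hxI.1, hxy, hyI.2⟩, hy₀ ⟨hx₀.1, hx₀y, hyI.2⟩]

-- With `n₀, …, n₄` the values of `N` at `(1 - y) / (1 - x)`, `x * (1 - y) / (y * (1 - x))`,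
-- `x / y`, `x`, `y`, the symmetry shifts indices cyclically and the hypothesis reads
-- `n₄ + n₂ = n₃ + n₁`; two shifts give `n₃ + n₁ = n₄ + n₁`.
lemma ae_P2_eq_of_symm {N : ℝ → ℝ} (hN : ∀ x, N (1 - x) = N x)
    (h : ∀ᵐ p ∂(volume.restrict P2),
      N p.2 + N (p.1 / p.2) = N p.1 + N (p.1 * (1 - p.2) / (p.2 * (1 - p.1)))) :
    ∀ᵐ p ∂(volume.restrict P2), N p.1 = N p.2 := by
  have shift_one : ∀ᵐ p ∂(volume.restrict P2),
      N ((1 - p.2) / (1 - p.1)) + N p.1 = N p.2 + N (p.1 / p.2) := by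
    filter_upwards [ae_P2_symm h, ae_restrict_mem measurableSet_P2] with p hp hpP
    obtain ⟨hx, hxy, hy⟩ := hpP
    rwa [symm_fst_div_snd (by linarith), symm_mul_one_sub_div (by linarith) (by linarith)
      (by linarith), hN, hN, hN] at hp
  have shift_two : ∀ᵐ p ∂(volume.restrict P2),
      N (p.1 * (1 - p.2) / (p.2 * (1 - p.1))) + N p.2 = N ((1 - p.2) / (1 - p.1)) + N p.1 := by
    filter_upwards [ae_P2_symm shift_one, ae_restrict_mem measurableSet_P2] with p hp hpP
    obtain ⟨hx, hxy, hy⟩ := hpP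
    rwa [symm_fst_div_snd (by linarith), symm_one_sub_div (by linarith) (by linarith), hN, hN,
      hN] at hp
  filter_upwards [h, shift_one, shift_two] with p h₀ h₁ h₂
  linarith

lemma ae_add_one_sub_eq_const {R : ℝ × ℝ → ℝ} {L : ℝ → ℝ} (hR : SymmAE R)
    (hL : ∀ᵐ p ∂(volume.restrict P2), fiveTerm L p = R p) :
    ∃ c, ∀ᵐ x ∂(volume.restrict (Ioo (0 : ℝ) 1)), L x + L (1 - x) = c := by
  refine ae_eq_const_of_ae_P2_eq (N := fun x => L x + L (1 - x))
    (ae_P2_eq_of_symm (N := fun x => L x + L (1 - x))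
      (fun x => by simp only [sub_sub_cancel, add_comm]) ?_)
  filter_upwards [hL, ae_P2_symm hL, hR, ae_restrict_mem measurableSet_P2]
    with p h_five h_symm hRp hp
  have key := fiveTerm_symm_sub_fiveTerm L (x := p.1) (y := p.2) hp
  rw [h_symm, h_five, hRp] at key
  linarith

lemma exists_solvesAE_of_exists_fiveTerm_ae_eq {R : ℝ × ℝ → ℝ} (C : ℝ) (hR : SymmAE R)
    (hL : ∃ L : ℝ → ℝ, AEMeasurable L (volume.restrict (Ioo (0 : ℝ) 1)) ∧
      ∀ᵐ p ∂(volume.restrict P2), fiveTerm L p = R p) :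
    ∃ L : ℝ → ℝ, AEMeasurable L (volume.restrict (Ioo (0 : ℝ) 1)) ∧ SolvesAE R C L := by
  obtain ⟨L, L_meas, hL⟩ := hL
  obtain ⟨c, hc⟩ := ae_add_one_sub_eq_const hR hL
  obtain ⟨M, r, hr, M_cont, M_five, M_refl⟩ := exists_fiveTerm_eq_zero_and_add_one_sub_eq
  refine ⟨fun x => L x + (C - c) / r * M x,
    L_meas.add ((M_cont.aemeasurable measurableSet_Ioo).const_mul _),
    solvesAE_iff_fiveTerm.2 ⟨?_, ?_⟩⟩
  · filter_upwards [hL, ae_restrict_mem measurableSet_P2] with p h_five hp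
    rw [fiveTerm_add_const_mul, M_five p hp, h_five, mul_zero, add_zero]
  · filter_upwards [hc, ae_restrict_mem measurableSet_Ioo] with x hLx hx
    rw [eq_sub_of_add_eq' (M_refl x hx), eq_sub_of_add_eq' hLx]
    field_simp
    ring

end ReflectionConstant

section AdditiveCocycles

/-- The additive `2`-cocycle identity for a function on `(0, ∞) × (0, ∞)`. -/
def IsPosCocycle (w : ℝ → ℝ → ℝ) : Prop :=
  ∀ ⦃a b c⦄, 0 < a → 0 < b → 0 < c → w b c + w a (b + c) = w (a + b) c + w a b

lemma continuousOn_intervalIntegral_of_continuousOn {X : Type*} [TopologicalSpace X]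
    {f : X → ℝ → ℝ} {s : Set X} {a b : ℝ} (hab : a ≤ b)
    (hf : ContinuousOn (fun p : X × ℝ => f p.1 p.2) (s ×ˢ Icc a b)) :
    ContinuousOn (fun x => ∫ u in a..b, f x u) s := by
  rw [continuousOn_iff_continuous_domRestrict]
  have cont : Continuous fun p : s × ℝ => f p.1 (projIcc a b hab p.2) :=
    hf.comp_continuous (f := fun p : s × ℝ => ((p.1 : X), (projIcc a b hab p.2 : ℝ)))
      (by fun_prop) fun p => ⟨p.1.2, (projIcc a b hab p.2).2⟩
  refine (intervalIntegral.continuous_parametric_intervalIntegral_of_continuous'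
    (μ := volume)
    (f := fun (x : s) u => f x (projIcc a b hab u)) cont a b).congr fun x => ?_
  refine intervalIntegral.integral_congr fun u hu => ?_
  rw [uIcc_of_le hab] at hu
  simp only [projIcc_of_mem hab hu]

variable {w : ℝ → ℝ → ℝ}

lemma continuousOn_slice (hw : ContinuousOn (fun p : ℝ × ℝ => w p.1 p.2) (Ioi 0 ×ˢ Ioi 0))
    {a : ℝ} (ha : 0 < a) : ContinuousOn (w a) (Ioi 0) :=
  hw.comp (f := fun u => (a, u)) (by fun_prop) fun _ hu => ⟨ha, hu⟩

lemma intervalIntegrable_slice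
    (hw : ContinuousOn (fun p : ℝ × ℝ => w p.1 p.2) (Ioi 0 ×ˢ Ioi 0)) {a p q : ℝ} (ha : 0 < a)
    (hp : 0 < p) (hq : 0 < q) : IntervalIntegrable (w a) volume p q :=
  ((continuousOn_slice hw ha).mono (ordConnected_Ioi.uIcc_subset hp hq)).intervalIntegrable

lemma IsPosCocycle.eq_sub_add_integral (hc : IsPosCocycle w)
    (hw : ContinuousOn (fun p : ℝ × ℝ => w p.1 p.2) (Ioi 0 ×ˢ Ioi 0)) {a b : ℝ} (ha : 0 < a)
    (hb : 0 < b) :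
    w a b = (∫ u in (1 : ℝ)..2, w b u) - (∫ u in (1 : ℝ)..2, w (a + b) u)
      + ∫ u in (b + 1)..(b + 2), w a u := by
  have shifted : IntervalIntegrable (fun c => w a (b + c)) volume 1 2 := by
    simpa only [add_sub_cancel_left] using
      (intervalIntegrable_slice hw ha (add_pos hb one_pos) (add_pos hb two_pos)).comp_add_left b
  have integrated : ∫ _ in (1 : ℝ)..2, w a b =
      ∫ c in (1 : ℝ)..2, (w b c - w (a + b) c + w a (b + c)) := by
    refine intervalIntegral.integral_congr fun c hcc => ?_
    rw [uIcc_of_le one_le_two] at hcc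
    linarith [hc ha hb (zero_lt_one.trans_le hcc.1)]
  have int_b := intervalIntegrable_slice hw hb one_pos two_pos
  have int_add := intervalIntegrable_slice hw (add_pos ha hb) one_pos two_pos
  rw [intervalIntegral.integral_add (int_b.sub int_add) shifted,
    intervalIntegral.integral_sub int_b int_add,
    intervalIntegral.integral_comp_add_left (w a) b, intervalIntegral.integral_const] at integrated
  norm_num at integrated
  exact integrated

lemma IsPosCocycle.hasDerivAt_integral_window (hc : IsPosCocycle w)
    (hw : ContinuousOn (fun p : ℝ × ℝ => w p.1 p.2) (Ioi 0 ×ˢ Ioi 0)) {a b : ℝ} (ha : 0 < a)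
    (hb : 0 < b) :
    HasDerivAt (fun b => ∫ u in (b + 1)..(b + 2), w a u)
      ((w (a + b) 2 - w (a + b) 1) - (w b 2 - w b 1)) b := by
  have primitive : ∀ c, 0 < c →
      HasDerivAt (fun b => ∫ u in (1 : ℝ)..(b + c), w a u) (w a (b + c)) b := fun c hc =>
    (hasDerivAt_integral_of_continuousOn isOpen_Ioi (continuousOn_slice hw ha)
      (mem_Ioi.2 one_pos) (add_pos hb hc)).comp_add_const b c
  refine (((primitive 2 two_pos).sub (primitive 1 one_pos)).congr_of_eventuallyEq ?_).congr_deriv ?_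
  · filter_upwards [isOpen_Ioi.mem_nhds hb] with z hz
    exact (intervalIntegral.integral_interval_sub_left
      (intervalIntegrable_slice hw ha one_pos (add_pos hz two_pos))
      (intervalIntegrable_slice hw ha one_pos (add_pos hz one_pos))).symm
  · linarith [hc ha hb one_pos, hc ha hb two_pos]

lemma IsPosCocycle.exists_eq_sub_add (hc : IsPosCocycle w)
    (hw : ContinuousOn (fun p : ℝ × ℝ => w p.1 p.2) (Ioi 0 ×ˢ Ioi 0)) :
    ∃ n h : ℝ → ℝ, ContinuousOn n (Ioi 0) ∧
      ∀ a b, 0 < a → 0 < b → w a b = n b - n (a + b) + h a := by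
  set J : ℝ → ℝ := fun s => ∫ u in (1 : ℝ)..2, w s u
  set K : ℝ → ℝ := fun t => ∫ s in (1 : ℝ)..t, (w s 2 - w s 1)
  have J_cont : ContinuousOn J (Ioi 0) := continuousOn_intervalIntegral_of_continuousOn one_le_two
    (hw.mono (prod_mono_right fun u hu => zero_lt_one.trans_le hu.1))
  have slice : ∀ c, 0 < c → ContinuousOn (fun s => w s c) (Ioi 0) := fun c hc =>
    hw.comp (f := fun s => (s, c)) (by fun_prop) fun _ hs => ⟨hs, hc⟩
  have K_deriv : ∀ t, 0 < t → HasDerivAt K (w t 2 - w t 1) t := fun t ht =>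
    hasDerivAt_integral_of_continuousOn isOpen_Ioi ((slice 2 two_pos).sub (slice 1 one_pos))
      (mem_Ioi.2 one_pos) ht
  refine ⟨fun t => J t - K t, fun a => (∫ u in (1 + 1 : ℝ)..(1 + 2), w a u) - K (a + 1) + K 1,
    J_cont.sub fun t ht => (K_deriv t ht).continuousAt.continuousWithinAt, fun a b ha hb => ?_⟩
  have deriv_zero : ∀ z ∈ Ioi (0 : ℝ),
      HasDerivAt (fun b => (∫ u in (b + 1)..(b + 2), w a u) - K (a + b) + K b) 0 z := by
    intro z hz
    have K_shift : HasDerivAt (fun b => K (a + b)) (w (a + z) 2 - w (a + z) 1) z :=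
      (K_deriv (a + z) (add_pos ha hz)).comp_const_add a z
    exact (((hc.hasDerivAt_integral_window hw ha hz).sub K_shift).add
      (K_deriv z hz)).congr_deriv (by ring)
  have window := eq_of_hasDerivAt_zero isOpen_Ioi isPreconnected_Ioi deriv_zero
    (mem_Ioi.2 hb) (mem_Ioi.2 one_pos)
  have := hc.eq_sub_add_integral hw ha hb
  simp only at window ⊢
  linarith

lemma IsPosCocycle.exists_eq_coboundary (hc : IsPosCocycle w)
    (hw : ContinuousOn (fun p : ℝ × ℝ => w p.1 p.2) (Ioi 0 ×ˢ Ioi 0)) :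
    ∃ n : ℝ → ℝ, ContinuousOn n (Ioi 0) ∧ ∀ a b, 0 < a → 0 < b → w a b = n a + n b - n (a + b) := by
  obtain ⟨n, h, n_cont, hn⟩ := hc.exists_eq_sub_add hw
  have shift : ∀ a b, 0 < a → 0 < b → h b - n b = h (a + b) - n (a + b) := by
    intro a b ha hb
    have cocycle := hc ha hb one_pos
    rw [hn b 1 hb one_pos, hn (a + b) 1 (add_pos ha hb) one_pos,
      hn a (b + 1) ha (add_pos hb one_pos), hn a b ha hb, ← add_assoc a b 1] at cocycle
    linarith
  have const : ∀ a, 0 < a → h a - n a = h 1 - n 1 := fun a ha => by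
    rw [shift 1 a one_pos ha, shift a 1 ha one_pos, add_comm]
  refine ⟨fun t => n t + (h 1 - n 1), n_cont.add continuousOn_const, fun a b ha hb => ?_⟩
  linarith [hn a b ha hb, const a ha]

end AdditiveCocycles

section SeparatedVariables

lemma eq_of_fiveTerm_symmetric {G : ℝ → ℝ}
    (h : ∀ x y, (x, y) ∈ P2 → G x + G (x * (1 - y) / (y * (1 - x))) =
      G (x / y) + G ((1 - y) / (1 - x)))
    {a b : ℝ} (ha : a ∈ Ioo (0 : ℝ) 1) (hb : b ∈ Ioo (0 : ℝ) 1) : G a = G b := by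
  have eq_of_add_lt_one : ∀ A B, 0 < A → 0 < B → A + B < 1 → G A = G B := by
    intro A B hA hB hAB
    have hAB' := h A (1 - B) ⟨hA, by simp only; linarith, by simp only; linarith⟩
    have hBA := h B (1 - A) ⟨hB, by simp only; linarith, by simp only; linarith⟩
    simp only [sub_sub_cancel] at hAB' hBA
    rw [mul_comm B, mul_comm (1 - A)] at hBA
    linarith
  obtain ⟨c, hc, hc'⟩ := exists_between
    (lt_min (sub_pos.2 ha.2) (sub_pos.2 hb.2) : 0 < min (1 - a) (1 - b))
  obtain ⟨hca, hcb⟩ := lt_min_iff.1 hc'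
  rw [eq_of_add_lt_one a c ha.1 hc (by linarith), eq_of_add_lt_one b c hb.1 hc (by linarith)]

lemma exists_eq_add_of_rectangle {R : ℝ × ℝ → ℝ} (hRc : ContinuousOn R P2)
    (hs : ∀ v v' y y', (v, y) ∈ P2 → (v', y) ∈ P2 → (v, y') ∈ P2 → (v', y') ∈ P2 →
      R (v, y) - R (v', y) = R (v, y') - R (v', y')) :
    ∃ f g : ℝ → ℝ, ContinuousOn f (Ioo 0 1) ∧ ∀ v y, (v, y) ∈ P2 → R (v, y) = f v + g y := by
  set top : ℝ → ℝ := fun v => (max v (1 / 2) + 1) / 2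
  have lt_top : ∀ v < 1, v < top v ∧ 1 / 2 < top v ∧ top v < 1 := fun v hv => by
    have : max v (1 / 2) < 1 := max_lt hv one_half_lt_one
    refine ⟨?_, ?_, ?_⟩ <;> simp only [top] <;>
      linarith [le_max_left v (1 / 2), le_max_right v (1 / 2)]
  set f : ℝ → ℝ := fun v => R (v, top v) - R (1 / 2, top v)
  have mem_top : ∀ v ∈ Ioo (0 : ℝ) 1, (v, top v) ∈ P2 ∧ (1 / 2, top v) ∈ P2 := fun v hv =>
    have ⟨h_lt, h_half, h_one⟩ := lt_top v hv.2
    ⟨⟨hv.1, h_lt, h_one⟩, one_half_pos, h_half, h_one⟩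
  have f_cont : ContinuousOn f (Ioo 0 1) :=
    (hRc.comp (f := fun v => (v, top v)) (by fun_prop) fun v hv => (mem_top v hv).1).sub
      (hRc.comp (f := fun v => (1 / 2, top v)) (by fun_prop) fun v hv => (mem_top v hv).2)
  have sub_half : ∀ v y, (v, y) ∈ P2 → 1 / 2 < y → R (v, y) - R (1 / 2, y) = f v := by
    intro v y hv hy
    have hv' := mem_top v ⟨hv.1, hv.2.1.trans hv.2.2⟩
    exact hs _ _ _ _ hv ⟨one_half_pos, hy, hv.2.2⟩ hv'.1 hv'.2
  have sub_eq : ∀ v v' y, (v, y) ∈ P2 → (v', y) ∈ P2 → R (v, y) - R (v', y) = f v - f v' := by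
    intro v v' y hv hv'
    obtain ⟨h_lt, h_half, h_one⟩ := lt_top y hv.2.2
    have hv_top : (v, top y) ∈ P2 := ⟨hv.1, hv.2.1.trans h_lt, h_one⟩
    have hv_top' : (v', top y) ∈ P2 := ⟨hv'.1, hv'.2.1.trans h_lt, h_one⟩
    rw [hs _ _ _ _ hv hv' hv_top hv_top', ← sub_half v _ hv_top h_half,
      ← sub_half v' _ hv_top' h_half, sub_sub_sub_cancel_right]
  refine ⟨f, fun y => R (y / 2, y) - f (y / 2), f_cont, fun v y hv => ?_⟩
  have hy : 0 < y := hv.1.trans hv.2.1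
  linarith [sub_eq v (y / 2) y hv ⟨half_pos hy, half_lt_self hy, hv.2.2⟩]

lemma exists_sub_fiveTerm_eq_snd {R : ℝ × ℝ → ℝ} {f g : ℝ → ℝ}
    (hR : ∀ v y, (v, y) ∈ P2 → R (v, y) = f v + g y)
    (h6 : ∀ v x y, (v, x, y) ∈ P3 → sixTerm R v x y = 0) :
    ∃ G : ℝ → ℝ, ∀ x y, (x, y) ∈ P2 → R (x, y) - fiveTerm f (x, y) = G y := by
  set κ : ℝ → ℝ → ℝ := fun v y =>
    f (v / y) + f ((1 - y) / (1 - v)) - f (v * (1 - y) / (y * (1 - v)))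
  have κ_eq : ∀ v x y, (v, x, y) ∈ P3 → κ v y = g x + f x - g (x / y) - g ((1 - y) / (1 - x))
      + g (x * (1 - y) / (y * (1 - x))) := by
    intro v x y hp
    have ⟨hv, hvx, hxy, hy⟩ : 0 < v ∧ v < x ∧ x < y ∧ y < 1 := hp
    have six := h6 v x y hp
    rw [sixTerm, hR _ _ (isIncreasingChart_div.mem_P2 hp),
      hR _ _ (isIncreasingChart_one_sub_div.mem_P2 hp),
      hR _ _ (isIncreasingChart_mul_one_sub_div.mem_P2 hp), hR v x ⟨hv, hvx, hxy.trans hy⟩,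
      hR v y ⟨hv, hvx.trans hxy, hy⟩, hR x y ⟨hv.trans hvx, hxy, hy⟩] at six
    simp only [κ]
    linarith
  have κ_fst : ∀ v y, (v, y) ∈ P2 → κ v y = κ (y / 2) y := by
    intro v y hv
    have hy : 0 < y := hv.1.trans hv.2.1
    obtain ⟨x, hx, hxy⟩ := exists_between (max_lt hv.2.1 (half_lt_self hy))
    obtain ⟨hvx, hyx⟩ := max_lt_iff.1 hx
    rw [κ_eq v x y ⟨hv.1, hvx, hxy, hv.2.2⟩, κ_eq (y / 2) x y ⟨half_pos hy, hyx, hxy, hv.2.2⟩]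
  refine ⟨fun y => g y + f y + κ (y / 2) y, fun x y hp => ?_⟩
  simp only [hR x y hp, ← κ_fst x y hp, fiveTerm, κ]
  ring

lemma exists_fiveTerm_eq_of_rectangle {R : ℝ × ℝ → ℝ} (hRc : ContinuousOn R P2)
    (h6 : ∀ v x y, (v, x, y) ∈ P3 → sixTerm R v x y = 0)
    (hs : ∀ v v' y y', (v, y) ∈ P2 → (v', y) ∈ P2 → (v, y') ∈ P2 → (v', y') ∈ P2 →
      R (v, y) - R (v', y) = R (v, y') - R (v', y')) :
    ∃ L : ℝ → ℝ, ContinuousOn L (Ioo 0 1) ∧ ∀ p ∈ P2, fiveTerm L p = R p := by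
  obtain ⟨f, g, f_cont, hfg⟩ := exists_eq_add_of_rectangle hRc hs
  obtain ⟨G, hG⟩ := exists_sub_fiveTerm_eq_snd hfg h6
  have G_symm : ∀ x y, (x, y) ∈ P2 → G x + G (x * (1 - y) / (y * (1 - x))) =
      G (x / y) + G ((1 - y) / (1 - x)) := by
    intro x y hp
    have hP3 : (x / 2, x, y) ∈ P3 := ⟨half_pos hp.1, half_lt_self hp.1, hp.2.1, hp.2.2⟩
    have ⟨hv, hvx, hxy, hy⟩ : 0 < x / 2 ∧ x / 2 < x ∧ x < y ∧ y < 1 := hP3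
    have six : sixTerm (fun p => R p - fiveTerm f p) (x / 2) x y = 0 := by
      rw [sixTerm_sub, h6 _ _ _ hP3, sixTerm_fiveTerm_eq_zero _ hP3, sub_zero]
    simp only [sixTerm] at six
    rw [hG _ _ (isIncreasingChart_div.mem_P2 hP3),
      hG _ _ (isIncreasingChart_one_sub_div.mem_P2 hP3),
      hG _ _ (isIncreasingChart_mul_one_sub_div.mem_P2 hP3), hG _ x ⟨hv, hvx, hxy.trans hy⟩,
      hG _ y ⟨hv, hvx.trans hxy, hy⟩, hG x y hp] at six
    linarith
  refine ⟨fun x => f x + -G (1 / 2), f_cont.add continuousOn_const, ?_⟩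
  rintro ⟨x, y⟩ hp
  rw [fiveTerm_add, fiveTerm_const, neg_neg, ← eq_of_fiveTerm_symmetric G_symm
    ⟨hp.1.trans hp.2.1, hp.2.2⟩ ⟨one_half_pos, one_half_lt_one⟩, ← hG x y hp]
  ring

end SeparatedVariables

section MultiplicativeCocycles

/-- The inverse of the coordinates `(v, x) ↦ ((1 - x) / (1 - v), v / x)` on `P2`. -/
noncomputable def ofRatios (s t : ℝ) : ℝ × ℝ := (t * (1 - s) / (1 - s * t), (1 - s) / (1 - s * t))

lemma mul_lt_one_of_mem_Ioo {s t : ℝ} (hs : s ∈ Ioo (0 : ℝ) 1) (ht : t ∈ Ioo (0 : ℝ) 1) :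
    s * t < 1 :=
  mul_lt_one_of_nonneg_of_lt_one_left hs.1.le hs.2 ht.2.le

lemma ofRatios_mem_P2 {s t : ℝ} (hs : s ∈ Ioo (0 : ℝ) 1) (ht : t ∈ Ioo (0 : ℝ) 1) :
    ofRatios s t ∈ P2 := by
  have pos_s : 0 < 1 - s := sub_pos.2 hs.2
  have pos_st : 0 < 1 - s * t := sub_pos.2 (mul_lt_one_of_mem_Ioo hs ht)
  refine ⟨div_pos (mul_pos ht.1 pos_s) pos_st, ?_, ?_⟩
  · exact div_lt_div_of_pos_right (mul_lt_of_lt_one_left pos_s ht.2) pos_st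
  · exact (div_lt_one pos_st).2 (by linarith [mul_lt_of_lt_one_right hs.1 ht.2])

lemma ofRatios_eq {v x : ℝ} (hp : (v, x) ∈ P2) : ofRatios ((1 - x) / (1 - v)) (v / x) = (v, x) := by
  obtain ⟨hv, hvx, hx⟩ : 0 < v ∧ v < x ∧ x < 1 := hp
  have one_sub_v : 1 - v ≠ 0 := by linarith
  have x_sub_v : x - v ≠ 0 := by linarith
  have x_ne : x ≠ 0 := by linarith
  have one_sub_mul : 1 - (1 - x) / (1 - v) * (v / x) = (x - v) / (x * (1 - v)) := by
    field_simp; ring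
  rw [ofRatios, one_sub_mul, one_sub_one_sub_div_one_sub one_sub_v]
  ext <;> field_simp

lemma continuousOn_ofRatios :
    ContinuousOn (fun q : ℝ × ℝ => ofRatios q.1 q.2) (Ioo 0 1 ×ˢ Ioo 0 1) := by
  rintro ⟨s, t⟩ ⟨hs, ht⟩
  have : 1 - s * t ≠ 0 := (sub_pos.2 (mul_lt_one_of_mem_Ioo hs ht)).ne'
  unfold ofRatios
  exact ContinuousAt.continuousWithinAt (by fun_prop (disch := assumption))

lemma ratios_ofRatios {s t : ℝ} (hs : s ∈ Ioo (0 : ℝ) 1) (ht : t ∈ Ioo (0 : ℝ) 1) :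
    (1 - (ofRatios s t).2) / (1 - (ofRatios s t).1) = s ∧
      (ofRatios s t).1 / (ofRatios s t).2 = t := by
  have st_ne : 1 - s * t ≠ 0 := (sub_pos.2 (mul_lt_one_of_mem_Ioo hs ht)).ne'
  have t_ne : 1 - t ≠ 0 := (sub_pos.2 ht.2).ne'
  have s_ne : 1 - s ≠ 0 := (sub_pos.2 hs.2).ne'
  have snd_eq : 1 - (1 - s) / (1 - s * t) = s * (1 - t) / (1 - s * t) := by
    rw [one_sub_div st_ne]; ring
  have fst_eq : 1 - t * (1 - s) / (1 - s * t) = (1 - t) / (1 - s * t) := by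
    rw [one_sub_div st_ne]; ring
  simp only [ofRatios, snd_eq, fst_eq, div_div_div_cancel_right₀ st_ne]
  exact ⟨mul_div_cancel_right₀ s t_ne, mul_div_cancel_right₀ t s_ne⟩

lemma exists_mem_P3_of_ratios {a b c : ℝ} (ha : a ∈ Ioo (0 : ℝ) 1) (hb : b ∈ Ioo (0 : ℝ) 1)
    (hc : c ∈ Ioo (0 : ℝ) 1) :
    ∃ v x y, (v, x, y) ∈ P3 ∧ b = (1 - x) / (1 - v) ∧ c = v / x ∧
      a = (y - x) * (1 - v) / ((1 - x) * (y - v)) := by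
  obtain ⟨v, x, hp, rfl, rfl⟩ : ∃ v x, (v, x) ∈ P2 ∧ (1 - x) / (1 - v) = b ∧ v / x = c :=
    ⟨_, _, ofRatios_mem_P2 hb hc, ratios_ofRatios hb hc⟩
  set b := (1 - x) / (1 - v)
  obtain ⟨hv, hvx, hx⟩ : 0 < v ∧ v < x ∧ x < 1 := hp
  have one_sub_v : 0 < 1 - v := by linarith
  have one_sub_x : 1 - x = b * (1 - v) := (div_mul_cancel₀ _ one_sub_v.ne').symm
  have x_sub_v : 0 < x - v := sub_pos.2 hvx
  have pos_ab : 0 < 1 - a * b := sub_pos.2 (mul_lt_one_of_mem_Ioo ha hb)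
  have y_sub_x : (x - a * b * v) / (1 - a * b) - x = a * b * (x - v) / (1 - a * b) := by
    rw [div_sub' pos_ab.ne']; ring
  have y_sub_v : (x - a * b * v) / (1 - a * b) - v = (x - v) / (1 - a * b) := by
    rw [div_sub' pos_ab.ne']; ring
  have one_sub_y : 1 - (x - a * b * v) / (1 - a * b) = (1 - x) * (1 - a) / (1 - a * b) := by
    rw [one_sub_div pos_ab.ne']; linear_combination a / (1 - a * b) * one_sub_x
  refine ⟨v, x, (x - a * b * v) / (1 - a * b), ⟨hv, hvx, ?_, ?_⟩, rfl, rfl, ?_⟩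
  · exact sub_pos.1 (y_sub_x ▸ div_pos (mul_pos (mul_pos ha.1 hb.1) x_sub_v) pos_ab)
  · exact sub_pos.1
      (one_sub_y ▸ div_pos (mul_pos (sub_pos.2 hx) (sub_pos.2 ha.2)) pos_ab)
  · have b_ne := hb.1.ne'
    rw [y_sub_x, y_sub_v, one_sub_x]
    field_simp

lemma cocycle_comp_ofRatios {w : ℝ × ℝ → ℝ}
    (h : ∀ v x y, (v, x, y) ∈ P3 → w (v, x) = w (v / y, x / y)
      + w ((1 - y) / (1 - v), (1 - y) / (1 - x))
      - w (v * (1 - y) / (y * (1 - v)), x * (1 - y) / (y * (1 - x))))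
    {a b c : ℝ} (ha : a ∈ Ioo (0 : ℝ) 1) (hb : b ∈ Ioo (0 : ℝ) 1) (hc : c ∈ Ioo (0 : ℝ) 1) :
    w (ofRatios b c) + w (ofRatios a (b * c)) = w (ofRatios (a * b) c) + w (ofRatios a b) := by
  obtain ⟨v, x, y, hp, rfl, rfl, rfl⟩ := exists_mem_P3_of_ratios ha hb hc
  have ⟨hv, hvx, hxy, hy⟩ : 0 < v ∧ v < x ∧ x < y ∧ y < 1 := hp
  have one_sub_v : 1 - v ≠ 0 := by linarith
  have one_sub_x : 1 - x ≠ 0 := by linarith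
  have one_sub_y : 1 - y ≠ 0 := by linarith
  have y_sub_v : y - v ≠ 0 := by linarith
  have x_ne : x ≠ 0 := by linarith
  have y_ne : y ≠ 0 := by linarith
  have at_div := ofRatios_eq (isIncreasingChart_div.mem_P2 hp)
  have at_phi := ofRatios_eq (isIncreasingChart_one_sub_div.mem_P2 hp)
  have at_psi := ofRatios_eq (isIncreasingChart_mul_one_sub_div.mem_P2 hp)
  rw [one_sub_div y_ne, one_sub_div y_ne, div_div_div_cancel_right₀ y_ne,
    div_div_div_cancel_right₀ y_ne] at at_div
  rw [one_sub_one_sub_div_one_sub one_sub_x, one_sub_one_sub_div_one_sub one_sub_v] at at_phi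
  rw [one_sub_mul_one_sub_div one_sub_x y_ne, one_sub_mul_one_sub_div one_sub_v y_ne] at at_psi
  have ratio_div : (y - x) * (1 - v) / ((1 - x) * (y - v)) * ((1 - x) / (1 - v)) =
      (y - x) / (y - v) := by field_simp
  have ratio_phi : (y - x) / (1 - x) / ((y - v) / (1 - v)) =
      (y - x) * (1 - v) / ((1 - x) * (y - v)) := by field_simp
  have ratio_psi : (y - x) / (y * (1 - x)) / ((y - v) / (y * (1 - v))) =
      (y - x) * (1 - v) / ((1 - x) * (y - v)) := by field_simp
  have ratio_phi' : (1 - y) / (1 - v) / ((1 - y) / (1 - x)) = (1 - x) / (1 - v) := by field_simp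
  have ratio_psi' : v * (1 - y) / (y * (1 - v)) / (x * (1 - y) / (y * (1 - x))) =
      (1 - x) / (1 - v) * (v / x) := by field_simp
  rw [ratio_phi, ratio_phi'] at at_phi
  rw [ratio_psi, ratio_psi'] at at_psi
  rw [ofRatios_eq ⟨hv, hvx, hxy.trans hy⟩, ratio_div, at_div, at_phi, at_psi, h v x y hp]
  ring

-- In logarithmic coordinates `s = exp (-a)`, `t = exp (-b)` the function `w` is an additive
-- cocycle.
lemma exists_eq_ratio_coboundary {w : ℝ × ℝ → ℝ} (hw : ContinuousOn w P2)
    (h : ∀ v x y, (v, x, y) ∈ P3 → w (v, x) = w (v / y, x / y)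
      + w ((1 - y) / (1 - v), (1 - y) / (1 - x))
      - w (v * (1 - y) / (y * (1 - v)), x * (1 - y) / (y * (1 - x)))) :
    ∃ N : ℝ → ℝ, ContinuousOn N (Ioo 0 1) ∧ ∀ x y, (x, y) ∈ P2 →
      w (x, y) = N (x / y) + N ((1 - y) / (1 - x)) - N (x * (1 - y) / (y * (1 - x))) := by
  have exp_mem : ∀ a : ℝ, 0 < a → Real.exp (-a) ∈ Ioo (0 : ℝ) 1 := fun a ha =>
    ⟨Real.exp_pos _, Real.exp_lt_one_iff.2 (neg_neg_of_pos ha)⟩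
  have neg_log_pos : ∀ t ∈ Ioo (0 : ℝ) 1, 0 < -Real.log t := fun t ht =>
    neg_pos.2 (Real.log_neg ht.1 ht.2)
  have cocycle : IsPosCocycle fun a b => w (ofRatios (Real.exp (-a)) (Real.exp (-b))) := by
    intro a b c ha hb hc
    simpa only [← Real.exp_add, ← neg_add] using
      cocycle_comp_ofRatios h (exp_mem a ha) (exp_mem b hb) (exp_mem c hc)
  obtain ⟨n, n_cont, hn⟩ := cocycle.exists_eq_coboundary (hw.comp (continuousOn_ofRatios.comp
    (f := fun p : ℝ × ℝ => (Real.exp (-p.1), Real.exp (-p.2))) (by fun_prop)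
      fun p hp => ⟨exp_mem _ hp.1, exp_mem _ hp.2⟩)
    fun p hp => ofRatios_mem_P2 (exp_mem _ hp.1) (exp_mem _ hp.2))
  refine ⟨fun t => n (-Real.log t), n_cont.comp (f := fun t => -Real.log t)
    (Real.continuousOn_log.mono fun t ht => ht.1.ne').neg neg_log_pos, fun x y hp => ?_⟩
  have ht := div_mem_Ioo_of_mem_P2 hp
  have hs := one_sub_div_mem_Ioo_of_mem_P2 hp
  have hst := hn _ _ (neg_log_pos _ hs) (neg_log_pos _ ht)
  have prod_eq : (1 - y) / (1 - x) * (x / y) = x * (1 - y) / (y * (1 - x)) := by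
    rw [div_mul_div_comm, mul_comm (1 - y), mul_comm (1 - x)]
  simp only [neg_neg, Real.exp_log hs.1, Real.exp_log ht.1, ofRatios_eq hp, ← neg_add,
    ← Real.log_mul hs.1.ne' ht.1.ne', prod_eq] at hst
  rw [hst, add_comm (n _)]

end MultiplicativeCocycles

section SmoothCase

lemma continuousOn_fiveTerm {L : ℝ → ℝ} (hL : ContinuousOn L (Ioo 0 1)) :
    ContinuousOn (fiveTerm L) P2 := by
  have y_ne : ∀ p ∈ P2, p.2 ≠ 0 := fun p hp => (hp.1.trans hp.2.1).ne'
  have one_sub_ne : ∀ p ∈ P2, 1 - p.1 ≠ 0 := fun p hp =>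
    (sub_pos.2 (hp.2.1.trans hp.2.2)).ne'
  have at_fst := hL.comp (f := Prod.fst) (s := P2) (by fun_prop)
    fun p hp => ⟨hp.1, hp.2.1.trans hp.2.2⟩
  have at_snd := hL.comp (f := Prod.snd) (s := P2) (by fun_prop)
    fun p hp => ⟨hp.1.trans hp.2.1, hp.2.2⟩
  have at_div := hL.comp (f := fun p : ℝ × ℝ => p.1 / p.2) (s := P2)
    (by fun_prop (disch := exact y_ne)) fun p hp => div_mem_Ioo_of_mem_P2 hp
  have at_phi := hL.comp (f := fun p : ℝ × ℝ => (1 - p.2) / (1 - p.1)) (s := P2)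
    (by fun_prop (disch := exact one_sub_ne)) fun p hp => one_sub_div_mem_Ioo_of_mem_P2 hp
  have at_psi := hL.comp (f := fun p : ℝ × ℝ => p.1 * (1 - p.2) / (p.2 * (1 - p.1))) (s := P2)
    (by fun_prop (disch := exact fun p hp => mul_ne_zero (y_ne p hp) (one_sub_ne p hp)))
    fun p hp => mul_one_sub_div_mem_Ioo_of_mem_P2 hp
  exact (((at_fst.sub at_snd).sub at_div).sub at_phi).add at_psi

lemma hasDerivAt_fiveTerm_snd {L m : ℝ → ℝ} (hL : ∀ t ∈ Ioo (0 : ℝ) 1, HasDerivAt L (m t / t) t)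
    {x y : ℝ} (hp : (x, y) ∈ P2) :
    HasDerivAt (fun y => fiveTerm L (x, y))
      (-(m y / y) + m (x / y) * (1 / y) + m ((1 - y) / (1 - x)) * (1 / (1 - y))
        - m (x * (1 - y) / (y * (1 - x))) * (1 / (y * (1 - y)))) y := by
  have ⟨hx, hxy, hy⟩ : 0 < x ∧ x < y ∧ y < 1 := hp
  have x_ne : x ≠ 0 := by linarith
  have y_ne : y ≠ 0 := by linarith
  have one_sub_x : 1 - x ≠ 0 := by linarith
  have one_sub_y : 1 - y ≠ 0 := by linarith
  have div_deriv : HasDerivAt (fun y => x / y) (-x / y ^ 2) y :=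
    ((hasDerivAt_const y x).div (hasDerivAt_id y) y_ne).congr_deriv (by simp)
  have phi_deriv : HasDerivAt (fun y => (1 - y) / (1 - x)) (-1 / (1 - x)) y :=
    ((hasDerivAt_id y).const_sub 1).div_const (1 - x)
  have psi_deriv : HasDerivAt (fun y => x * (1 - y) / (y * (1 - x))) (-x / (y ^ 2 * (1 - x))) y :=
    ((((hasDerivAt_id y).const_sub 1).const_mul x).div ((hasDerivAt_id y).mul_const (1 - x))
      (mul_ne_zero y_ne one_sub_x)).congr_deriv (by simp only [id_eq]; field_simp; ring)
  refine (((((hL y ⟨by linarith, hy⟩).const_sub (L x)).sub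
    ((hL _ (div_mem_Ioo_of_mem_P2 hp)).comp y div_deriv)).sub
    ((hL _ (one_sub_div_mem_Ioo_of_mem_P2 hp)).comp y phi_deriv)).add
    ((hL _ (mul_one_sub_div_mem_Ioo_of_mem_P2 hp)).comp y psi_deriv)).congr_deriv ?_
  simp only
  field_simp
  ring

lemma hasDerivAt_fiveTerm_fst_snd {m N : ℝ → ℝ}
    (hm : ∀ t ∈ Ioo (0 : ℝ) 1, HasDerivAt m (N t / (1 - t) ^ 2) t) {x y : ℝ} (hp : (x, y) ∈ P2) :
    HasDerivAt (fun x => -(m y / y) + m (x / y) * (1 / y) + m ((1 - y) / (1 - x)) * (1 / (1 - y))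
        - m (x * (1 - y) / (y * (1 - x))) * (1 / (y * (1 - y))))
      ((N (x / y) + N ((1 - y) / (1 - x)) - N (x * (1 - y) / (y * (1 - x)))) / (y - x) ^ 2) x := by
  have ⟨hx, hxy, hy⟩ : 0 < x ∧ x < y ∧ y < 1 := hp
  have y_ne : y ≠ 0 := by linarith
  have one_sub_x : 1 - x ≠ 0 := by linarith
  have one_sub_y : 1 - y ≠ 0 := by linarith
  have y_sub_x : y - x ≠ 0 := by linarith
  have at_div := (hm _ (div_mem_Ioo_of_mem_P2 hp)).comp x (hasDerivAt_div_right x y)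
  have at_phi := (hm _ (one_sub_div_mem_Ioo_of_mem_P2 hp)).comp x
    (hasDerivAt_one_sub_div x y one_sub_x)
  have at_psi := (hm _ (mul_one_sub_div_mem_Ioo_of_mem_P2 hp)).comp x
    (hasDerivAt_mul_one_sub_div x y one_sub_x y_ne)
  refine ((((at_div.mul_const (1 / y)).const_add (-(m y / y))).add
    (at_phi.mul_const (1 / (1 - y)))).sub (at_psi.mul_const (1 / (y * (1 - y))))).congr_deriv ?_
  simp only [one_sub_div y_ne, one_sub_one_sub_div_one_sub one_sub_x,
    one_sub_mul_one_sub_div one_sub_x y_ne]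
  field_simp

lemma exists_iterated_primitive {N : ℝ → ℝ} (hN : ContinuousOn N (Ioo 0 1)) :
    ∃ m L : ℝ → ℝ, (∀ t ∈ Ioo (0 : ℝ) 1, HasDerivAt m (N t / (1 - t) ^ 2) t) ∧
      ∀ t ∈ Ioo (0 : ℝ) 1, HasDerivAt L (m t / t) t := by
  have half : (1 / 2 : ℝ) ∈ Ioo (0 : ℝ) 1 := ⟨one_half_pos, one_half_lt_one⟩
  have quot_cont : ContinuousOn (fun z => N z / (1 - z) ^ 2) (Ioo 0 1) :=
    hN.div (by fun_prop) fun z hz => pow_ne_zero 2 (sub_pos.2 hz.2).ne'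
  have m_deriv := fun t (ht : t ∈ Ioo (0 : ℝ) 1) =>
    hasDerivAt_integral_of_continuousOn isOpen_Ioo quot_cont half ht
  refine ⟨_, fun t => ∫ z in (1 / 2 : ℝ)..t, (∫ u in (1 / 2 : ℝ)..z, N u / (1 - u) ^ 2) / z,
    m_deriv, fun t ht => hasDerivAt_integral_of_continuousOn
      (f := fun z => (∫ u in (1 / 2 : ℝ)..z, N u / (1 - u) ^ 2) / z) isOpen_Ioo ?_ half ht⟩
  exact ContinuousOn.div (fun z hz => (m_deriv z hz).continuousAt.continuousWithinAt)
    continuousOn_id fun z hz => hz.1.ne'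

lemma rectangle_of_mixed_deriv_eq_zero {S T : ℝ → ℝ → ℝ}
    (hS : ∀ x y, (x, y) ∈ P2 → HasDerivAt (S x) (T x y) y)
    (hT : ∀ x y, (x, y) ∈ P2 → HasDerivAt (fun x => T x y) 0 x) {v v' y y' : ℝ}
    (hvy : (v, y) ∈ P2) (hvy' : (v', y) ∈ P2) (hv'y : (v, y') ∈ P2) (hv'y' : (v', y') ∈ P2) :
    S v y - S v' y = S v y' - S v' y' := by
  refine eq_of_hasDerivAt_zero (f := fun y => S v y - S v' y) (isOpen_Ioo (a := max v v')
    (b := 1)) isPreconnected_Ioo (fun z hz => ?_) ⟨max_lt hvy.2.1 hvy'.2.1, hvy.2.2⟩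
    ⟨max_lt hv'y.2.1 hv'y'.2.1, hv'y.2.2⟩
  obtain ⟨hvz, hvz'⟩ := max_lt_iff.1 hz.1
  refine ((hS v z ⟨hvy.1, hvz, hz.2⟩).sub (hS v' z ⟨hvy'.1, hvz', hz.2⟩)).congr_deriv
    (sub_eq_zero.2 ?_)
  exact eq_of_hasDerivAt_zero (f := fun x => T x z) (isOpen_Ioo (a := 0) (b := z))
    isPreconnected_Ioo (fun x hx => hT x z ⟨hx.1, hx.2, hz.2⟩) ⟨hvy.1, hvz⟩ ⟨hvy'.1, hvz'⟩

variable {R R₁ R₂ R₁₂ : ℝ × ℝ → ℝ}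

lemma sixTerm_deriv_eq_zero (h6 : ∀ v x y, (v, x, y) ∈ P3 → sixTerm R v x y = 0)
    (hR₁ : ∀ x y, (x, y) ∈ P2 → HasDerivAt (fun x => R (x, y)) (R₁ (x, y)) x)
    (hR₂ : ∀ x y, (x, y) ∈ P2 → HasDerivAt (fun y => R (x, y)) (R₂ (x, y)) y) {v x y : ℝ}
    (hp : (v, x, y) ∈ P3) :
    R₂ (v, x) + R₁ (x, y) - R₂ (v / y, x / y) * (1 / y)
      - R₂ ((1 - y) / (1 - v), (1 - y) / (1 - x)) * ((1 - y) / (1 - x) ^ 2)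
      + R₂ (v * (1 - y) / (y * (1 - v)), x * (1 - y) / (y * (1 - x)))
        * ((1 - y) / (y * (1 - x) ^ 2)) = 0 := by
  have ⟨hv, hvx, hxy, hy⟩ : 0 < v ∧ v < x ∧ x < y ∧ y < 1 := hp
  have one_sub_x : 1 - x ≠ 0 := by linarith
  have y_ne : y ≠ 0 := by linarith
  have six_deriv :=
    (((((hR₂ v x ⟨hv, hvx, hxy.trans hy⟩).sub_const (R (v, y))).add
      (hR₁ x y ⟨hv.trans hvx, hxy, hy⟩)).sub
      ((hR₂ _ _ (isIncreasingChart_div.mem_P2 hp)).comp x (hasDerivAt_div_right x y))).sub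
      ((hR₂ _ _ (isIncreasingChart_one_sub_div.mem_P2 hp)).comp x
        (hasDerivAt_one_sub_div x y one_sub_x))).add
      ((hR₂ _ _ (isIncreasingChart_mul_one_sub_div.mem_P2 hp)).comp x
        (hasDerivAt_mul_one_sub_div x y one_sub_x y_ne))
  refine six_deriv.unique ((hasDerivAt_const x (0 : ℝ)).congr_of_eventuallyEq ?_)
  filter_upwards [isOpen_Ioo.mem_nhds (⟨hvx, hxy⟩ : x ∈ Ioo v y)] with z hz
  exact h6 v z y ⟨hv, hz.1, hz.2, hy⟩

lemma sixTerm_mixed_deriv_eq_zero (h6 : ∀ v x y, (v, x, y) ∈ P3 → sixTerm R v x y = 0)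
    (hR₁ : ∀ x y, (x, y) ∈ P2 → HasDerivAt (fun x => R (x, y)) (R₁ (x, y)) x)
    (hR₂ : ∀ x y, (x, y) ∈ P2 → HasDerivAt (fun y => R (x, y)) (R₂ (x, y)) y)
    (hR₁₂ : ∀ x y, (x, y) ∈ P2 → HasDerivAt (fun x => R₂ (x, y)) (R₁₂ (x, y)) x) {v x y : ℝ}
    (hp : (v, x, y) ∈ P3) :
    R₁₂ (v, x) - R₁₂ (v / y, x / y) * (1 / y) * (1 / y)
      - R₁₂ ((1 - y) / (1 - v), (1 - y) / (1 - x)) * ((1 - y) / (1 - v) ^ 2)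
        * ((1 - y) / (1 - x) ^ 2)
      + R₁₂ (v * (1 - y) / (y * (1 - v)), x * (1 - y) / (y * (1 - x)))
        * ((1 - y) / (y * (1 - v) ^ 2)) * ((1 - y) / (y * (1 - x) ^ 2)) = 0 := by
  have ⟨hv, hvx, hxy, hy⟩ : 0 < v ∧ v < x ∧ x < y ∧ y < 1 := hp
  have one_sub_v : 1 - v ≠ 0 := by linarith
  have y_ne : y ≠ 0 := by linarith
  have mixed_deriv := ((((hR₁₂ v x ⟨hv, hvx, hxy.trans hy⟩).add_const (R₁ (x, y))).sub
    (((hR₁₂ _ _ (isIncreasingChart_div.mem_P2 hp)).comp v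
      (hasDerivAt_div_right v y)).mul_const (1 / y))).sub
    (((hR₁₂ _ _ (isIncreasingChart_one_sub_div.mem_P2 hp)).comp v
      (hasDerivAt_one_sub_div v y one_sub_v)).mul_const ((1 - y) / (1 - x) ^ 2))).add
    (((hR₁₂ _ _ (isIncreasingChart_mul_one_sub_div.mem_P2 hp)).comp v
      (hasDerivAt_mul_one_sub_div v y one_sub_v y_ne)).mul_const ((1 - y) / (y * (1 - x) ^ 2)))
  refine mixed_deriv.unique ((hasDerivAt_const v (0 : ℝ)).congr_of_eventuallyEq ?_)
  filter_upwards [isOpen_Ioo.mem_nhds (⟨hv, hvx⟩ : v ∈ Ioo 0 x)] with z hz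
  exact sixTerm_deriv_eq_zero h6 hR₁ hR₂ ⟨hz.1, hz.2, hxy, hy⟩

-- The Jacobians of the three charts are absorbed by the factor `(x - v) ^ 2`.
lemma sq_sub_mul_mixed_deriv_eq (h6 : ∀ v x y, (v, x, y) ∈ P3 → sixTerm R v x y = 0)
    (hR₁ : ∀ x y, (x, y) ∈ P2 → HasDerivAt (fun x => R (x, y)) (R₁ (x, y)) x)
    (hR₂ : ∀ x y, (x, y) ∈ P2 → HasDerivAt (fun y => R (x, y)) (R₂ (x, y)) y)
    (hR₁₂ : ∀ x y, (x, y) ∈ P2 → HasDerivAt (fun x => R₂ (x, y)) (R₁₂ (x, y)) x) {v x y : ℝ}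
    (hp : (v, x, y) ∈ P3) :
    (x - v) ^ 2 * R₁₂ (v, x) = (x / y - v / y) ^ 2 * R₁₂ (v / y, x / y)
      + ((1 - y) / (1 - x) - (1 - y) / (1 - v)) ^ 2 * R₁₂ ((1 - y) / (1 - v), (1 - y) / (1 - x))
      - (x * (1 - y) / (y * (1 - x)) - v * (1 - y) / (y * (1 - v))) ^ 2
        * R₁₂ (v * (1 - y) / (y * (1 - v)), x * (1 - y) / (y * (1 - x))) := by
  have mixed := sixTerm_mixed_deriv_eq_zero h6 hR₁ hR₂ hR₁₂ hp
  obtain ⟨hv, hvx, hxy, hy⟩ : 0 < v ∧ v < x ∧ x < y ∧ y < 1 := hp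
  have one_sub_v : 1 - v ≠ 0 := by linarith
  have one_sub_x : 1 - x ≠ 0 := by linarith
  have y_ne : y ≠ 0 := by linarith
  have jac_div : (x / y - v / y) ^ 2 = (x - v) ^ 2 * (1 / y * (1 / y)) := by field_simp
  have jac_phi : ((1 - y) / (1 - x) - (1 - y) / (1 - v)) ^ 2 =
      (x - v) ^ 2 * ((1 - y) / (1 - v) ^ 2 * ((1 - y) / (1 - x) ^ 2)) := by field_simp; ring
  have jac_psi : (x * (1 - y) / (y * (1 - x)) - v * (1 - y) / (y * (1 - v))) ^ 2 = (x - v) ^ 2 *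
      ((1 - y) / (y * (1 - v) ^ 2) * ((1 - y) / (y * (1 - x) ^ 2))) := by field_simp; ring
  rw [jac_div, jac_phi, jac_psi]
  linear_combination (x - v) ^ 2 * mixed

lemma exists_fiveTerm_eq_of_hasDerivAt (hRc : ContinuousOn R P2) (hR₁₂c : ContinuousOn R₁₂ P2)
    (hR₁ : ∀ x y, (x, y) ∈ P2 → HasDerivAt (fun x => R (x, y)) (R₁ (x, y)) x)
    (hR₂ : ∀ x y, (x, y) ∈ P2 → HasDerivAt (fun y => R (x, y)) (R₂ (x, y)) y)
    (hR₁₂ : ∀ x y, (x, y) ∈ P2 → HasDerivAt (fun x => R₂ (x, y)) (R₁₂ (x, y)) x)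
    (h6 : ∀ v x y, (v, x, y) ∈ P3 → sixTerm R v x y = 0) :
    ∃ L : ℝ → ℝ, ContinuousOn L (Ioo 0 1) ∧ ∀ p ∈ P2, fiveTerm L p = R p := by
  obtain ⟨N, N_cont, hN⟩ := exists_eq_ratio_coboundary (w := fun p => (p.2 - p.1) ^ 2 * R₁₂ p)
    (ContinuousOn.mul (by fun_prop) hR₁₂c)
    fun v x y hp => sq_sub_mul_mixed_deriv_eq h6 hR₁ hR₂ hR₁₂ hp
  obtain ⟨m, L, m_deriv, L_deriv⟩ := exists_iterated_primitive N_cont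
  have L_cont : ContinuousOn L (Ioo 0 1) :=
    fun t ht => (L_deriv t ht).continuousAt.continuousWithinAt
  have mixed_zero : ∀ x y, (x, y) ∈ P2 → HasDerivAt (fun x => R₂ (x, y) - (-(m y / y)
      + m (x / y) * (1 / y) + m ((1 - y) / (1 - x)) * (1 / (1 - y))
      - m (x * (1 - y) / (y * (1 - x))) * (1 / (y * (1 - y))))) 0 x := by
    intro x y hp
    refine ((hR₁₂ x y hp).sub (hasDerivAt_fiveTerm_fst_snd m_deriv hp)).congr_deriv ?_
    have y_sub_x : y - x ≠ 0 := (sub_pos.2 hp.2.1).ne'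
    rw [← hN x y hp]
    field_simp
    ring
  obtain ⟨f, f_cont, hf⟩ := exists_fiveTerm_eq_of_rectangle (R := fun p => R p - fiveTerm L p)
    (hRc.sub (continuousOn_fiveTerm L_cont))
    (fun v x y hp => by
      rw [sixTerm_sub, h6 v x y hp, sixTerm_fiveTerm_eq_zero L hp, sub_zero])
    (fun v v' y y' => rectangle_of_mixed_deriv_eq_zero
      (S := fun x y => R (x, y) - fiveTerm L (x, y))
      (fun x y hp => (hR₂ x y hp).sub (hasDerivAt_fiveTerm_snd L_deriv hp)) mixed_zero)
  exact ⟨fun x => L x + f x, L_cont.add f_cont, fun p hp => by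
    rw [fiveTerm_add, hf p hp, add_sub_cancel]⟩

theorem exists_fiveTerm_eq_of_contDiffOn (hR : ContDiffOn ℝ 2 R P2)
    (h6 : ∀ v x y, (v, x, y) ∈ P3 → sixTerm R v x y = 0) :
    ∃ L : ℝ → ℝ, ContinuousOn L (Ioo 0 1) ∧ ∀ p ∈ P2, fiveTerm L p = R p := by
  have fderiv_contDiff : ContDiffOn ℝ 1 (fderiv ℝ R) P2 :=
    hR.fderiv_of_isOpen isOpen_P2 (by norm_num)
  have snd_contDiff : ContDiffOn ℝ 1 (fun p => fderiv ℝ R p (0, 1)) P2 :=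
    fderiv_contDiff.clm_apply contDiffOn_const
  have fst_slice : ∀ {S : ℝ × ℝ → ℝ}, ContDiffOn ℝ 1 S P2 → ∀ x y, (x, y) ∈ P2 →
      HasDerivAt (fun x => S (x, y)) (fderiv ℝ S (x, y) (1, 0)) x := fun hS x y hp =>
    ((hS.differentiableOn one_ne_zero).differentiableAt
      (isOpen_P2.mem_nhds hp)).hasFDerivAt.comp_hasDerivAt x
      ((hasDerivAt_id x).prodMk (hasDerivAt_const x y))
  have snd_slice : ∀ x y, (x, y) ∈ P2 →
      HasDerivAt (fun y => R (x, y)) (fderiv ℝ R (x, y) (0, 1)) y := fun x y hp =>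
    ((hR.differentiableOn two_ne_zero).differentiableAt
      (isOpen_P2.mem_nhds hp)).hasFDerivAt.comp_hasDerivAt y
      ((hasDerivAt_const y x).prodMk (hasDerivAt_id y))
  exact exists_fiveTerm_eq_of_hasDerivAt (R₁ := fun p => fderiv ℝ R p (1, 0))
    (R₁₂ := fun p => fderiv ℝ (fun p => fderiv ℝ R p (0, 1)) p (1, 0)) hR.continuousOn
    ((snd_contDiff.continuousOn_fderiv_of_isOpen isOpen_P2 le_rfl).clm_apply continuousOn_const)
    (fst_slice (hR.of_le one_le_two)) snd_slice (fst_slice snd_contDiff) h6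

end SmoothCase

section Moebius

open Matrix

variable {M N : Matrix (Fin 2) (Fin 2) ℝ} {t : ℝ}

/-- The denominator of the Möbius transformation of a real `2 × 2` matrix. -/
def moebiusDenom (M : Matrix (Fin 2) (Fin 2) ℝ) (t : ℝ) : ℝ := M 1 0 * t + M 1 1

/-- The Möbius transformation of a real `2 × 2` matrix, with the junk value `0` at its pole. -/
noncomputable def moebius (M : Matrix (Fin 2) (Fin 2) ℝ) (t : ℝ) : ℝ :=
  (M 0 0 * t + M 0 1) / moebiusDenom M t

lemma moebiusDenom_mul (h : moebiusDenom N t ≠ 0) :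
    moebiusDenom (M * N) t = moebiusDenom M (moebius N t) * moebiusDenom N t := by
  simp only [moebius, moebiusDenom, mul_apply, Fin.sum_univ_two] at h ⊢
  field_simp
  ring

lemma moebius_mul (h : moebiusDenom N t ≠ 0) :
    moebius (M * N) t = moebius M (moebius N t) := by
  rw [moebius, moebiusDenom_mul h, moebius, ← div_div, div_right_comm]
  congr 1
  simp only [moebiusDenom, mul_apply, Fin.sum_univ_two] at h ⊢
  field_simp
  ring

lemma moebius_smul_one {k : ℝ} (hk : k ≠ 0) (t : ℝ) :
    moebius (k • (1 : Matrix (Fin 2) (Fin 2) ℝ)) t = t := by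
  simp [moebius, moebiusDenom, hk]

lemma moebius_moebius_adjugate (hM : M.det ≠ 0) (h : moebiusDenom M.adjugate t ≠ 0) :
    moebius M (moebius M.adjugate t) = t := by
  rw [← moebius_mul h, mul_adjugate, moebius_smul_one hM]

lemma moebiusDenom_moebius_adjugate_mul (h : moebiusDenom M.adjugate t ≠ 0) :
    moebiusDenom M (moebius M.adjugate t) * moebiusDenom M.adjugate t = M.det := by
  rw [← moebiusDenom_mul h, mul_adjugate]
  simp [moebiusDenom]

lemma ae_moebiusDenom_ne_zero (hM : M.det ≠ 0) : ∀ᵐ t, moebiusDenom M t ≠ 0 := by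
  refine Set.Subsingleton.measure_zero (fun s hs t ht => ?_) _
  replace hs : M 1 0 * s + M 1 1 = 0 := not_not.1 hs
  replace ht : M 1 0 * t + M 1 1 = 0 := not_not.1 ht
  rw [det_fin_two] at hM
  have ne_zero : M 1 0 ≠ 0 := fun h₁₀ => hM (by simp_all)
  exact mul_left_cancel₀ ne_zero (by linarith)

lemma hasDerivAt_moebius (h : moebiusDenom M t ≠ 0) :
    HasDerivAt (moebius M) (M.det / moebiusDenom M t ^ 2) t := by
  have num : HasDerivAt (fun t => M 0 0 * t + M 0 1) (M 0 0) t :=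
    (hasDerivAt_const_mul (M 0 0)).add_const (M 0 1)
  have denom : HasDerivAt (moebiusDenom M) (M 1 0) t :=
    (hasDerivAt_const_mul (M 1 0)).add_const (M 1 1)
  refine (num.div denom h).congr_deriv ?_
  rw [det_fin_two, moebiusDenom]
  ring

lemma measurable_moebius (M : Matrix (Fin 2) (Fin 2) ℝ) : Measurable (moebius M) := by
  unfold moebius moebiusDenom
  fun_prop

/-- The density of the image under the Möbius transformation of `M` of the measure with
density `ν`. -/
noncomputable def pushDensity (M : Matrix (Fin 2) (Fin 2) ℝ) (ν : ℝ → ℝ) (s : ℝ) : ℝ :=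
  ν (moebius M.adjugate s) * (|M.det| / moebiusDenom M.adjugate s ^ 2)

lemma integral_mul_comp_moebius (hM : M.det ≠ 0) (ν g : ℝ → ℝ) :
    ∫ v, ν v * g (moebius M v) = ∫ s, pushDensity M ν s * g s := by
  have det_adj : M.adjugate.det = M.det := by simp [det_adjugate]
  have adj_ne : M.adjugate.det ≠ 0 := det_adj.trans_ne hM
  have adj_adj : M.adjugate.adjugate = M := by simp [adjugate_adjugate']
  set T : Set ℝ := {s | moebiusDenom M.adjugate s ≠ 0}
  have T_meas : MeasurableSet T := by
    refine (measurableSet_eq_fun ?_ measurable_const).compl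
    unfold moebiusDenom
    fun_prop
  have T_univ : volume.restrict T = volume :=
    Measure.restrict_eq_self_of_ae_mem (ae_moebiusDenom_ne_zero adj_ne)
  have image_univ : volume.restrict (moebius M.adjugate '' T) = volume := by
    refine Measure.restrict_eq_self_of_ae_mem ?_
    filter_upwards [ae_moebiusDenom_ne_zero hM] with v hv
    rw [← adj_adj] at hv
    exact ⟨moebius M v, fun h => adj_ne (by
      rw [← moebiusDenom_moebius_adjugate_mul hv, adj_adj, h, zero_mul]),
      by simpa only [adj_adj] using moebius_moebius_adjugate adj_ne hv⟩
  have change := integral_image_eq_integral_abs_deriv_smul T_meas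
    (fun s hs => (hasDerivAt_moebius hs).hasDerivWithinAt)
    (LeftInvOn.injOn fun s hs => moebius_moebius_adjugate hM hs)
    (fun v => ν v * g (moebius M v))
  rw [image_univ] at change
  rw [change, setIntegral_congr_fun T_meas (g := fun s => pushDensity M ν s * g s), T_univ]
  intro s hs
  simp only [pushDensity, moebius_moebius_adjugate hM hs, det_adj, smul_eq_mul, abs_div, abs_sq]
  ring

/-- A family of invertible matrices over `U` with smooth entries. -/
structure IsSmoothMatrixFamily {E : Type*} [NormedAddCommGroup E] [NormedSpace ℝ E]
    (M : E → Matrix (Fin 2) (Fin 2) ℝ) (U : Set E) : Prop where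
  contDiffOn : ∀ i j, ContDiffOn ℝ ∞ (fun p => M p i j) U
  det_ne_zero : ∀ p ∈ U, (M p).det ≠ 0

namespace IsSmoothMatrixFamily

variable {E : Type*} [NormedAddCommGroup E] [NormedSpace ℝ E]
  {M N : E → Matrix (Fin 2) (Fin 2) ℝ} {U : Set E} {p₀ : E}

lemma mul (hM : IsSmoothMatrixFamily M U) (hN : IsSmoothMatrixFamily N U) :
    IsSmoothMatrixFamily (fun p => M p * N p) U where
  contDiffOn i j := by
    simp only [mul_apply, Fin.sum_univ_two]
    exact ((hM.contDiffOn i 0).mul (hN.contDiffOn 0 j)).add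
      ((hM.contDiffOn i 1).mul (hN.contDiffOn 1 j))
  det_ne_zero p hp := by
    rw [det_mul]
    exact mul_ne_zero (hM.det_ne_zero p hp) (hN.det_ne_zero p hp)

lemma adjugate (hM : IsSmoothMatrixFamily M U) :
    IsSmoothMatrixFamily (fun p => (M p).adjugate) U where
  contDiffOn i j := by
    simp only [adjugate_fin_two]
    fin_cases i <;> fin_cases j
    · exact hM.contDiffOn 1 1
    · exact (hM.contDiffOn 0 1).neg
    · exact (hM.contDiffOn 1 0).neg
    · exact hM.contDiffOn 0 0
  det_ne_zero p hp := by simpa [det_adjugate] using hM.det_ne_zero p hp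

lemma contDiffAt_entry (hM : IsSmoothMatrixFamily M U) (hU : U ∈ 𝓝 p₀) (t : ℝ) (i j : Fin 2) :
    ContDiffAt ℝ ∞ (fun z : E × ℝ => M z.1 i j) (p₀, t) :=
  ((hM.contDiffOn i j).contDiffAt hU).comp (p₀, t) contDiffAt_fst

lemma contDiffAt_num (hM : IsSmoothMatrixFamily M U) (hU : U ∈ 𝓝 p₀) (t : ℝ) :
    ContDiffAt ℝ ∞ (fun z : E × ℝ => M z.1 0 0 * z.2 + M z.1 0 1) (p₀, t) :=
  ((hM.contDiffAt_entry hU t 0 0).mul contDiffAt_snd).add (hM.contDiffAt_entry hU t 0 1)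

lemma contDiffAt_moebiusDenom (hM : IsSmoothMatrixFamily M U) (hU : U ∈ 𝓝 p₀) (t : ℝ) :
    ContDiffAt ℝ ∞ (fun z : E × ℝ => moebiusDenom (M z.1) z.2) (p₀, t) :=
  ((hM.contDiffAt_entry hU t 1 0).mul contDiffAt_snd).add (hM.contDiffAt_entry hU t 1 1)

lemma contDiffAt_moebius (hM : IsSmoothMatrixFamily M U) (hU : U ∈ 𝓝 p₀)
    (h : moebiusDenom (M p₀) t ≠ 0) :
    ContDiffAt ℝ ∞ (fun z : E × ℝ => moebius (M z.1) z.2) (p₀, t) :=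
  (hM.contDiffAt_num hU t).div (hM.contDiffAt_moebiusDenom hU t) h

lemma contDiffAt_abs_det (hM : IsSmoothMatrixFamily M U) (hU : U ∈ 𝓝 p₀) (t : ℝ) :
    ContDiffAt ℝ ∞ (fun z : E × ℝ => |(M z.1).det|) (p₀, t) := by
  have det_ne : (M p₀).det ≠ 0 := hM.det_ne_zero p₀ (mem_of_mem_nhds hU)
  refine (contDiffAt_abs det_ne).comp (p₀, t) (f := fun z : E × ℝ => (M z.1).det) ?_
  simp only [det_fin_two]
  exact ((hM.contDiffAt_entry hU t 0 0).mul (hM.contDiffAt_entry hU t 1 1)).sub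
    ((hM.contDiffAt_entry hU t 0 1).mul (hM.contDiffAt_entry hU t 1 0))

lemma eventually_pushDensity_eq_zero (hM : IsSmoothMatrixFamily M U) (hU : U ∈ 𝓝 p₀)
    {ν : ℝ → ℝ} (hν : HasCompactSupport ν) {s : ℝ} (h : moebiusDenom (M p₀).adjugate s = 0) :
    ∀ᶠ z : E × ℝ in 𝓝 (p₀, s), pushDensity (M z.1) ν z.2 = 0 := by
  obtain ⟨K, hK⟩ := hν.isCompact.isBounded.exists_norm_le
  set num : E × ℝ → ℝ := fun z => (M z.1).adjugate 0 0 * z.2 + (M z.1).adjugate 0 1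
  set denom : E × ℝ → ℝ := fun z => moebiusDenom (M z.1).adjugate z.2
  have num_ne : num (p₀, s) ≠ 0 := by
    intro h_num
    refine hM.adjugate.det_ne_zero p₀ (mem_of_mem_nhds hU) ?_
    simp only [num, moebiusDenom] at h h_num
    rw [det_fin_two]
    linear_combination (M p₀).adjugate 0 0 * h - (M p₀).adjugate 1 0 * h_num
  have lt_at : K * |denom (p₀, s)| < |num (p₀, s)| := by
    simpa [denom, h] using num_ne
  have num_cont : ContinuousAt num (p₀, s) := (hM.adjugate.contDiffAt_num hU s).continuousAt
  have denom_cont : ContinuousAt denom (p₀, s) :=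
    (hM.adjugate.contDiffAt_moebiusDenom hU s).continuousAt
  filter_upwards [(denom_cont.abs.const_mul K).eventually_lt num_cont.abs lt_at] with z hz
  rcases eq_or_ne (denom z) 0 with h_denom | h_denom
  · have h_zero : moebiusDenom (M z.1).adjugate z.2 = 0 := h_denom
    simp [pushDensity, h_zero]
  · have lt_moebius : K < |moebius (M z.1).adjugate z.2| := by
      rw [moebius, abs_div, lt_div_iff₀ (abs_pos.2 h_denom)]
      exact hz
    have ν_zero : ν (moebius (M z.1).adjugate z.2) = 0 :=
      image_eq_zero_of_notMem_tsupport fun hmem => (hK _ hmem).not_gt lt_moebius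
    rw [pushDensity, ν_zero, zero_mul]

lemma contDiffOn_pushDensity (hM : IsSmoothMatrixFamily M U) (hU : IsOpen U) {ν : ℝ → ℝ}
    (hν : ContDiff ℝ ∞ ν) (hν_supp : HasCompactSupport ν) :
    ContDiffOn ℝ ∞ (fun z : E × ℝ => pushDensity (M z.1) ν z.2) (U ×ˢ univ) := by
  rintro ⟨p₀, s⟩ ⟨hp₀, -⟩
  refine ContDiffAt.contDiffWithinAt ?_
  have nhds_U : U ∈ 𝓝 p₀ := hU.mem_nhds hp₀
  rcases eq_or_ne (moebiusDenom (M p₀).adjugate s) 0 with h | h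
  · exact contDiffAt_const.congr_of_eventuallyEq
      (hM.eventually_pushDensity_eq_zero nhds_U hν_supp h)
  · exact (hν.contDiffAt.comp _ (hM.adjugate.contDiffAt_moebius nhds_U h)).mul
      ((hM.contDiffAt_abs_det nhds_U s).div
        ((hM.adjugate.contDiffAt_moebiusDenom nhds_U s).pow 2) (pow_ne_zero 2 h))

end IsSmoothMatrixFamily

end Moebius

section ParametricIntegrals

variable {E F : Type*} [NormedAddCommGroup E] [NormedSpace ℝ E] [MeasurableSpace F]
  {μ : Measure F}

lemma contDiffOn_integral_mul [NormedAddCommGroup F] [NormedSpace ℝ F] [FiniteDimensional ℝ F]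
    [BorelSpace F] {U : Set E} (hU : IsOpen U) {f : F → ℝ} (hf : LocallyIntegrable f μ)
    (hf_supp : HasCompactSupport f) {k : E × F → ℝ} (hk : ContDiffOn ℝ ∞ k (U ×ˢ univ)) :
    ContDiffOn ℝ ∞ (fun p => ∫ w, f w * k (p, w) ∂μ) U := by
  obtain ⟨r, hr_pos, hr⟩ := hf_supp.isCompact.isBounded.subset_closedBall_lt 0 0
  let χ : ContDiffBump (0 : F) := ⟨r, r + 1, hr_pos, lt_add_one r⟩
  let g : E → F → ℝ := fun p x => χ (-x) * k (p, -x)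
  have g_smooth : ContDiffOn ℝ ∞ (Function.uncurry g) (U ×ˢ univ) :=
    (χ.contDiff.comp (f := fun z : E × F => -z.2) (by fun_prop)).contDiffOn.mul
      (hk.comp (f := fun z : E × F => (z.1, -z.2)) (by fun_prop) fun z hz => ⟨hz.1, trivial⟩)
  have g_supp : ∀ p x, p ∈ U → x ∉ Metric.closedBall (0 : F) (r + 1) → g p x = 0 := by
    intro p x _ hx
    have χ_zero : χ (-x) = 0 := χ.zero_of_le_dist (by
      rw [dist_zero_right, norm_neg, ← dist_zero_right]
      exact (not_le.1 hx).le)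
    simp only [g, χ_zero, zero_mul]
  refine (contDiffOn_convolution_right_with_param_comp (n := ⊤) (ContinuousLinearMap.mul ℝ ℝ)
    (v := fun _ => (0 : F)) contDiffOn_const hU (isCompact_closedBall 0 (r + 1)) g_supp hf
    g_smooth).congr fun p _ => integral_congr_ae (.of_forall fun w => ?_)
  by_cases hw : w ∈ tsupport f
  · simp [g, χ.one_of_mem_closedBall (hr hw)]
  · simp [image_eq_zero_of_notMem_tsupport hw]

/-- For parameters near `p₀` the members of the family `g` are integrable, and their integrals are
a `C²` function of the parameter. -/
def HasContDiffIntegralAt (μ : Measure F) (g : E → F → ℝ) (p₀ : E) : Prop :=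
  (∀ᶠ p in 𝓝 p₀, Integrable (g p) μ) ∧ ContDiffAt ℝ 2 (fun p => ∫ z, g p z ∂μ) p₀

namespace HasContDiffIntegralAt

variable {g h : E → F → ℝ} {p₀ : E}

lemma congr (hg : HasContDiffIntegralAt μ g p₀) (hgh : ∀ᶠ p in 𝓝 p₀, h p = g p) :
    HasContDiffIntegralAt μ h p₀ := by
  refine ⟨?_, hg.2.congr_of_eventuallyEq ?_⟩
  · filter_upwards [hg.1, hgh] with p hp hp_eq
    rwa [hp_eq]
  · filter_upwards [hgh] with p hp_eq
    rw [hp_eq]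

lemma add (hg : HasContDiffIntegralAt μ g p₀) (hh : HasContDiffIntegralAt μ h p₀) :
    HasContDiffIntegralAt μ (fun p z => g p z + h p z) p₀ := by
  refine ⟨(hg.1.and hh.1).mono fun p hp => hp.1.add hp.2,
    (hg.2.add hh.2).congr_of_eventuallyEq ?_⟩
  filter_upwards [hg.1, hh.1] with p hp_g hp_h using integral_add hp_g hp_h

lemma neg (hg : HasContDiffIntegralAt μ g p₀) :
    HasContDiffIntegralAt μ (fun p z => -g p z) p₀ := by
  refine ⟨hg.1.mono fun p hp => hp.neg, ?_⟩
  simpa only [integral_neg] using hg.2.neg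

lemma sub (hg : HasContDiffIntegralAt μ g p₀) (hh : HasContDiffIntegralAt μ h p₀) :
    HasContDiffIntegralAt μ (fun p z => g p z - h p z) p₀ := by
  simpa only [sub_eq_add_neg] using hg.add hh.neg

end HasContDiffIntegralAt

end ParametricIntegrals

section MoebiusSmoothing

lemma exists_eventually_forall_le_of_isCompact {X Y : Type*} [TopologicalSpace X]
    [TopologicalSpace Y] {T : Set Y} (hT : IsCompact T) {h : X × Y → ℝ} {x₀ : X}
    (hh : ∀ y ∈ T, (𝓝 (x₀, y)).IsBoundedUnder (· ≤ ·) h) :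
    ∃ B, ∀ᶠ x in 𝓝 x₀, ∀ y ∈ T, h (x, y) ≤ B := by
  refine hT.induction_on (p := fun S => ∃ B, ∀ᶠ x in 𝓝 x₀, ∀ y ∈ S, h (x, y) ≤ B) ?_ ?_ ?_ ?_
  · exact ⟨0, by simp⟩
  · rintro S S' hSS' ⟨B, hB⟩
    exact ⟨B, hB.mono fun x hx y hy => hx y (hSS' hy)⟩
  · rintro S S' ⟨B, hB⟩ ⟨B', hB'⟩
    refine ⟨max B B', ?_⟩
    filter_upwards [hB, hB'] with x hx hx' y hy
    exact hy.elim (fun hy => (hx y hy).trans (le_max_left _ _))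
      fun hy => (hx' y hy).trans (le_max_right _ _)
  · intro y hy
    obtain ⟨B, hB⟩ := hh y hy
    rw [Filter.eventually_map, nhds_prod_eq, Filter.eventually_prod_iff] at hB
    obtain ⟨near_x, h_near_x, near_y, h_near_y, h_le⟩ := hB
    exact ⟨{y | near_y y}, mem_nhdsWithin_of_mem_nhds h_near_y, B,
      h_near_x.mono fun x hx y hy => h_le hx hy⟩

variable {ν μ : ℝ → ℝ}

lemma integrable_mul_comp_moebius (hν : Continuous ν) (hν_supp : HasCompactSupport ν)
    (hμ : Continuous μ) (hμ_supp : HasCompactSupport μ) {f : ℝ × ℝ → ℝ} (hf : Measurable f)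
    {B : ℝ} (hB : ∀ w, |f w| ≤ B) (M N : Matrix (Fin 2) (Fin 2) ℝ) :
    Integrable (fun z : ℝ × ℝ => ν z.1 * μ z.2 * f (moebius M z.1, moebius N z.2)) := by
  have weight : Integrable (fun z : ℝ × ℝ => ν z.1 * μ z.2) :=
    (hν.integrable_of_hasCompactSupport hν_supp).mul_prod
      (hμ.integrable_of_hasCompactSupport hμ_supp)
  refine weight.mul_bdd (c := B) (hf.comp ?_).aestronglyMeasurable (.of_forall fun z => hB _)
  exact ((measurable_moebius M).comp measurable_fst).prodMk
    ((measurable_moebius N).comp measurable_snd)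

lemma integrable_of_bounded_of_hasCompactSupport {F : Type*} [TopologicalSpace F]
    [MeasurableSpace F] {μ : Measure F} [IsFiniteMeasureOnCompacts μ]
    {f : F → ℝ} (hf : Measurable f) {B : ℝ} (hB : ∀ w, |f w| ≤ B) (hf_supp : HasCompactSupport f) :
    Integrable f μ := by
  rw [← integrableOn_iff_integrable_of_support_subset (subset_tsupport f)]
  exact Measure.integrableOn_of_bounded (M := B) hf_supp.isCompact.measure_lt_top.ne
    hf.aestronglyMeasurable (.of_forall hB)

variable {E : Type*} [NormedAddCommGroup E] [NormedSpace ℝ E]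
  {M N : E → Matrix (Fin 2) (Fin 2) ℝ} {U : Set E}

lemma contDiffOn_integral_comp_moebius (hM : IsSmoothMatrixFamily M U)
    (hN : IsSmoothMatrixFamily N U) (hU : IsOpen U) (hν : ContDiff ℝ ∞ ν)
    (hν_supp : HasCompactSupport ν) (hμ : ContDiff ℝ ∞ μ) (hμ_supp : HasCompactSupport μ)
    {f : ℝ × ℝ → ℝ} (hf : Measurable f) {B : ℝ} (hB : ∀ w, |f w| ≤ B)
    (hf_supp : HasCompactSupport f) :
    ContDiffOn ℝ ∞
      (fun p => ∫ z : ℝ × ℝ, ν z.1 * μ z.2 * f (moebius (M p) z.1, moebius (N p) z.2)) U := by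
  set k : E × (ℝ × ℝ) → ℝ :=
    fun z => pushDensity (M z.1) ν z.2.1 * pushDensity (N z.1) μ z.2.2
  have k_smooth : ContDiffOn ℝ ∞ k (U ×ˢ univ) :=
    ((hM.contDiffOn_pushDensity hU hν hν_supp).comp (f := fun z : E × (ℝ × ℝ) => (z.1, z.2.1))
      (by fun_prop) fun z hz => ⟨hz.1, trivial⟩).mul
    ((hN.contDiffOn_pushDensity hU hμ hμ_supp).comp (f := fun z : E × (ℝ × ℝ) => (z.1, z.2.2))
      (by fun_prop) fun z hz => ⟨hz.1, trivial⟩)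
  have f_int : Integrable f := integrable_of_bounded_of_hasCompactSupport hf hB hf_supp
  refine (contDiffOn_integral_mul hU f_int.locallyIntegrable hf_supp k_smooth).congr
    fun p hp => ?_
  have k_cont : Continuous fun w => k (p, w) :=
    continuousOn_univ.1 (k_smooth.continuousOn.comp (by fun_prop) fun w _ => ⟨hp, trivial⟩)
  have fk_int : Integrable fun w => f w * k (p, w) := by
    rw [← integrableOn_iff_integrable_of_support_subset
      ((Function.support_mul_subset_left _ _).trans (subset_tsupport f))]
    exact f_int.integrableOn.mul_continuousOn k_cont.continuousOn hf_supp.isCompact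
  have mul_int := integrable_mul_comp_moebius hν.continuous hν_supp hμ.continuous hμ_supp hf hB
    (M p) (N p)
  simp only [k, mul_comm (f _), mul_assoc] at fk_int mul_int ⊢
  rw [Measure.volume_eq_prod] at fk_int mul_int ⊢
  rw [integral_prod _ mul_int, integral_prod _ fk_int]
  simp only [integral_const_mul]
  rw [integral_mul_comp_moebius (hM.det_ne_zero p hp) ν
    fun s => ∫ t, μ t * f (s, moebius (N p) t)]
  congr 1 with s
  rw [integral_mul_comp_moebius (hN.det_ne_zero p hp) μ fun t => f (s, t)]

lemma exists_eventually_forall_abs_comp_moebius_le (hM : IsSmoothMatrixFamily M U)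
    (hN : IsSmoothMatrixFamily N U) {p₀ : E} (hU : U ∈ 𝓝 p₀) {S T : Set ℝ} (hS : IsCompact S)
    (hT : IsCompact T) (hMS : ∀ v ∈ S, moebiusDenom (M p₀) v ≠ 0)
    (hNT : ∀ t ∈ T, moebiusDenom (N p₀) t ≠ 0) {f : ℝ × ℝ → ℝ}
    (hf : ∀ v ∈ S, ∀ t ∈ T,
      (𝓝 (moebius (M p₀) v, moebius (N p₀) t)).IsBoundedUnder (· ≤ ·) fun w => |f w|) :
    ∃ B, ∀ᶠ p in 𝓝 p₀, ∀ z ∈ S ×ˢ T, |f (moebius (M p) z.1, moebius (N p) z.2)| ≤ B := by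
  refine exists_eventually_forall_le_of_isCompact (hS.prod hT)
    (h := fun q : E × (ℝ × ℝ) => |f (moebius (M q.1) q.2.1, moebius (N q.1) q.2.2)|) ?_
  rintro ⟨v, t⟩ ⟨hv, ht⟩
  have M_cont : ContinuousAt (fun q : E × (ℝ × ℝ) => moebius (M q.1) q.2.1) (p₀, v, t) :=
    (hM.contDiffAt_moebius hU (hMS v hv)).continuousAt.comp
      (f := fun q : E × (ℝ × ℝ) => (q.1, q.2.1)) (x := (p₀, v, t)) (by fun_prop)
  have N_cont : ContinuousAt (fun q : E × (ℝ × ℝ) => moebius (N q.1) q.2.2) (p₀, v, t) :=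
    (hN.contDiffAt_moebius hU (hNT t ht)).continuousAt.comp
      (f := fun q : E × (ℝ × ℝ) => (q.1, q.2.2)) (x := (p₀, v, t)) (by fun_prop)
  exact (M_cont.prodMk N_cont).isBoundedUnder_comp (hf v hv t ht)

-- Near `p₀` only a compact set of arguments of `f` matters, so `f` may be truncated there.
lemma hasContDiffIntegralAt_comp_moebius (hM : IsSmoothMatrixFamily M U)
    (hN : IsSmoothMatrixFamily N U) (hU : IsOpen U) (hν : ContDiff ℝ ∞ ν)
    (hν_supp : HasCompactSupport ν) (hμ : ContDiff ℝ ∞ μ) (hμ_supp : HasCompactSupport μ)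
    {f : ℝ × ℝ → ℝ} (hf : Measurable f) {p₀ : E} (hp₀ : p₀ ∈ U)
    (hMν : ∀ v ∈ tsupport ν, moebiusDenom (M p₀) v ≠ 0)
    (hNμ : ∀ t ∈ tsupport μ, moebiusDenom (N p₀) t ≠ 0)
    (hf_bdd : ∀ v ∈ tsupport ν, ∀ t ∈ tsupport μ,
      (𝓝 (moebius (M p₀) v, moebius (N p₀) t)).IsBoundedUnder (· ≤ ·) fun w => |f w|) :
    HasContDiffIntegralAt volume (fun p (z : ℝ × ℝ) =>
      ν z.1 * μ z.2 * f (moebius (M p) z.1, moebius (N p) z.2)) p₀ := by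
  have nhds_U : U ∈ 𝓝 p₀ := hU.mem_nhds hp₀
  obtain ⟨B, hB⟩ := exists_eventually_forall_abs_comp_moebius_le hM hN nhds_U hν_supp.isCompact
    hμ_supp.isCompact hMν hNμ (f := fun w => max |f w| ‖w‖) fun v hv t ht => by
      simpa only [abs_of_nonneg (le_max_of_le_left (abs_nonneg _))] using
        (hf_bdd v hv t ht).sup (continuous_norm.tendsto _).isBoundedUnder_le
  set bounded : Set (ℝ × ℝ) := {w | |f w| ≤ B} ∩ Metric.closedBall 0 B
  set f_trunc : ℝ × ℝ → ℝ := bounded.indicator f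
  have trunc_meas : Measurable f_trunc := hf.indicator
    ((measurableSet_le hf.abs measurable_const).inter Metric.isClosed_closedBall.measurableSet)
  have trunc_le : ∀ w, |f_trunc w| ≤ max B 0 := fun w => by
    by_cases hw : w ∈ bounded
    · simpa [f_trunc, hw] using Or.inl hw.1
    · simp [f_trunc, hw]
  have trunc_supp : HasCompactSupport f_trunc :=
    .intro (isCompact_closedBall 0 B) fun w hw => indicator_of_notMem (fun h => hw h.2) _
  have trunc_smooth := ((contDiffOn_integral_comp_moebius hM hN hU hν hν_supp hμ hμ_supp
    trunc_meas trunc_le trunc_supp).contDiffAt nhds_U).of_le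
      (m := 2) (WithTop.coe_le_coe.2 le_top)
  have trunc : HasContDiffIntegralAt volume (fun p (z : ℝ × ℝ) =>
      ν z.1 * μ z.2 * f_trunc (moebius (M p) z.1, moebius (N p) z.2)) p₀ :=
    ⟨.of_forall fun p => integrable_mul_comp_moebius hν.continuous hν_supp hμ.continuous hμ_supp
      trunc_meas trunc_le (M p) (N p), trunc_smooth⟩
  refine trunc.congr ?_
  filter_upwards [hB] with p hp
  ext z
  by_cases hz : z ∈ tsupport ν ×ˢ tsupport μ
  · have max_le := (le_abs_self _).trans (hp z hz)
    have mem_bounded : (moebius (M p) z.1, moebius (N p) z.2) ∈ bounded :=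
      ⟨(le_max_left _ _).trans max_le,
        mem_closedBall_zero_iff.2 ((le_max_right _ _).trans max_le)⟩
    simp only [f_trunc, indicator_of_mem mem_bounded]
  · rcases not_and_or.1 hz with hz | hz <;> simp [image_eq_zero_of_notMem_tsupport hz]

end MoebiusSmoothing

section MoebiusCharts

open Matrix

/-- The maps `f y` are the Möbius transformations of a smooth family of matrices `m y`, normalised
so that the denominators lie in `(0, 1]` on `(0, y)` and the determinants are at least
`y * (1 - y)`; both bounds keep `f y` from contracting distances too much. -/
structure IsMoebiusChart (f : ℝ → ℝ → ℝ) (m : ℝ → Matrix (Fin 2) (Fin 2) ℝ) : Prop where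
  eq_moebius : ∀ y t, f y t = moebius (m y) t
  contDiff : ∀ i j, ContDiff ℝ ∞ fun y => m y i j
  le_det : ∀ {y}, y ∈ Ioo (0 : ℝ) 1 → y * (1 - y) ≤ (m y).det
  denom_mem_Ioc : ∀ {y t}, 0 < t → t < y → y < 1 → moebiusDenom (m y) t ∈ Ioc 0 1

lemma IsMoebiusChart.det_ne_zero {f : ℝ → ℝ → ℝ} {m : ℝ → Matrix (Fin 2) (Fin 2) ℝ}
    (h : IsMoebiusChart f m) {y : ℝ} (hy : y ∈ Ioo (0 : ℝ) 1) : (m y).det ≠ 0 :=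
  ((mul_pos hy.1 (sub_pos.2 hy.2)).trans_le (h.le_det hy)).ne'

lemma IsMoebiusChart.denom_ne_zero {f : ℝ → ℝ → ℝ} {m : ℝ → Matrix (Fin 2) (Fin 2) ℝ}
    (h : IsMoebiusChart f m) {y t : ℝ} (ht : 0 < t) (hty : t < y) (hy : y < 1) :
    moebiusDenom (m y) t ≠ 0 :=
  (h.denom_mem_Ioc ht hty hy).1.ne'

lemma isMoebiusChart_id : IsMoebiusChart (fun _ t => t) fun _ => 1 where
  eq_moebius _ t := by simp [moebius, moebiusDenom]
  contDiff _ _ := contDiff_const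
  le_det hy := by rw [det_one]; nlinarith [hy.1, hy.2]
  denom_mem_Ioc _ _ _ := by simp [moebiusDenom]

lemma isMoebiusChart_div : IsMoebiusChart (fun y t => t / y) fun y => !![1, 0; 0, y] where
  eq_moebius _ t := by simp [moebius, moebiusDenom]
  contDiff := by
    simp only [Fin.forall_fin_two]
    exact ⟨⟨contDiff_const, contDiff_const⟩, contDiff_const, contDiff_id⟩
  le_det {y} hy := by
    rw [show (!![1, 0; 0, y] : Matrix (Fin 2) (Fin 2) ℝ).det = y by simp]
    nlinarith [hy.1]
  denom_mem_Ioc ht hty hy := by simpa [moebiusDenom] using ⟨ht.trans hty, hy.le⟩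

lemma isMoebiusChart_one_sub_div :
    IsMoebiusChart (fun y t => (1 - y) / (1 - t)) fun y => !![0, 1 - y; -1, 1] where
  eq_moebius _ t := by simp [moebius, moebiusDenom, neg_add_eq_sub]
  contDiff := by
    simp only [Fin.forall_fin_two]
    exact ⟨⟨contDiff_const, contDiff_const.sub contDiff_id⟩, contDiff_const, contDiff_const⟩
  le_det {y} hy := by
    rw [show (!![0, 1 - y; -1, 1] : Matrix (Fin 2) (Fin 2) ℝ).det = 1 - y by simp]
    nlinarith [hy.2]
  denom_mem_Ioc ht hty hy := by
    simpa [moebiusDenom, neg_add_eq_sub] using ⟨hty.trans hy, ht.le⟩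

lemma isMoebiusChart_mul_one_sub_div :
    IsMoebiusChart (fun y t => t * (1 - y) / (y * (1 - t))) fun y => !![1 - y, 0; -y, y] where
  eq_moebius y t := by simp [moebius, moebiusDenom, mul_comm t, mul_sub, neg_add_eq_sub]
  contDiff := by
    simp only [Fin.forall_fin_two]
    exact ⟨⟨contDiff_const.sub contDiff_id, contDiff_const⟩, contDiff_id.neg, contDiff_id⟩
  le_det {y} _ := by simp [mul_comm]
  denom_mem_Ioc {y t} ht hty hy := by
    rw [show moebiusDenom !![1 - y, 0; -y, y] t = y * (1 - t) by simp [moebiusDenom]; ring]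
    exact ⟨mul_pos (ht.trans hty) (sub_pos.2 (hty.trans hy)), by nlinarith⟩

lemma moebius_scale (q t : ℝ) : moebius !![q, 0; 0, 1] t = t * q := by
  simp [moebius, moebiusDenom, mul_comm]

lemma moebiusDenom_scale (q t : ℝ) : moebiusDenom !![q, 0; 0, 1] t = 1 := by
  simp [moebiusDenom]

variable {E : Type*} [NormedAddCommGroup E] [NormedSpace ℝ E] {U : Set E} {q : E → ℝ}

lemma IsMoebiusChart.isSmoothMatrixFamily {f : ℝ → ℝ → ℝ} {m : ℝ → Matrix (Fin 2) (Fin 2) ℝ}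
    (h : IsMoebiusChart f m) (hq : ContDiffOn ℝ ∞ q U) (hqU : MapsTo q U (Ioo 0 1)) :
    IsSmoothMatrixFamily (fun p => m (q p)) U where
  contDiffOn i j := (h.contDiff i j).comp_contDiffOn hq
  det_ne_zero _ hp := h.det_ne_zero (hqU hp)

lemma isSmoothMatrixFamily_scale (hq : ContDiffOn ℝ ∞ q U) (hqU : ∀ p ∈ U, q p ≠ 0) :
    IsSmoothMatrixFamily (fun p => !![q p, 0; 0, 1]) U where
  contDiffOn := by
    simp only [Fin.forall_fin_two]
    exact ⟨⟨hq, contDiffOn_const⟩, contDiffOn_const, contDiffOn_const⟩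
  det_ne_zero p hp := by simpa using hqU p hp

end MoebiusCharts

section AntisymmetricExtension

variable {R : ℝ × ℝ → ℝ}

/-- The antisymmetric function on the complement of the diagonal that agrees with `R` above it.
The value on the diagonal is irrelevant. -/
noncomputable def antisymmExtension (R : ℝ × ℝ → ℝ) (w : ℝ × ℝ) : ℝ :=
  if w.1 < w.2 then R w else -R w.swap

lemma antisymmExtension_of_lt {v w : ℝ} (h : v < w) : antisymmExtension R (v, w) = R (v, w) :=
  if_pos h

lemma antisymmExtension_of_gt {v w : ℝ} (h : w < v) : antisymmExtension R (v, w) = -R (w, v) :=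
  if_neg h.not_gt

lemma measurable_antisymmExtension (hR : Measurable R) : Measurable (antisymmExtension R) :=
  Measurable.ite (measurableSet_lt measurable_fst measurable_snd) hR
    (hR.comp measurable_swap).neg

lemma isBoundedUnder_antisymmExtension
    (hR : ∀ p ∈ P2, (𝓝 p).IsBoundedUnder (· ≤ ·) fun z => |R z|) {w : ℝ × ℝ}
    (hw : w ∈ (Ioo (0 : ℝ) 1).offDiag) :
    (𝓝 w).IsBoundedUnder (· ≤ ·) fun z => |antisymmExtension R z| := by
  obtain ⟨h₁, h₂, hne⟩ := hw
  rcases hne.lt_or_gt with hlt | hgt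
  · refine (hR w ⟨h₁.1, hlt, h₂.2⟩).mono_le ?_
    filter_upwards [(isOpen_lt continuous_fst continuous_snd).mem_nhds hlt] with z hz
    rw [antisymmExtension, if_pos hz]
  · have bdd := (continuous_swap.tendsto w).isBoundedUnder_comp (hR w.swap ⟨h₂.1, hgt, h₁.2⟩)
    refine bdd.mono_le ?_
    filter_upwards [(isOpen_lt continuous_snd continuous_fst).mem_nhds hgt] with z hz
    rw [antisymmExtension, if_neg (show ¬z.1 < z.2 from not_lt.2 (le_of_lt hz)), abs_neg]
    rfl

lemma isIncreasingChart_id : IsIncreasingChart (fun _ t => t) fun _ s => s where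
  mem_Ioo ht hty hy := ⟨ht, hty.trans hy⟩
  lt _ hvx _ _ := hvx
  left_inv _ _ _ := rfl
  differentiableAt _ _ := by fun_prop

lemma IsIncreasingChart.mem_offDiag {f g : ℝ → ℝ → ℝ} (hf : IsIncreasingChart f g) {v w q : ℝ}
    (hv : v ∈ Ioo 0 q) (hw : w ∈ Ioo 0 q) (hvw : v ≠ w) (hq : q < 1) :
    (f q v, f q w) ∈ (Ioo (0 : ℝ) 1).offDiag := by
  refine ⟨hf.mem_Ioo hv.1 hv.2 hq, hf.mem_Ioo hw.1 hw.2 hq, ?_⟩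
  rcases hvw.lt_or_gt with h | h
  · exact (hf.lt hv.1 h hw.2 hq).ne
  · exact (hf.lt hw.1 h hv.2 hq).ne'

/-- The four terms of the six-term equation at `(v, w, q)` besides `R (v, q)` and `R (w, q)`,
extended antisymmetrically to `v > w`. -/
noncomputable def fourTerm (R : ℝ × ℝ → ℝ) (v w q : ℝ) : ℝ :=
  antisymmExtension R (v, w) - antisymmExtension R (v / q, w / q)
    - antisymmExtension R ((1 - q) / (1 - v), (1 - q) / (1 - w))
    + antisymmExtension R (v * (1 - q) / (q * (1 - v)), w * (1 - q) / (q * (1 - w)))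

lemma fourTerm_of_lt {v w q : ℝ} (hv : 0 < v) (hvw : v < w) (hw : w < q) (hq : q < 1)
    (h6 : sixTerm R v w q = 0) : R (v, q) - R (w, q) = fourTerm R v w q := by
  rw [fourTerm, antisymmExtension_of_lt hvw,
    antisymmExtension_of_lt (isIncreasingChart_div.lt hv hvw hw hq),
    antisymmExtension_of_lt (isIncreasingChart_one_sub_div.lt hv hvw hw hq),
    antisymmExtension_of_lt (isIncreasingChart_mul_one_sub_div.lt hv hvw hw hq)]
  unfold sixTerm at h6
  linarith

lemma fourTerm_of_gt {v w q : ℝ} (hw : 0 < w) (hwv : w < v) (hv : v < q) (hq : q < 1)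
    (h6 : sixTerm R w v q = 0) : R (v, q) - R (w, q) = fourTerm R v w q := by
  rw [fourTerm, antisymmExtension_of_gt hwv,
    antisymmExtension_of_gt (isIncreasingChart_div.lt hw hwv hv hq),
    antisymmExtension_of_gt (isIncreasingChart_one_sub_div.lt hw hwv hv hq),
    antisymmExtension_of_gt (isIncreasingChart_mul_one_sub_div.lt hw hwv hv hq)]
  unfold sixTerm at h6
  linarith

variable {E : Type*} [NormedAddCommGroup E] [NormedSpace ℝ E]
  {A : E → Matrix (Fin 2) (Fin 2) ℝ} {U : Set E} {q : E → ℝ} {p₀ : E} {ν μ : ℝ → ℝ}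

lemma IsMoebiusChart.hasContDiffIntegralAt {f g : ℝ → ℝ → ℝ}
    {m : ℝ → Matrix (Fin 2) (Fin 2) ℝ} (hm : IsMoebiusChart f m) (hf : IsIncreasingChart f g)
    (hA : IsSmoothMatrixFamily A U) (hU : IsOpen U) (hq : ContDiffOn ℝ ∞ q U)
    (hqU : MapsTo q U (Ioo 0 1)) (hR : Measurable R)
    (hR_bdd : ∀ p ∈ P2, (𝓝 p).IsBoundedUnder (· ≤ ·) fun z => |R z|) (hp₀ : p₀ ∈ U)
    (hν : ContDiff ℝ ∞ ν) (hν_supp : HasCompactSupport ν) (hμ : ContDiff ℝ ∞ μ)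
    (hμ_supp : HasCompactSupport μ) (hμ_Ioo : tsupport μ ⊆ Ioo 0 1)
    (hAν : ∀ v ∈ tsupport ν, moebiusDenom (A p₀) v ≠ 0 ∧ moebius (A p₀) v ∈ Ioo 0 (q p₀) ∧
      moebius (A p₀) v / q p₀ ∉ tsupport μ) :
    HasContDiffIntegralAt volume (fun p (z : ℝ × ℝ) => ν z.1 * μ z.2 *
      antisymmExtension R (f (q p) (moebius (A p) z.1), f (q p) (z.2 * q p))) p₀ := by
  obtain ⟨hq_pos, hq_lt⟩ := hqU hp₀
  have scale_ne : ∀ p t, moebiusDenom !![q p, 0; 0, 1] t ≠ 0 := fun p t => by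
    rw [moebiusDenom_scale]
    exact one_ne_zero
  have scale_mem : ∀ t ∈ tsupport μ, t * q p₀ ∈ Ioo 0 (q p₀) := fun t ht =>
    ⟨mul_pos (hμ_Ioo ht).1 hq_pos, mul_lt_of_lt_one_left hq_pos (hμ_Ioo ht).2⟩
  have m_fam := hm.isSmoothMatrixFamily hq hqU
  have smooth := hasContDiffIntegralAt_comp_moebius (m_fam.mul hA)
    (m_fam.mul (isSmoothMatrixFamily_scale hq fun p hp => (hqU hp).1.ne')) hU hν hν_supp hμ
    hμ_supp (measurable_antisymmExtension hR) hp₀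
    (fun v hv => by
      obtain ⟨denom_ne, mem, -⟩ := hAν v hv
      rw [moebiusDenom_mul denom_ne]
      exact mul_ne_zero (hm.denom_ne_zero mem.1 mem.2 hq_lt) denom_ne)
    (fun t ht => by
      rw [moebiusDenom_mul (scale_ne p₀ t), moebius_scale]
      exact mul_ne_zero (hm.denom_ne_zero (scale_mem t ht).1 (scale_mem t ht).2 hq_lt)
        (scale_ne p₀ t))
    (fun v hv t ht => by
      obtain ⟨denom_ne, mem, div_notMem⟩ := hAν v hv
      rw [moebius_mul denom_ne, moebius_mul (scale_ne p₀ t), moebius_scale, ← hm.eq_moebius,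
        ← hm.eq_moebius]
      refine isBoundedUnder_antisymmExtension hR_bdd
        (hf.mem_offDiag mem (scale_mem t ht) (fun h => div_notMem ?_) hq_lt)
      rwa [h, mul_div_cancel_right₀ _ hq_pos.ne'])
  have denom_ne : ∀ᶠ p in 𝓝 p₀, ∀ v ∈ tsupport ν, moebiusDenom (A p) v ≠ 0 :=
    hν_supp.isCompact.eventually_forall_of_forall_eventually fun v hv =>
      (hA.contDiffAt_moebiusDenom (hU.mem_nhds hp₀) v).continuousAt.eventually_ne (hAν v hv).1
  refine smooth.congr ?_
  filter_upwards [denom_ne] with p hp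
  ext z
  by_cases hz : z.1 ∈ tsupport ν
  · rw [moebius_mul (hp z.1 hz), moebius_mul (scale_ne p z.2), moebius_scale, hm.eq_moebius,
      hm.eq_moebius]
  · simp [image_eq_zero_of_notMem_tsupport hz]

lemma hasContDiffIntegralAt_fourTerm (hA : IsSmoothMatrixFamily A U) (hU : IsOpen U)
    (hq : ContDiffOn ℝ ∞ q U) (hqU : MapsTo q U (Ioo 0 1)) (hR : Measurable R)
    (hR_bdd : ∀ p ∈ P2, (𝓝 p).IsBoundedUnder (· ≤ ·) fun z => |R z|) (hp₀ : p₀ ∈ U)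
    (hν : ContDiff ℝ ∞ ν) (hν_supp : HasCompactSupport ν) (hμ : ContDiff ℝ ∞ μ)
    (hμ_supp : HasCompactSupport μ) (hμ_Ioo : tsupport μ ⊆ Ioo 0 1)
    (hAν : ∀ v ∈ tsupport ν, moebiusDenom (A p₀) v ≠ 0 ∧ moebius (A p₀) v ∈ Ioo 0 (q p₀) ∧
      moebius (A p₀) v / q p₀ ∉ tsupport μ) :
    HasContDiffIntegralAt volume (fun p (z : ℝ × ℝ) => ν z.1 * μ z.2 *
      fourTerm R (moebius (A p) z.1) (z.2 * q p) (q p)) p₀ := by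
  have smooth {f g : ℝ → ℝ → ℝ} {m : ℝ → Matrix (Fin 2) (Fin 2) ℝ} (hm : IsMoebiusChart f m)
      (hf : IsIncreasingChart f g) := hm.hasContDiffIntegralAt hf hA hU hq hqU hR hR_bdd hp₀ hν
    hν_supp hμ hμ_supp hμ_Ioo hAν
  simp only [fourTerm, mul_add, mul_sub]
  simpa only [mul_sub] using (((smooth isMoebiusChart_id isIncreasingChart_id).sub
    (smooth isMoebiusChart_div isIncreasingChart_div)).sub
    (smooth isMoebiusChart_one_sub_div isIncreasingChart_one_sub_div)).add
    (smooth isMoebiusChart_mul_one_sub_div isIncreasingChart_mul_one_sub_div)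

end AntisymmetricExtension

section FourTermAlmostEverywhere

variable {R : ℝ × ℝ → ℝ}

lemma ae_fst_ne_snd_fst : ∀ᵐ p : ℝ × ℝ × ℝ, p.1 ≠ p.2.1 := by
  refine quasiMeasurePreserving_fst_fst_snd.ae (p := fun w => w.1 ≠ w.2) ?_
  refine (Measure.ae_prod_iff_ae_ae
    (measurableSet_eq_fun measurable_fst measurable_snd).compl).2 (.of_forall fun x => ?_)
  exact (Measure.ae_ne volume x).mono fun _ h => h.symm

lemma SixTermAE.ae_sub_eq_fourTerm (h6 : SixTermAE R) :
    ∀ᵐ p : ℝ × ℝ × ℝ, p.1 ∈ Ioo 0 p.2.2 ∧ p.2.1 ∈ Ioo 0 p.2.2 ∧ p.2.2 < 1 →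
      R (p.1, p.2.2) - R (p.2.1, p.2.2) = fourTerm R p.1 p.2.1 p.2.2 := by
  have six := (ae_restrict_iff' measurableSet_P3).1 (sixTermAE_iff_sixTerm.1 h6)
  have swap_preserving : MeasurePreserving (fun p : ℝ × ℝ × ℝ => (p.2.1, p.1, p.2.2)) volume
      volume :=
    (volume_preserving_prodAssoc (α₁ := ℝ) (β₁ := ℝ) (γ₁ := ℝ)).comp
      ((Measure.measurePreserving_swap.prod (MeasurePreserving.id volume)).comp
        (volume_preserving_prodAssoc (α₁ := ℝ) (β₁ := ℝ) (γ₁ := ℝ)).symm)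
  filter_upwards [six, swap_preserving.quasiMeasurePreserving.ae six, ae_fst_ne_snd_fst]
    with ⟨v, w, q⟩ h_lt h_gt hne ⟨hv, hw, hq⟩
  rcases hne.lt_or_gt with hvw | hwv
  · exact fourTerm_of_lt hv.1 hvw hw.2 hq (h_lt ⟨hv.1, hvw, hw.2, hq⟩)
  · exact fourTerm_of_gt hw.1 hwv hv.2 hq (h_gt ⟨hw.1, hwv, hv.2, hq⟩)

lemma SixTermAE.ae_ae_sub_eq_fourTerm (h6 : SixTermAE R) :
    ∀ᵐ t : ℝ, t ∈ Ioo (0 : ℝ) 1 → ∀ᵐ w ∂(volume.restrict P2),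
      R w - R (t * w.2, w.2) = fourTerm R w.1 (t * w.2) w.2 := by
  have meas : MeasurableSet (Ioo (0 : ℝ) 1 ×ˢ P2) := measurableSet_Ioo.prod measurableSet_P2
  have pulled := ae_restrict_comp_of_leftInvOn volume
    (F := fun p : ℝ × ℝ × ℝ => (p.2.1, p.1 * p.2.2, p.2.2))
    (G := fun q => (q.2.1 / q.2.2, q.1, q.2.2)) meas
    (V := {p | p.1 ∈ Ioo 0 p.2.2 ∧ p.2.1 ∈ Ioo 0 p.2.2 ∧ p.2.2 < 1}) (fun q hq => by
      have : q.2.2 ≠ 0 := (hq.1.1.trans hq.1.2).ne'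
      exact DifferentiableAt.differentiableWithinAt (by fun_prop (disch := assumption)))
    (fun p hp => by
      have hq : 0 < p.2.2 := hp.2.1.trans hp.2.2.1
      exact ⟨⟨hp.2.1, hp.2.2.1⟩, ⟨mul_pos hp.1.1 hq, mul_lt_of_lt_one_left hq hp.1.2⟩, hp.2.2.2⟩)
    (fun p hp => by
      have : p.2.2 ≠ 0 := (hp.2.1.trans hp.2.2.1).ne'
      simp [this]) h6.ae_sub_eq_fourTerm
  rw [ae_restrict_iff' meas] at pulled
  filter_upwards [Measure.ae_ae_of_ae_prod pulled] with t ht htI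
  rw [ae_restrict_iff' measurableSet_P2]
  filter_upwards [ht] with w hw hwP using hw ⟨htI, hwP⟩

/-- Minus the sum of the five terms of `sixTerm S v x y` that involve `v`. -/
noncomputable def coneTerm (S : ℝ × ℝ → ℝ) (v x y : ℝ) : ℝ :=
  -S (v, x) + S (v, y) + S (v / y, x / y) + S ((1 - y) / (1 - v), (1 - y) / (1 - x))
    - S (v * (1 - y) / (y * (1 - v)), x * (1 - y) / (y * (1 - x)))

lemma coneTerm_eq_sub_sixTerm (S : ℝ × ℝ → ℝ) (v x y : ℝ) :
    coneTerm S v x y = S (x, y) - sixTerm S v x y := by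
  unfold coneTerm sixTerm; ring

lemma coneTerm_sub_snd (c : ℝ → ℝ) {v x y : ℝ} (h6 : sixTerm R v x y = 0) :
    coneTerm (fun p => R p - c p.2) v x y = R (x, y) + fiveTerm c (x, y) := by
  unfold sixTerm at h6
  unfold coneTerm fiveTerm
  linarith

lemma SixTermAE.ae_coneTerm_sub_snd (h6 : SixTermAE R) {S : ℝ × ℝ → ℝ} {c : ℝ → ℝ}
    (hS : ∀ᵐ w ∂(volume.restrict P2), R w - c w.2 = S w) :
    ∀ᵐ p ∂(volume.restrict P3),
      R p.2 + fiveTerm c p.2 = coneTerm S p.1 p.2.1 p.2.2 := by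
  have at_xy : ∀ᵐ p ∂(volume.restrict P3), R p.2 - c p.2.2 = S p.2 :=
    (Measure.quasiMeasurePreserving_snd.restrict (t := P2)
      fun _ hp => ⟨hp.1.trans hp.2.1, hp.2.2⟩).ae hS
  filter_upwards [sixTermAE_iff_sixTerm.1 h6, ae_sixTerm_congr hS, at_xy] with p h_six h_congr h_xy
  rw [← Prod.mk.eta (p := p.2), ← coneTerm_sub_snd c h_six, coneTerm_eq_sub_sixTerm,
    coneTerm_eq_sub_sixTerm, h_congr, h_xy]

lemma measurable_fourTerm (hR : Measurable R) :
    Measurable fun p : ℝ × ℝ × ℝ => fourTerm R p.1 p.2.1 p.2.2 := by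
  have := measurable_antisymmExtension hR
  unfold fourTerm
  fun_prop

lemma SixTermAE.ae_ae_add_fiveTerm_eq_coneTerm (h6 : SixTermAE R) (hR : Measurable R) :
    ∀ᵐ p : ℝ × ℝ, ∀ᵐ z : ℝ × ℝ, z.2 ∈ Ioo (0 : ℝ) 1 → (z.1, p) ∈ P3 →
      R p + fiveTerm (fun q => R (z.2 * q, q)) p =
        coneTerm (fun w => fourTerm R w.1 (z.2 * w.2) w.2) z.1 p.1 p.2 := by
  have four_meas := measurable_fourTerm hR
  have meas : MeasurableSet {u : ℝ × ℝ × ℝ × ℝ | u.1 ∈ Ioo (0 : ℝ) 1 → u.2 ∈ P3 →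
      R u.2.2 + fiveTerm (fun q => R (u.1 * q, q)) u.2.2 =
        coneTerm (fun w => fourTerm R w.1 (u.1 * w.2) w.2) u.2.1 u.2.2.1 u.2.2.2} := by
    refine (measurable_fst measurableSet_Ioo).imp ((measurable_snd measurableSet_P3).imp
      (measurableSet_eq_fun ?_ ?_))
    · unfold fiveTerm
      fun_prop
    · unfold coneTerm
      fun_prop
  have joint := (Measure.ae_prod_iff_ae_ae meas).2 <| by
    filter_upwards [h6.ae_ae_sub_eq_fourTerm] with t ht
    by_cases htI : t ∈ Ioo (0 : ℝ) 1
    · filter_upwards [(ae_restrict_iff' measurableSet_P3).1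
        (h6.ae_coneTerm_sub_snd (c := fun q => R (t * q, q)) (ht htI))] with p hp _ using hp
    · exact .of_forall fun p h => absurd h htI
  have perm : MeasurePreserving (fun w : (ℝ × ℝ) × (ℝ × ℝ) => (w.2.2, w.2.1, w.1)) volume volume :=
    (volume_preserving_prodAssoc (α₁ := ℝ) (β₁ := ℝ) (γ₁ := ℝ × ℝ)).comp
      ((Measure.measurePreserving_swap.prod (MeasurePreserving.id volume)).comp
        Measure.measurePreserving_swap)
  exact Measure.ae_ae_of_ae_prod (perm.quasiMeasurePreserving.ae joint)

end FourTermAlmostEverywhere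

section Bump

lemma exists_contDiff_tsupport_subset_Ioo {a b : ℝ} (hab : a < b) :
    ∃ ν : ℝ → ℝ, ContDiff ℝ ∞ ν ∧ HasCompactSupport ν ∧ tsupport ν ⊆ Ioo a b ∧
      ∫ v, ν v = 1 := by
  let bump : ContDiffBump ((a + b) / 2) := ⟨(b - a) / 8, (b - a) / 4, by linarith, by linarith⟩
  refine ⟨bump.normed volume, bump.contDiff_normed, bump.hasCompactSupport_normed, ?_,
    bump.integral_normed⟩
  rw [bump.tsupport_normed_eq, Real.closedBall_eq_Icc]
  exact Icc_subset_Ioo (by simp only [bump]; linarith) (by simp only [bump]; linarith)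

lemma eventually_ratios_notMem {K : Set ℝ} (hK : IsClosed K) {x y a : ℝ} (hx : x ≠ 0) (ha : a ≠ 1)
    (h_div_x : a / x ∉ K) (h_div_y : a / y ∉ K) (h_phi : (1 - x) / (1 - a) ∉ K)
    (h_psi : a * (1 - x) / (x * (1 - a)) ∉ K) :
    ∀ᶠ v in 𝓝 a, v / x ∉ K ∧ v / y ∉ K ∧ (1 - x) / (1 - v) ∉ K ∧
      v * (1 - x) / (x * (1 - v)) ∉ K := by
  have one_sub : 1 - a ≠ 0 := sub_ne_zero.2 ha.symm
  have mul_one_sub : x * (1 - a) ≠ 0 := mul_ne_zero hx one_sub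
  have near {r : ℝ → ℝ} (hr : ContinuousAt r a) (hra : r a ∉ K) : ∀ᶠ v in 𝓝 a, r v ∉ K :=
    hr.eventually (hK.isOpen_compl.mem_nhds hra)
  exact (near (by fun_prop) h_div_x).and ((near (by fun_prop) h_div_y).and
    ((near (by fun_prop (disch := assumption)) h_phi).and
      (near (by fun_prop (disch := assumption)) h_psi)))

lemma exists_Icc_ratios_notMem {K : Set ℝ} (hK : IsClosed K) (h0 : (0 : ℝ) ∉ K) (h1 : (1 : ℝ) ∉ K)
    {x y : ℝ} (hx : 0 < x) (hx1 : x < 1) (hxy : 1 - x ∉ K ∨ x / y ∉ K) :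
    ∃ a b, a < b ∧ Icc a b ⊆ {v | v ∈ Ioo 0 x ∧ v / x ∉ K ∧ v / y ∉ K ∧
      (1 - x) / (1 - v) ∉ K ∧ v * (1 - x) / (x * (1 - v)) ∉ K} := by
  have one_sub : 1 - x ≠ 0 := by linarith
  rcases hxy with h | h
  · have near := eventually_ratios_notMem hK (x := x) (y := y) (a := 0) hx.ne' zero_ne_one
      (by simpa) (by simpa) (by simpa) (by simpa)
    obtain ⟨b, hb, sub⟩ := mem_nhdsGT_iff_exists_Ioc_subset.1
      (Filter.inter_mem (Ioo_mem_nhdsGT hx) (mem_nhdsWithin_of_mem_nhds near))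
    exact ⟨b / 2, b, half_lt_self hb, fun v hv => sub ⟨(half_pos hb).trans_le hv.1, hv.2⟩⟩
  · have near := eventually_ratios_notMem hK (y := y) hx.ne' hx1.ne
      (by simpa [hx.ne']) h (by simpa [one_sub]) (by simpa [hx.ne', one_sub])
    obtain ⟨a, ha, sub⟩ := mem_nhdsLT_iff_exists_Ico_subset.1
      (Filter.inter_mem (Ioo_mem_nhdsLT hx) (mem_nhdsWithin_of_mem_nhds near))
    have ha : a < x := ha
    exact ⟨a, (a + x) / 2, by linarith, fun v hv => sub ⟨hv.1, hv.2.trans_lt (by linarith)⟩⟩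

end Bump

section Regularisation

variable {R : ℝ × ℝ → ℝ} {ν μ : ℝ → ℝ} {p₀ : ℝ × ℝ}

lemma IsMoebiusChart.contDiffOn_P2 {f : ℝ → ℝ → ℝ} {m : ℝ → Matrix (Fin 2) (Fin 2) ℝ}
    (hm : IsMoebiusChart f m) : ContDiffOn ℝ ∞ (fun p : ℝ × ℝ => f p.2 p.1) P2 := by
  have entry (i j) : ContDiff ℝ ∞ fun p : ℝ × ℝ => m p.2 i j := (hm.contDiff i j).comp contDiff_snd
  simp only [hm.eq_moebius]
  exact (((entry 0 0).mul contDiff_fst).add (entry 0 1)).contDiffOn.div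
    (((entry 1 0).mul contDiff_fst).add (entry 1 1)).contDiffOn
    fun p hp => hm.denom_ne_zero hp.1 hp.2.1 hp.2.2

lemma IsMoebiusChart.hasContDiffIntegralAt_fourTerm {f g : ℝ → ℝ → ℝ}
    {m : ℝ → Matrix (Fin 2) (Fin 2) ℝ} (hm : IsMoebiusChart f m) (hf : IsIncreasingChart f g)
    (hR : Measurable R) (hR_bdd : ∀ p ∈ P2, (𝓝 p).IsBoundedUnder (· ≤ ·) fun z => |R z|)
    (hp₀ : p₀ ∈ P2) (hν : ContDiff ℝ ∞ ν) (hν_supp : HasCompactSupport ν) (hμ : ContDiff ℝ ∞ μ)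
    (hμ_supp : HasCompactSupport μ) (hμ_Ioo : tsupport μ ⊆ Ioo 0 1)
    (hν_Ioo : tsupport ν ⊆ Ioo 0 p₀.1)
    (h_ratio : ∀ v ∈ tsupport ν, f p₀.2 v / f p₀.2 p₀.1 ∉ tsupport μ) :
    HasContDiffIntegralAt volume (fun p (z : ℝ × ℝ) => ν z.1 * μ z.2 *
      fourTerm R (f p.2 z.1) (z.2 * f p.2 p.1) (f p.2 p.1)) p₀ := by
  have snd_mem : MapsTo Prod.snd P2 (Ioo (0 : ℝ) 1) := fun p hp => ⟨hp.1.trans hp.2.1, hp.2.2⟩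
  have smooth := _root_.hasContDiffIntegralAt_fourTerm
    (hm.isSmoothMatrixFamily contDiffOn_snd snd_mem) isOpen_P2 hm.contDiffOn_P2
    (fun p hp => hf.mem_Ioo_of_mem_P2 hp) hR hR_bdd hp₀ hν hν_supp hμ hμ_supp hμ_Ioo
    fun v hv => by
      obtain ⟨hv_pos, hv_lt⟩ := hν_Ioo hv
      rw [← hm.eq_moebius]
      exact ⟨hm.denom_ne_zero hv_pos (hv_lt.trans hp₀.2.1) hp₀.2.2,
        ⟨(hf.mem_Ioo hv_pos (hv_lt.trans hp₀.2.1) hp₀.2.2).1,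
          hf.lt hv_pos hv_lt hp₀.2.1 hp₀.2.2⟩, h_ratio v hv⟩
  simpa only [← hm.eq_moebius] using smooth

lemma moebius_one (t : ℝ) : moebius 1 t = t :=
  (isMoebiusChart_id.eq_moebius 0 t).symm

lemma hasContDiffIntegralAt_coneTerm (hR : Measurable R)
    (hR_bdd : ∀ p ∈ P2, (𝓝 p).IsBoundedUnder (· ≤ ·) fun z => |R z|) (hp₀ : p₀ ∈ P2)
    (hν : ContDiff ℝ ∞ ν) (hν_supp : HasCompactSupport ν) (hμ : ContDiff ℝ ∞ μ)
    (hμ_supp : HasCompactSupport μ) (hμ_Ioo : tsupport μ ⊆ Ioo 0 1)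
    (h_ratios : tsupport ν ⊆ {v | v ∈ Ioo 0 p₀.1 ∧ v / p₀.1 ∉ tsupport μ ∧
      v / p₀.2 ∉ tsupport μ ∧ (1 - p₀.1) / (1 - v) ∉ tsupport μ ∧
      v * (1 - p₀.1) / (p₀.1 * (1 - v)) ∉ tsupport μ}) :
    HasContDiffIntegralAt volume (fun p (z : ℝ × ℝ) => ν z.1 * μ z.2 *
      coneTerm (fun w => fourTerm R w.1 (z.2 * w.2) w.2) z.1 p.1 p.2) p₀ := by
  obtain ⟨hx, hxy, hy⟩ := hp₀
  have x_ne : p₀.1 ≠ 0 := hx.ne'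
  have y_ne : p₀.2 ≠ 0 := (hx.trans hxy).ne'
  have one_sub_y : 1 - p₀.2 ≠ 0 := by linarith
  have one_sub_v : ∀ v ∈ tsupport ν, 1 - v ≠ 0 := fun v hv => by linarith [(h_ratios hv).1.2]
  have smooth {f g : ℝ → ℝ → ℝ} {m : ℝ → Matrix (Fin 2) (Fin 2) ℝ} (hm : IsMoebiusChart f m)
      (hf : IsIncreasingChart f g) :=
    hm.hasContDiffIntegralAt_fourTerm hf hR hR_bdd ⟨hx, hxy, hy⟩ hν hν_supp hμ hμ_supp hμ_Ioo
      fun v hv => (h_ratios hv).1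
  have at_vx := smooth isMoebiusChart_id isIncreasingChart_id fun v hv => (h_ratios hv).2.1
  have at_vy := hasContDiffIntegralAt_fourTerm (A := fun _ => 1) (q := Prod.snd)
    (isMoebiusChart_id.isSmoothMatrixFamily contDiffOn_snd
      fun p hp => ⟨hp.1.trans hp.2.1, hp.2.2⟩) isOpen_P2 contDiffOn_snd
    (fun p hp => ⟨hp.1.trans hp.2.1, hp.2.2⟩) hR hR_bdd ⟨hx, hxy, hy⟩ hν hν_supp hμ hμ_supp hμ_Ioo
    fun v hv => by
      obtain ⟨hv_mem, -, h_div, -, -⟩ := h_ratios hv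
      simpa [moebius, moebiusDenom] using ⟨⟨hv_mem.1, hv_mem.2.trans hxy⟩, h_div⟩
  have at_div := smooth isMoebiusChart_div isIncreasingChart_div fun v hv => by
    rw [div_div_div_cancel_right₀ y_ne]
    exact (h_ratios hv).2.1
  have at_phi := smooth isMoebiusChart_one_sub_div isIncreasingChart_one_sub_div fun v hv => by
    rw [div_div_div_cancel_left' _ _ one_sub_y]
    exact (h_ratios hv).2.2.2.1
  have at_psi := smooth isMoebiusChart_mul_one_sub_div isIncreasingChart_mul_one_sub_div
    fun v hv => by
      have := one_sub_v v hv
      convert (h_ratios hv).2.2.2.2 using 2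
      field_simp
  simp only [moebius_one] at at_vy
  convert (((at_vx.neg.add at_vy).add at_div).add at_phi).sub at_psi using 3
  unfold coneTerm
  ring

/-- The average of `R` along the segment `{(t * q, q) : 0 < t < 1}` with weight `μ`. -/
noncomputable def sliceAverage (μ : ℝ → ℝ) (R : ℝ × ℝ → ℝ) (q : ℝ) : ℝ :=
  ∫ t, μ t * R (t * q, q)

lemma measurable_sliceAverage (hμ : Measurable μ) (hR : Measurable R) :
    Measurable (sliceAverage μ R) := by
  have integrand : Measurable fun z : ℝ × ℝ => μ z.2 * R (z.2 * z.1, z.1) := by fun_prop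
  exact integrand.stronglyMeasurable.integral_prod_right'.measurable

lemma integrable_mul_slice (hR : Measurable R)
    (hR_bdd : ∀ p ∈ P2, (𝓝 p).IsBoundedUnder (· ≤ ·) fun z => |R z|) (hμ : Continuous μ)
    (hμ_supp : HasCompactSupport μ) (hμ_Ioo : tsupport μ ⊆ Ioo 0 1) {q : ℝ}
    (hq : q ∈ Ioo (0 : ℝ) 1) : Integrable fun t => μ t * R (t * q, q) := by
  obtain ⟨B, hB⟩ := exists_eventually_forall_le_of_isCompact hμ_supp.isCompact (x₀ := q)
    (h := fun z => |R (z.2 * z.1, z.1)|) fun t ht =>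
    (Continuous.tendsto (f := fun z : ℝ × ℝ => (z.2 * z.1, z.1)) (by fun_prop)
      (q, t)).isBoundedUnder_comp (hR_bdd _ ⟨mul_pos (hμ_Ioo ht).1 hq.1,
        mul_lt_of_lt_one_left hq.1 (hμ_Ioo ht).2, hq.2⟩)
  refine ((hμ.integrable_of_hasCompactSupport hμ_supp).norm.mul_const B).mono'
    (hμ.measurable.mul (by fun_prop)).aestronglyMeasurable (.of_forall fun t => ?_)
  by_cases ht : t ∈ tsupport μ
  · rw [norm_mul]
    exact mul_le_mul_of_nonneg_left (hB.self_of_nhds t ht) (norm_nonneg _)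
  · simp [image_eq_zero_of_notMem_tsupport ht]

lemma integral_mul_add_fiveTerm (hR : Measurable R)
    (hR_bdd : ∀ p ∈ P2, (𝓝 p).IsBoundedUnder (· ≤ ·) fun z => |R z|) (hμ : Continuous μ)
    (hμ_supp : HasCompactSupport μ) (hμ_Ioo : tsupport μ ⊆ Ioo 0 1) (hμ_one : ∫ t, μ t = 1)
    {p : ℝ × ℝ} (hp : p ∈ P2) :
    ∫ t, μ t * (R p + fiveTerm (fun q => R (t * q, q)) p) =
      R p + fiveTerm (sliceAverage μ R) p := by
  have slice {q : ℝ} (hq : q ∈ Ioo (0 : ℝ) 1) :=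
    integrable_mul_slice hR hR_bdd hμ hμ_supp hμ_Ioo hq
  have at_x := slice ⟨hp.1, hp.2.1.trans hp.2.2⟩
  have at_y := slice ⟨hp.1.trans hp.2.1, hp.2.2⟩
  have at_div := slice (div_mem_Ioo_of_mem_P2 hp)
  have at_phi := slice (one_sub_div_mem_Ioo_of_mem_P2 hp)
  have at_psi := slice (mul_one_sub_div_mem_Ioo_of_mem_P2 hp)
  have const := (hμ.integrable_of_hasCompactSupport hμ_supp (μ := volume)).mul_const (R p)
  have expand (t : ℝ) : μ t * (R p + fiveTerm (fun q => R (t * q, q)) p) = μ t * R p +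
      fiveTerm (fun q => μ t * R (t * q, q)) p := by
    unfold fiveTerm
    ring
  simp_rw [expand, fiveTerm]
  rw [integral_add const (by fun_prop), integral_add (by fun_prop) at_psi,
    integral_sub (by fun_prop) at_phi, integral_sub (by fun_prop) at_div,
    integral_sub at_x at_y, integral_mul_const, hμ_one, one_mul]
  rfl

lemma SixTermAE.ae_add_fiveTerm_sliceAverage_eq (h6 : SixTermAE R) (hR : Measurable R)
    (hR_bdd : ∀ p ∈ P2, (𝓝 p).IsBoundedUnder (· ≤ ·) fun z => |R z|) (hμ : Continuous μ)
    (hμ_supp : HasCompactSupport μ) (hμ_Ioo : tsupport μ ⊆ Ioo 0 1) (hμ_one : ∫ t, μ t = 1)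
    (hν_one : ∫ v, ν v = 1) {U : Set (ℝ × ℝ)} (hU : ∀ p ∈ U, p ∈ P2 ∧ tsupport ν ⊆ Ioo 0 p.1) :
    ∀ᵐ p, p ∈ U → R p + fiveTerm (sliceAverage μ R) p = ∫ z : ℝ × ℝ, ν z.1 * μ z.2 *
      coneTerm (fun w => fourTerm R w.1 (z.2 * w.2) w.2) z.1 p.1 p.2 := by
  filter_upwards [h6.ae_ae_add_fiveTerm_eq_coneTerm hR] with p hp hpU
  obtain ⟨hpP, hνp⟩ := hU p hpU
  calc R p + fiveTerm (sliceAverage μ R) p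
      = (∫ v, ν v) * ∫ t, μ t * (R p + fiveTerm (fun q => R (t * q, q)) p) := by
        rw [integral_mul_add_fiveTerm hR hR_bdd hμ hμ_supp hμ_Ioo hμ_one hpP, hν_one, one_mul]
    _ = ∫ z : ℝ × ℝ, ν z.1 * (μ z.2 * (R p + fiveTerm (fun q => R (z.2 * q, q)) p)) :=
        (integral_prod_mul ν _).symm
    _ = _ := integral_congr_ae ?_
  filter_upwards [hp] with z hz
  by_cases hzν : z.1 ∈ tsupport ν
  · by_cases hzμ : z.2 ∈ tsupport μ
    · rw [hz (hμ_Ioo hzμ) ⟨(hνp hzν).1, (hνp hzν).2, hpP.2⟩, mul_assoc]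
    · simp [image_eq_zero_of_notMem_tsupport hzμ]
  · simp [image_eq_zero_of_notMem_tsupport hzν]

lemma SixTermAE.exists_contDiffAt_ae_eq (h6 : SixTermAE R) (hR : Measurable R)
    (hR_bdd : ∀ p ∈ P2, (𝓝 p).IsBoundedUnder (· ≤ ·) fun z => |R z|) (hμ : ContDiff ℝ ∞ μ)
    (hμ_supp : HasCompactSupport μ) (hμ_Ioo : tsupport μ ⊆ Ioo (1 / 4) (1 / 3))
    (hμ_one : ∫ t, μ t = 1) (hp₀ : p₀ ∈ P2) :
    ∃ H, ContDiffAt ℝ 2 H p₀ ∧ ∃ U ∈ 𝓝 p₀,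
      ∀ᵐ p, p ∈ U → R p + fiveTerm (sliceAverage μ R) p = H p := by
  have hμ_Ioo01 : tsupport μ ⊆ Ioo 0 1 :=
    hμ_Ioo.trans (Ioo_subset_Ioo (by norm_num) (by norm_num))
  have notMem {s : ℝ} (hs : s ≤ 1 / 4 ∨ 1 / 3 ≤ s) : s ∉ tsupport μ := fun h =>
    hs.elim (not_le.2 (hμ_Ioo h).1) (not_le.2 (hμ_Ioo h).2)
  have dichotomy : 1 - p₀.1 ∉ tsupport μ ∨ p₀.1 / p₀.2 ∉ tsupport μ := by
    by_cases h : 1 / 3 ≤ p₀.1 / p₀.2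
    · exact .inr (notMem (.inr h))
    · have lt_div : p₀.1 < p₀.1 / p₀.2 :=
        (lt_div_iff₀ (hp₀.1.trans hp₀.2.1)).2 (mul_lt_of_lt_one_right hp₀.1 hp₀.2.2)
      exact .inl (notMem (.inr (by linarith)))
  obtain ⟨a, b, hab, h_ratios⟩ := exists_Icc_ratios_notMem (isClosed_tsupport μ)
    (notMem (.inl (by norm_num))) (notMem (.inr (by norm_num))) hp₀.1 (hp₀.2.1.trans hp₀.2.2)
    dichotomy
  obtain ⟨ν, hν, hν_supp, hν_Ioo, hν_one⟩ := exists_contDiff_tsupport_subset_Ioo hab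
  have smooth := hasContDiffIntegralAt_coneTerm hR hR_bdd hp₀ hν hν_supp hμ hμ_supp hμ_Ioo01
    ((hν_Ioo.trans Ioo_subset_Icc_self).trans h_ratios)
  have b_lt : b < p₀.1 := (h_ratios (right_mem_Icc.2 hab.le)).1.2
  have a_pos : 0 < a := (h_ratios (left_mem_Icc.2 hab.le)).1.1
  refine ⟨_, smooth.2, P2 ∩ {p | b < p.1}, Filter.inter_mem (isOpen_P2.mem_nhds hp₀)
    ((isOpen_lt continuous_const continuous_fst).mem_nhds b_lt), ?_⟩
  exact h6.ae_add_fiveTerm_sliceAverage_eq hR hR_bdd hμ.continuous hμ_supp hμ_Ioo01 hμ_one hν_one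
    fun p hp => ⟨hp.1, hν_Ioo.trans (Ioo_subset_Ioo a_pos.le (le_of_lt hp.2))⟩

end Regularisation

section Patching

lemma exists_contDiffOn_ae_eq_of_locally {E F : Type*} [NormedAddCommGroup E] [NormedSpace ℝ E]
    [SecondCountableTopology E] [MeasurableSpace E] [OpensMeasurableSpace E]
    [NormedAddCommGroup F] [NormedSpace ℝ F] {μ : Measure E} [μ.IsOpenPosMeasure] {n : ℕ}
    {f : E → F} {s : Set E}
    (h : ∀ p₀ ∈ s, ∃ H, ContDiffAt ℝ n H p₀ ∧ ∃ U ∈ 𝓝 p₀, ∀ᵐ p ∂μ, p ∈ U → f p = H p) :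
    ∃ S, ContDiffOn ℝ n S s ∧ ∀ᵐ p ∂μ, p ∈ s → f p = S p := by
  choose! H hH U hU hUH using h
  have glue : ∀ p₀ ∈ s, ∀ᶠ p in 𝓝 p₀, p ∈ s → H p p = H p₀ p := by
    intro p₀ hp₀
    filter_upwards [(hH p₀ hp₀).eventually (by simp), eventually_mem_nhds_iff.2 (hU p₀ hp₀)]
      with p smooth_p₀ mem_U hp
    obtain ⟨V, hV_sub, hV_open, hpV⟩ := mem_nhds_iff.1 (Filter.inter_mem
      (Filter.inter_mem mem_U (hU p hp)) (Filter.inter_mem (smooth_p₀.eventually (by simp))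
        ((hH p hp).eventually (by simp))))
    have smooth_on_V : ∀ z ∈ V, ContDiffAt ℝ n (H p₀) z ∧ ContDiffAt ℝ n (H p) z :=
      fun z hz => (hV_sub hz).2
    refine Measure.eqOn_open_of_ae_eq (μ := μ) ?_ hV_open
      (fun z hz => (smooth_on_V z hz).2.continuousAt.continuousWithinAt)
      (fun z hz => (smooth_on_V z hz).1.continuousAt.continuousWithinAt) hpV
    rw [Filter.EventuallyEq, ae_restrict_iff' hV_open.measurableSet]
    filter_upwards [hUH p₀ hp₀, hUH p hp] with z hz₀ hz hzV
    rw [← hz₀ (hV_sub hzV).1.1, hz (hV_sub hzV).1.2]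
  refine ⟨fun p => H p p, fun p₀ hp₀ => ?_, ?_⟩
  · refine (hH p₀ hp₀).contDiffWithinAt.congr_of_eventuallyEq ?_ rfl
    filter_upwards [mem_nhdsWithin_of_mem_nhds (glue p₀ hp₀), self_mem_nhdsWithin] with p hp hps
      using hp hps
  · refine measure_null_of_locally_null _ fun p₀ hp₀ => ?_
    have hp₀s : p₀ ∈ s := (Classical.not_imp.1 hp₀).1
    refine ⟨_, Filter.inter_mem (mem_nhdsWithin_of_mem_nhds (Filter.inter_mem (hU p₀ hp₀s)
      (glue p₀ hp₀s))) self_mem_nhdsWithin, measure_mono_null ?_ (hUH p₀ hp₀s)⟩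
    rintro p ⟨⟨hpU, hp_glue⟩, hp_ne⟩ hpH
    exact hp_ne fun hps => (hpH hpU).trans (hp_glue hps).symm

lemma continuousOn_sixTerm {S : ℝ × ℝ → ℝ} (hS : ContinuousOn S P2) :
    ContinuousOn (fun p : ℝ × ℝ × ℝ => sixTerm S p.1 p.2.1 p.2.2) P3 := by
  have one_sub_v : ∀ p ∈ P3, 1 - p.1 ≠ 0 := fun p ⟨_, _, _, _⟩ => by linarith
  have one_sub_x : ∀ p ∈ P3, 1 - p.2.1 ≠ 0 := fun p ⟨_, _, _, _⟩ => by linarith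
  have y_ne : ∀ p ∈ P3, p.2.2 ≠ 0 := fun p ⟨_, _, _, _⟩ => by linarith
  have y_mul_one_sub_v : ∀ p ∈ P3, p.2.2 * (1 - p.1) ≠ 0 := fun p hp =>
    mul_ne_zero (y_ne p hp) (one_sub_v p hp)
  have y_mul_one_sub_x : ∀ p ∈ P3, p.2.2 * (1 - p.2.1) ≠ 0 := fun p hp =>
    mul_ne_zero (y_ne p hp) (one_sub_x p hp)
  have at_vx := hS.comp (f := fun p : ℝ × ℝ × ℝ => (p.1, p.2.1)) (s := P3) (by fun_prop)
    fun _ hp => ⟨hp.1, hp.2.1, hp.2.2.1.trans hp.2.2.2⟩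
  have at_vy := hS.comp (f := fun p : ℝ × ℝ × ℝ => (p.1, p.2.2)) (s := P3) (by fun_prop)
    fun _ hp => ⟨hp.1, hp.2.1.trans hp.2.2.1, hp.2.2.2⟩
  have at_xy := hS.comp (f := fun p : ℝ × ℝ × ℝ => p.2) (s := P3) (by fun_prop)
    fun _ hp => ⟨hp.1.trans hp.2.1, hp.2.2.1, hp.2.2.2⟩
  have at_div := hS.comp (by fun_prop (disch := assumption))
    fun _ hp => isIncreasingChart_div.mem_P2 hp
  have at_phi := hS.comp (by fun_prop (disch := assumption))
    fun _ hp => isIncreasingChart_one_sub_div.mem_P2 hp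
  have at_psi := hS.comp (by fun_prop (disch := assumption))
    fun _ hp => isIncreasingChart_mul_one_sub_div.mem_P2 hp
  exact ((((at_vx.sub at_vy).add at_xy).sub at_div).sub at_phi).add at_psi

lemma SixTermAE.sixTerm_eq_zero_of_continuousOn {S : ℝ × ℝ → ℝ} (h6 : SixTermAE S)
    (hS : ContinuousOn S P2) {v x y : ℝ} (hp : (v, x, y) ∈ P3) : sixTerm S v x y = 0 :=
  Measure.eqOn_open_of_ae_eq (μ := volume) (g := fun _ => 0) (sixTermAE_iff_sixTerm.1 h6)
    isOpen_P3 (continuousOn_sixTerm hS) continuousOn_const hp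

lemma SixTermAE.exists_fiveTerm_ae_eq_of_isBoundedUnder {R : ℝ × ℝ → ℝ} (h6 : SixTermAE R)
    (hR : Measurable R) (hR_bdd : ∀ p ∈ P2, (𝓝 p).IsBoundedUnder (· ≤ ·) fun z => |R z|) :
    ∃ L, AEMeasurable L (volume.restrict (Ioo (0 : ℝ) 1)) ∧
      ∀ᵐ p ∂(volume.restrict P2), fiveTerm L p = R p := by
  obtain ⟨μ, hμ, hμ_supp, hμ_Ioo, hμ_one⟩ :=
    exists_contDiff_tsupport_subset_Ioo (show (1 / 4 : ℝ) < 1 / 3 by norm_num)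
  obtain ⟨S, hS, hRS⟩ := exists_contDiffOn_ae_eq_of_locally fun p₀ hp₀ =>
    h6.exists_contDiffAt_ae_eq hR hR_bdd hμ hμ_supp hμ_Ioo hμ_one hp₀
  rw [← ae_restrict_iff' measurableSet_P2] at hRS
  have six_S : SixTermAE S := (h6.add (sixTermAE_fiveTerm _)).congr hRS
  obtain ⟨L, hL_cont, hL⟩ := exists_fiveTerm_eq_of_contDiffOn hS
    fun v x y hp => six_S.sixTerm_eq_zero_of_continuousOn hS.continuousOn hp
  refine ⟨fun t => L t + -1 * sliceAverage μ R t, (hL_cont.aemeasurable measurableSet_Ioo).add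
    ((measurable_sliceAverage hμ.continuous.measurable hR).const_mul _).aemeasurable, ?_⟩
  filter_upwards [hRS, ae_restrict_mem measurableSet_P2] with p hp hpP
  rw [fiveTerm_add_const_mul, hL p hpP, ← hp]
  ring

end Patching

section Dilation

open scoped ENNReal NNReal

lemma hausdorffMeasure_restrict_preimage_le {X Y : Type*} [MetricSpace X] [MeasurableSpace X]
    [BorelSpace X] [MetricSpace Y] [MeasurableSpace Y] [BorelSpace Y] {d : ℝ} (hd : 0 ≤ d)
    {f : X → Y} {S : Set X} {S' : Set Y} {k : ℝ≥0} (hS : MeasurableSet S) (hfS : MapsTo f S S')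
    (hf : ∀ v ∈ S, ∀ w ∈ S, dist v w ≤ k * dist (f v) (f w)) (T : Set Y) :
    (Measure.hausdorffMeasure d).restrict S (f ⁻¹' T) ≤
      (k : ℝ≥0∞) ^ d * (Measure.hausdorffMeasure d).restrict S' T := by
  have antilipschitz : AntilipschitzWith k (S.domRestrict f) :=
    AntilipschitzWith.of_le_mul_dist fun v w => hf v v.2 w w.2
  have image_eq : f ⁻¹' T ∩ S = Subtype.val '' (S.domRestrict f ⁻¹' (T ∩ S')) := by
    ext v
    exact ⟨fun hv => ⟨⟨v, hv.2⟩, ⟨hv.1, hfS hv.2⟩, rfl⟩, by rintro ⟨w, hw, rfl⟩; exact ⟨hw.1, w.2⟩⟩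
  rw [Measure.restrict_apply' hS, image_eq, isometry_subtype_coe.hausdorffMeasure_image (.inl hd)]
  exact (antilipschitz.hausdorffMeasure_preimage_le hd _).trans
    (mul_le_mul_right (Measure.le_restrict_apply _ _) _)

lemma volume_restrict_preimage_le {f : ℝ → ℝ} {S S' : Set ℝ} {k : ℝ≥0} (hS : MeasurableSet S)
    (hfS : MapsTo f S S') (hf : ∀ v ∈ S, ∀ w ∈ S, dist v w ≤ k * dist (f v) (f w))
    (T : Set ℝ) : volume.restrict S (f ⁻¹' T) ≤ k * volume.restrict S' T := by
  simpa [hausdorffMeasure_real] using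
    hausdorffMeasure_restrict_preimage_le zero_le_one hS hfS hf T

lemma volume_restrict_preimage_prodMap_le {f : ℝ → ℝ} {S S' : Set ℝ} {k : ℝ≥0}
    (hS : MeasurableSet S) (hfS : MapsTo f S S')
    (hf : ∀ v ∈ S, ∀ w ∈ S, dist v w ≤ k * dist (f v) (f w)) (T : Set (ℝ × ℝ)) :
    volume.restrict (S ×ˢ S) (Prod.map f f ⁻¹' T) ≤ k ^ 2 * volume.restrict (S' ×ˢ S') T := by
  have dist_le : ∀ z ∈ S ×ˢ S, ∀ w ∈ S ×ˢ S,
      dist z w ≤ k * dist (Prod.map f f z) (Prod.map f f w) := fun z hz w hw => by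
    rw [Prod.dist_eq, Prod.dist_eq, mul_max_of_nonneg _ _ k.coe_nonneg]
    exact max_le_max (hf _ hz.1 _ hw.1) (hf _ hz.2 _ hw.2)
  rw [← ENNReal.rpow_two, ← hausdorffMeasure_prod_real]
  exact hausdorffMeasure_restrict_preimage_le zero_le_two (hS.prod hS) (hfS.prodMap hfS) dist_le T

variable {f g : ℝ → ℝ → ℝ} {m : ℝ → Matrix (Fin 2) (Fin 2) ℝ} {δ : ℝ≥0} {q : ℝ}

lemma moebius_sub_moebius {M : Matrix (Fin 2) (Fin 2) ℝ} {v w : ℝ} (hv : moebiusDenom M v ≠ 0)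
    (hw : moebiusDenom M w ≠ 0) :
    moebius M v - moebius M w = M.det * (v - w) / (moebiusDenom M v * moebiusDenom M w) := by
  rw [moebius, moebius, div_sub_div _ _ hv hw, Matrix.det_fin_two]
  unfold moebiusDenom
  ring

lemma IsMoebiusChart.dist_le (hm : IsMoebiusChart f m) (hδ : 0 < δ) (hq : q < 1)
    (hδq : δ ≤ q * (1 - q)) :
    ∀ v ∈ Ioo 0 q, ∀ w ∈ Ioo 0 q, dist v w ≤ δ⁻¹ * dist (f q v) (f q w) := by
  intro v hv w hw
  have denom_v := hm.denom_mem_Ioc hv.1 hv.2 hq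
  have denom_w := hm.denom_mem_Ioc hw.1 hw.2 hq
  have denom_pos := mul_pos denom_v.1 denom_w.1
  have le_det : (δ : ℝ) ≤ (m q).det := hδq.trans (hm.le_det ⟨hv.1.trans hv.2, hq⟩)
  have det_pos : 0 < (m q).det := (NNReal.coe_pos.2 hδ).trans_le le_det
  rw [hm.eq_moebius, hm.eq_moebius, Real.dist_eq, Real.dist_eq,
    moebius_sub_moebius denom_v.1.ne' denom_w.1.ne', abs_div, abs_mul, abs_of_pos det_pos,
    abs_of_pos denom_pos, NNReal.coe_inv, inv_mul_eq_div, le_div_iff₀ (NNReal.coe_pos.2 hδ),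
    le_div_iff₀ denom_pos, mul_comm |v - w|]
  calc δ * |v - w| * (moebiusDenom (m q) v * moebiusDenom (m q) w)
      ≤ δ * |v - w| * 1 := by
        gcongr
        exact mul_le_one₀ denom_v.2 denom_w.1.le denom_w.2
    _ ≤ (m q).det * |v - w| := by rw [mul_one]; gcongr

lemma IsMoebiusChart.dist_comp_mul_le (hm : IsMoebiusChart f m) (hδ : 0 < δ) (hq : q < 1)
    (hδq : δ ≤ q * (1 - q)) :
    ∀ s ∈ Ioo (0 : ℝ) 1, ∀ t ∈ Ioo (0 : ℝ) 1,
      dist s t ≤ (δ⁻¹ * δ⁻¹ : ℝ≥0) * dist (f q (s * q)) (f q (t * q)) := by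
  intro s hs t ht
  have δ_pos : (0 : ℝ) < δ := hδ
  have q_pos : 0 < q := (pos_iff_pos_of_mul_pos (δ_pos.trans_le hδq)).2 (sub_pos.2 hq)
  have le_q : (δ : ℝ) ≤ q := hδq.trans (mul_le_of_le_one_right q_pos.le (by linarith))
  have mem {t : ℝ} (ht : t ∈ Ioo (0 : ℝ) 1) : t * q ∈ Ioo 0 q :=
    ⟨mul_pos ht.1 q_pos, mul_lt_of_lt_one_left q_pos ht.2⟩
  have scaled := hm.dist_le hδ hq hδq _ (mem hs) _ (mem ht)
  rw [Real.dist_eq, ← sub_mul, abs_mul, abs_of_pos q_pos, ← Real.dist_eq] at scaled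
  calc dist s t = δ⁻¹ * (dist s t * δ) := by push_cast; field_simp
    _ ≤ δ⁻¹ * (dist s t * q) := by gcongr
    _ ≤ δ⁻¹ * (δ⁻¹ * dist (f q (s * q)) (f q (t * q))) := by gcongr
    _ = _ := by push_cast; ring

end Dilation

section Tails

open scoped ENNReal NNReal

variable {R : ℝ × ℝ → ℝ} {δ : ℝ≥0} {q : ℝ}

lemma measure_natCast_mul_lt_abs_le {X : Type*} [MeasurableSpace X] (μ : Measure X) {n : ℕ}
    {F : Fin n → X → ℝ} {G : X → ℝ} (hG : ∀ x, |G x| ≤ ∑ i, |F i x|) {K : ℝ} {ε : ℝ≥0∞}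
    (hF : ∀ i, μ {x | K < |F i x|} ≤ ε) : μ {x | n * K < |G x|} ≤ n * ε := by
  have subset : {x | n * K < |G x|} ⊆ ⋃ i, {x | K < |F i x|} := fun x hx => by
    by_contra hle
    simp only [mem_iUnion, mem_ofPred_eq, not_exists, not_lt] at hle
    refine (hx.trans_le (hG x)).not_ge ((Finset.sum_le_sum fun i _ => hle i).trans_eq ?_)
    simp
  calc μ {x | n * K < |G x|} ≤ ∑ i, μ {x | K < |F i x|} :=
        (measure_mono subset).trans (measure_iUnion_fintype_le _ _)
    _ ≤ ∑ _ : Fin n, ε := Finset.sum_le_sum fun i _ => hF i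
    _ = n * ε := by simp

lemma tendsto_measure_natCast_lt_abs {X : Type*} [MeasurableSpace X] (μ : Measure X)
    [IsFiniteMeasure μ] {f : X → ℝ} (hf : Measurable f) :
    Filter.Tendsto (fun n : ℕ => μ {x | (n : ℝ) < |f x|}) Filter.atTop (𝓝 0) := by
  have inter_eq : ⋂ n : ℕ, {x | (n : ℝ) < |f x|} = ∅ := by
    refine eq_empty_iff_forall_notMem.2 fun x hx => ?_
    obtain ⟨n, hn⟩ := exists_nat_ge |f x|
    exact hn.not_gt (mem_iInter.1 hx n)
  rw [← measure_empty (μ := μ), ← inter_eq]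
  refine tendsto_measure_iInter_atTop
    (fun n => (measurableSet_lt measurable_const hf.abs).nullMeasurableSet)
    (fun m n hmn x hx => ?_) ⟨0, measure_ne_top _ _⟩
  exact (Nat.cast_le.2 hmn : (m : ℝ) ≤ n).trans_lt hx

/-- The measure of the part of the unit square where the antisymmetric extension of `R` exceeds `K`
in absolute value. -/
noncomputable def squareTail (R : ℝ × ℝ → ℝ) (K : ℝ) : ℝ≥0∞ :=
  volume.restrict (Ioo 0 1 ×ˢ Ioo 0 1) {w | K < |antisymmExtension R w|}

lemma tendsto_squareTail (hR : Measurable R) :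
    Filter.Tendsto (fun n : ℕ => squareTail R n) Filter.atTop (𝓝 0) := by
  have : IsFiniteMeasure (volume.restrict (Ioo (0 : ℝ) 1 ×ˢ Ioo (0 : ℝ) 1)) :=
    isFiniteMeasure_restrict.2 (by simp [Measure.volume_eq_prod])
  exact tendsto_measure_natCast_lt_abs _ (measurable_antisymmExtension hR)

lemma volume_lt_abs_antisymmExtension_chart_le {f g : ℝ → ℝ → ℝ}
    {m : ℝ → Matrix (Fin 2) (Fin 2) ℝ} (hf : IsIncreasingChart f g) (hm : IsMoebiusChart f m)
    (hδ : 0 < δ) (hq : q ∈ Ioo (0 : ℝ) 1) (hδq : δ ≤ q * (1 - q)) (K : ℝ) :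
    volume.restrict (Ioo (0 : ℝ) 1 ×ˢ Ioo (0 : ℝ) 1)
        {z | K < |antisymmExtension R (f q (z.1 * q), f q (z.2 * q))|} ≤
      (δ⁻¹ * δ⁻¹ : ℝ≥0) ^ 2 * squareTail R K :=
  volume_restrict_preimage_prodMap_le (f := fun t => f q (t * q)) measurableSet_Ioo
    (fun _ ht => hf.mem_Ioo (mul_pos ht.1 hq.1) (mul_lt_of_lt_one_left hq.1 ht.2) hq.2)
    (hm.dist_comp_mul_le hδ hq.2 hδq) {w | K < |antisymmExtension R w|}

lemma volume_lt_abs_fourTerm_le (hδ : 0 < δ) (hq : q ∈ Ioo (0 : ℝ) 1) (hδq : δ ≤ q * (1 - q))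
    (K : ℝ) :
    volume.restrict (Ioo (0 : ℝ) 1 ×ˢ Ioo (0 : ℝ) 1)
        {z | 4 * K < |fourTerm R (z.1 * q) (z.2 * q) q|} ≤
      4 * ((δ⁻¹ * δ⁻¹ : ℝ≥0) ^ 2 * squareTail R K) := by
  have chart {f g : ℝ → ℝ → ℝ} {m : ℝ → Matrix (Fin 2) (Fin 2) ℝ} (hf : IsIncreasingChart f g)
      (hm : IsMoebiusChart f m) :=
    volume_lt_abs_antisymmExtension_chart_le (R := R) hf hm hδ hq hδq K
  let ext (f : ℝ → ℝ → ℝ) (z : ℝ × ℝ) : ℝ := antisymmExtension R (f q (z.1 * q), f q (z.2 * q))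
  refine measure_natCast_mul_lt_abs_le (n := 4) _ (F := ![ext fun _ t => t, ext fun y t => t / y,
    ext fun y t => (1 - y) / (1 - t), ext fun y t => t * (1 - y) / (y * (1 - t))])
    (fun z => ?_) fun i => ?_
  · rw [Fin.sum_univ_four]
    exact (abs_add_le _ _).trans
      (add_le_add_left ((abs_sub _ _).trans (add_le_add_left (abs_sub _ _) _)) _)
  · fin_cases i
    · exact chart isIncreasingChart_id isMoebiusChart_id
    · exact chart isIncreasingChart_div isMoebiusChart_div
    · exact chart isIncreasingChart_one_sub_div isMoebiusChart_one_sub_div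
    · exact chart isIncreasingChart_mul_one_sub_div isMoebiusChart_mul_one_sub_div

end Tails

section Median

open ProbabilityTheory
open scoped ENNReal

variable {X Y : Type*} [MeasurableSpace X] [MeasurableSpace Y]

/-- `c` is a median of `g` up to an error of `1`. The tolerance allows integer medians, which can
be chosen measurably in a parameter. -/
def IsApproxMedian (μ : Measure Y) (g : Y → ℝ) (c : ℝ) : Prop :=
  1 / 2 ≤ μ {y | g y ≤ c} ∧ 1 / 2 ≤ μ {y | c - 1 ≤ g y}

lemma exists_int_half_le_measure_le (μ : Measure Y) [IsProbabilityMeasure μ] {g : Y → ℝ}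
    (hg : Measurable g) :
    ∃ c : ℤ, 1 / 2 ≤ μ {y | g y ≤ c} ∧ μ {y | g y ≤ (c - 1 : ℤ)} < 1 / 2 := by
  have : IsProbabilityMeasure (μ.map g) := Measure.isProbabilityMeasure_map hg.aemeasurable
  have measure_eq (c : ℝ) : μ {y | g y ≤ c} = ENNReal.ofReal (cdf (μ.map g) c) := by
    rw [ofReal_cdf, Measure.map_apply hg measurableSet_Iic]
    rfl
  have half : (1 / 2 : ℝ≥0∞) = ENNReal.ofReal (1 / 2) := by
    rw [ENNReal.ofReal_div_of_pos two_pos, ENNReal.ofReal_one, ENNReal.ofReal_ofNat]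
  simp only [measure_eq, half]
  have mono := monotone_cdf (μ.map g)
  obtain ⟨n, hn⟩ := (((tendsto_cdf_atTop (μ.map g)).comp
    tendsto_intCast_atTop_atTop).eventually_const_le (by norm_num : (1 / 2 : ℝ) < 1)).exists
  obtain ⟨b, hb⟩ := (((tendsto_cdf_atBot (μ.map g)).comp
    (tendsto_intCast_atBot_iff.2 Filter.tendsto_id)).eventually_lt_const
      (by norm_num : (0 : ℝ) < 1 / 2)).exists
  obtain ⟨c, hc, least⟩ := Int.exists_least_of_bdd
    (P := fun c : ℤ => 1 / 2 ≤ cdf (μ.map g) c)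
    ⟨b, fun z hz => by
      by_contra! hlt
      exact hb.not_ge (hz.trans (mono (Int.cast_le.2 hlt.le)))⟩ ⟨n, hn⟩
  refine ⟨c, ENNReal.ofReal_le_ofReal hc, (ENNReal.ofReal_lt_ofReal_iff (by norm_num)).2 ?_⟩
  by_contra! hle
  exact (least _ hle).not_gt (sub_one_lt c)

lemma isApproxMedian_of_half_le (μ : Measure Y) [IsProbabilityMeasure μ] {g : Y → ℝ} {c : ℤ}
    (hc : 1 / 2 ≤ μ {y | g y ≤ c}) (hc' : μ {y | g y ≤ (c - 1 : ℤ)} < 1 / 2) :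
    IsApproxMedian μ g c := by
  refine ⟨hc, ?_⟩
  by_contra! hlt
  have union_eq : {y | g y ≤ (c - 1 : ℤ)} ∪ {y | (c : ℝ) - 1 ≤ g y} = univ :=
    eq_univ_of_forall fun y => by simpa using le_total (g y) (c - 1)
  have total := (measure_union_le (μ := μ) _ _).trans_lt (ENNReal.add_lt_add hc' hlt)
  rw [union_eq, measure_univ, ENNReal.add_halves] at total
  exact total.false

lemma exists_measurable_isApproxMedian (μ : Measure Y) [IsProbabilityMeasure μ] {F : X × Y → ℝ}
    (hF : Measurable F) :
    ∃ c : X → ℝ, Measurable c ∧ ∀ x, IsApproxMedian μ (fun y => F (x, y)) (c x) := by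
  choose c hc hc' using fun x =>
    exists_int_half_le_measure_le μ (g := fun y => F (x, y)) (hF.comp measurable_prodMk_left)
  have mono (x : X) : Monotone fun a : ℤ => μ {y | F (x, y) ≤ a} := fun _ _ hab =>
    measure_mono fun _ hy => mem_ofPred_eq ▸ le_trans hy (Int.cast_le.2 hab)
  have measurable_tail (a : ℤ) : Measurable fun x => μ {y | F (x, y) ≤ a} :=
    measurable_measure_prodMk_left (measurableSet_le hF measurable_const)
  have fiber_eq (a : ℤ) : c ⁻¹' {a} =
      {x | 1 / 2 ≤ μ {y | F (x, y) ≤ a}} ∩ {x | μ {y | F (x, y) ≤ (a - 1 : ℤ)} < 1 / 2} := by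
    ext x
    refine ⟨by rintro rfl; exact ⟨hc x, hc' x⟩, fun ⟨ha, ha'⟩ => ?_⟩
    have := (mono x).reflect_lt (ha'.trans_le (hc x))
    have := (mono x).reflect_lt ((hc' x).trans_le ha)
    exact le_antisymm (by omega) (by omega)
  have measurable_c : Measurable c := measurable_to_countable' fun a => by
    rw [fiber_eq]
    exact (measurableSet_le measurable_const (measurable_tail a)).inter
      (measurableSet_lt (measurable_tail _) measurable_const)
  exact ⟨fun x => c x, (measurable_of_countable _).comp measurable_c,
    fun x => isApproxMedian_of_half_le μ (hc x) (hc' x)⟩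

lemma measure_le_two_mul_measure_prod {μ : Measure Y} [SFinite μ] {A B : Set Y} {D : Set (Y × Y)}
    (hB : 1 / 2 ≤ μ B) (hD : A ×ˢ B ⊆ D) : μ A ≤ 2 * (μ.prod μ) D :=
  calc μ A = 2 * (μ A * (1 / 2)) := by
        rw [mul_left_comm, ENNReal.mul_div_cancel two_ne_zero ENNReal.ofNat_ne_top, mul_one]
    _ ≤ 2 * (μ A * μ B) := by gcongr
    _ ≤ 2 * (μ.prod μ) D := by
        rw [← Measure.prod_prod]
        gcongr

-- Where `g` exceeds its median by `K`, it exceeds its values on half of the space by `K`.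
lemma IsApproxMedian.measure_lt_abs_sub_le {μ : Measure Y} [SFinite μ] {g : Y → ℝ} {c : ℝ}
    (hc : IsApproxMedian μ g c) (K : ℝ) :
    μ {y | K + 1 < |g y - c|} ≤ 4 * (μ.prod μ) {z | K < |g z.1 - g z.2|} := by
  have above : μ {y | K + 1 < g y - c} ≤ 2 * (μ.prod μ) {z | K < |g z.1 - g z.2|} := by
    refine measure_le_two_mul_measure_prod hc.1 fun z ⟨hz₁, hz₂⟩ => ?_
    simp only [mem_ofPred_eq] at hz₁ hz₂ ⊢
    exact lt_abs.2 (.inl (by linarith))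
  have below : μ {y | K + 1 < -(g y - c)} ≤ 2 * (μ.prod μ) {z | K < |g z.1 - g z.2|} := by
    refine measure_le_two_mul_measure_prod hc.2 fun z ⟨hz₁, hz₂⟩ => ?_
    simp only [mem_ofPred_eq] at hz₁ hz₂ ⊢
    exact lt_abs.2 (.inr (by linarith))
  calc μ {y | K + 1 < |g y - c|} ≤ μ {y | K + 1 < g y - c} + μ {y | K + 1 < -(g y - c)} :=
        (measure_mono fun y (hy : K + 1 < |g y - c|) => lt_abs.1 hy).trans (measure_union_le _ _)
    _ ≤ _ := add_le_add above below
    _ = _ := by rw [← add_mul]; norm_num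

end Median

section LocalBoundedness

open scoped ENNReal NNReal

variable {R S : ℝ × ℝ → ℝ} {c : ℝ → ℝ} {δ : ℝ≥0}

/-- The proportion of the horizontal segment of `P2` at height `q` on which `S` exceeds `K` in
absolute value; the segment is parametrised by `t ↦ (t * q, q)` with `t ∈ (0, 1)`. -/
noncomputable def sliceTail (S : ℝ × ℝ → ℝ) (K q : ℝ) : ℝ≥0∞ :=
  volume.restrict (Ioo 0 1) {t | K < |S (t * q, q)|}

lemma SixTermAE.ae_ae_slice_sub_eq_fourTerm (h6 : SixTermAE R) :
    ∀ᵐ q ∂(volume.restrict (Ioo (0 : ℝ) 1)),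
      ∀ᵐ z ∂(volume.restrict (Ioo (0 : ℝ) 1 ×ˢ Ioo (0 : ℝ) 1)),
        R (z.1 * q, q) - R (z.2 * q, q) = fourTerm R (z.1 * q) (z.2 * q) q := by
  have pulled := ae_restrict_comp_of_leftInvOn volume
    (F := fun p : ℝ × ℝ × ℝ => (p.2.1 * p.1, p.2.2 * p.1, p.1))
    (G := fun p => (p.2.2, p.1 / p.2.2, p.2.1 / p.2.2))
    (U := Ioo (0 : ℝ) 1 ×ˢ (Ioo (0 : ℝ) 1 ×ˢ Ioo (0 : ℝ) 1))
    (V := {p | p.1 ∈ Ioo 0 p.2.2 ∧ p.2.1 ∈ Ioo 0 p.2.2 ∧ p.2.2 < 1})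
    (measurableSet_Ioo.prod (measurableSet_Ioo.prod measurableSet_Ioo)) (fun p hp => by
      have : p.2.2 ≠ 0 := (hp.1.1.trans hp.1.2).ne'
      exact DifferentiableAt.differentiableWithinAt (by fun_prop (disch := assumption)))
    (fun p ⟨hq, hs, ht⟩ =>
      ⟨⟨mul_pos hs.1 hq.1, mul_lt_of_lt_one_left hq.1 hs.2⟩,
        ⟨mul_pos ht.1 hq.1, mul_lt_of_lt_one_left hq.1 ht.2⟩, hq.2⟩)
    (fun p hp => by simp [hp.1.1.ne']) h6.ae_sub_eq_fourTerm
  rw [Measure.volume_eq_prod, ← Measure.prod_restrict] at pulled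
  exact Measure.ae_ae_of_ae_prod pulled

lemma SixTermAE.ae_sliceTail_le (h6 : SixTermAE R)
    (hc : ∀ q, IsApproxMedian (volume.restrict (Ioo 0 1)) (fun t => R (t * q, q)) (c q))
    (hδ : 0 < δ) (K : ℝ) :
    ∀ᵐ q : ℝ ∂(volume.restrict (Ioo (0 : ℝ) 1)), δ ≤ q * (1 - q) →
      sliceTail (fun p => R p - c p.2) (4 * K + 1) q ≤
        4 * (4 * ((δ⁻¹ * δ⁻¹ : ℝ≥0) ^ 2 * squareTail R K)) := by
  filter_upwards [h6.ae_ae_slice_sub_eq_fourTerm, ae_restrict_mem measurableSet_Ioo]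
    with q h_four hq hδq
  refine ((hc q).measure_lt_abs_sub_le (4 * K)).trans (mul_le_mul_right ?_ _)
  rw [Measure.prod_restrict, ← Measure.volume_eq_prod]
  refine le_trans (measure_mono_ae ?_) (volume_lt_abs_fourTerm_le hδ hq hδq K)
  filter_upwards [h_four] with z hz (hlt : 4 * K < |R (z.1 * q, q) - R (z.2 * q, q)|)
  rwa [hz] at hlt

/-- The five arguments at which `fiveTerm` evaluates a function. -/
noncomputable def fiveTermArg : Fin 5 → ℝ × ℝ → ℝ :=
  ![fun p => p.1, fun p => p.2, fun p => p.1 / p.2, fun p => (1 - p.2) / (1 - p.1),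
    fun p => p.1 * (1 - p.2) / (p.2 * (1 - p.1))]

lemma fiveTermArg_mem_Ioo {p : ℝ × ℝ} (hp : p ∈ P2) (i : Fin 5) :
    fiveTermArg i p ∈ Ioo (0 : ℝ) 1 := by
  fin_cases i
  · exact ⟨hp.1, hp.2.1.trans hp.2.2⟩
  · exact ⟨hp.1.trans hp.2.1, hp.2.2⟩
  · exact div_mem_Ioo_of_mem_P2 hp
  · exact one_sub_div_mem_Ioo_of_mem_P2 hp
  · exact mul_one_sub_div_mem_Ioo_of_mem_P2 hp

lemma continuousAt_fiveTermArg {p : ℝ × ℝ} (hp : p ∈ P2) (i : Fin 5) :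
    ContinuousAt (fiveTermArg i) p := by
  have snd_ne : p.2 ≠ 0 := (hp.1.trans hp.2.1).ne'
  have one_sub_ne : 1 - p.1 ≠ 0 := (sub_pos.2 (hp.2.1.trans hp.2.2)).ne'
  have mul_ne : p.2 * (1 - p.1) ≠ 0 := mul_ne_zero snd_ne one_sub_ne
  fin_cases i
  · exact continuousAt_fst
  · exact continuousAt_snd
  · exact continuousAt_fst.div continuousAt_snd snd_ne
  · exact (continuousAt_const.sub continuousAt_snd).div (continuousAt_const.sub continuousAt_fst)
      one_sub_ne
  · exact (continuousAt_fst.mul (continuousAt_const.sub continuousAt_snd)).div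
      (continuousAt_snd.mul (continuousAt_const.sub continuousAt_fst)) mul_ne

lemma ae_forall_fiveTermArg {Q : ℝ → Prop} (hQ : ∀ᵐ s ∂(volume.restrict (Ioo (0 : ℝ) 1)), Q s) :
    ∀ᵐ p ∂(volume.restrict P2), ∀ i, Q (fiveTermArg i p) := by
  refine ae_all_iff.2 fun i => ?_
  fin_cases i
  · exact ae_P2_fst hQ
  · exact ae_P2_snd hQ
  · exact isIncreasingChart_div.ae_P2 hQ
  · exact isIncreasingChart_one_sub_div.ae_P2 hQ
  · exact isIncreasingChart_mul_one_sub_div.ae_P2 hQ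

lemma exists_eventually_le_fiveTermArg {p : ℝ × ℝ} (hp : p ∈ P2) :
    ∃ δ : ℝ≥0, 0 < δ ∧
      ∀ᶠ z in 𝓝 p, ∀ i, δ ≤ fiveTermArg i z * (1 - fiveTermArg i z) := by
  have pos (i : Fin 5) : 0 < fiveTermArg i p * (1 - fiveTermArg i p) :=
    mul_pos (fiveTermArg_mem_Ioo hp i).1 (sub_pos.2 (fiveTermArg_mem_Ioo hp i).2)
  obtain ⟨δ, hδ, hlt⟩ : ∃ δ : ℝ, 0 < δ ∧ ∀ i, δ < fiveTermArg i p * (1 - fiveTermArg i p) := by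
    have small : ∀ᶠ δ in 𝓝[>] (0 : ℝ), ∀ i, δ < fiveTermArg i p * (1 - fiveTermArg i p) :=
      Filter.eventually_all.2 fun i => mem_nhdsWithin_of_mem_nhds (Iio_mem_nhds (pos i))
    exact (eventually_mem_nhdsWithin.and small).exists
  refine ⟨⟨δ, hδ.le⟩, hδ, Filter.eventually_all.2 fun i => ?_⟩
  have cont := continuousAt_fiveTermArg hp i
  exact ((cont.mul (continuousAt_const.sub cont)).eventually_const_lt (hlt i)).mono fun _ h => h.le

lemma volume_lt_abs_slice_le {f g : ℝ → ℝ → ℝ} {m : ℝ → Matrix (Fin 2) (Fin 2) ℝ}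
    (hf : IsIncreasingChart f g) (hm : IsMoebiusChart f m) {x y q K : ℝ} {ε : ℝ≥0∞} (hδ : 0 < δ)
    (hxy : x ≤ y) (hy : y < 1) (hδy : δ ≤ y * (1 - y)) (hS : sliceTail S K q ≤ ε) :
    volume.restrict (Ioo 0 x) {v | K < |S (f y v * q, q)|} ≤ (δ⁻¹ : ℝ≥0) * ε := by
  have mem {v : ℝ} (hv : v ∈ Ioo 0 x) : v ∈ Ioo 0 y := ⟨hv.1, hv.2.trans_le hxy⟩
  refine (volume_restrict_preimage_le measurableSet_Ioo (T := {t | K < |S (t * q, q)|})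
    (fun v hv => hf.mem_Ioo hv.1 (mem hv).2 hy)
    fun v hv w hw => hm.dist_le hδ hy hδy v (mem hv) w (mem hw)).trans ?_
  exact mul_le_mul_right hS _

lemma volume_lt_abs_coneTerm_le {p : ℝ × ℝ} (hp : p ∈ P2) (hδ : 0 < δ)
    (hδp : ∀ i, δ ≤ fiveTermArg i p * (1 - fiveTermArg i p)) {K : ℝ} {ε : ℝ≥0∞}
    (hS : ∀ i, sliceTail S K (fiveTermArg i p) ≤ ε) :
    volume.restrict (Ioo 0 p.1) {v | 5 * K < |coneTerm S v p.1 p.2|} ≤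
      5 * ((δ⁻¹ : ℝ≥0) * ε) := by
  obtain ⟨x, y⟩ := p
  have hx : x < 1 := hp.2.1.trans hp.2.2
  have hδx : δ ≤ x * (1 - x) := hδp 0
  refine measure_natCast_mul_lt_abs_le (n := 5) _ (F := ![fun v => S (v / x * x, x),
    fun v => S (v / y * y, y), fun v => S (v / x * (x / y), x / y),
    fun v => S ((1 - x) / (1 - v) * ((1 - y) / (1 - x)), (1 - y) / (1 - x)),
    fun v => S (v * (1 - x) / (x * (1 - v)) * (x * (1 - y) / (y * (1 - x))),
      x * (1 - y) / (y * (1 - x)))]) (fun v => ?_) fun i => ?_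
  · have x_ne : x ≠ 0 := hp.1.ne'
    have y_ne : y ≠ 0 := (hp.1.trans hp.2.1).ne'
    have one_sub_ne : 1 - x ≠ 0 := (sub_pos.2 hx).ne'
    have phi_eq : (1 - x) / (1 - v) * ((1 - y) / (1 - x)) = (1 - y) / (1 - v) := by field_simp
    have psi_eq : v * (1 - x) / (x * (1 - v)) * (x * (1 - y) / (y * (1 - x))) =
      v * (1 - y) / (y * (1 - v)) := by field_simp
    simp only [Fin.sum_univ_five, Matrix.cons_val, div_mul_cancel₀ _ x_ne, div_mul_cancel₀ _ y_ne,
      div_mul_div_cancel₀ x_ne, phi_eq, psi_eq, coneTerm]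
    rw [← abs_neg (S (v, x))]
    exact (abs_sub _ _).trans (add_le_add_left ((abs_add_le _ _).trans (add_le_add_left
      ((abs_add_le _ _).trans (add_le_add_left (abs_add_le _ _) _)) _)) _)
  · fin_cases i
    · exact volume_lt_abs_slice_le isIncreasingChart_div isMoebiusChart_div hδ le_rfl hx hδx (hS 0)
    · exact volume_lt_abs_slice_le isIncreasingChart_div isMoebiusChart_div hδ hp.2.1.le hp.2.2
        (hδp 1) (hS 1)
    · exact volume_lt_abs_slice_le isIncreasingChart_div isMoebiusChart_div hδ le_rfl hx hδx (hS 2)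
    · exact volume_lt_abs_slice_le isIncreasingChart_one_sub_div isMoebiusChart_one_sub_div hδ
        le_rfl hx hδx (hS 3)
    · exact volume_lt_abs_slice_le isIncreasingChart_mul_one_sub_div
        isMoebiusChart_mul_one_sub_div hδ le_rfl hx hδx (hS 4)

lemma SixTermAE.ae_ae_sixTerm (h6 : SixTermAE R) :
    ∀ᵐ p ∂(volume.restrict P2), ∀ᵐ v ∂(volume.restrict (Ioo 0 p.1)), sixTerm R v p.1 p.2 = 0 := by
  have six := (ae_restrict_iff' measurableSet_P3).1 (sixTermAE_iff_sixTerm.1 h6)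
  have swapped := Measure.ae_ae_of_ae_prod (Measure.measurePreserving_swap.quasiMeasurePreserving.ae
    (μa := (volume : Measure (ℝ × ℝ)).prod (volume : Measure ℝ)) six)
  filter_upwards [ae_restrict_of_ae swapped, ae_restrict_mem measurableSet_P2] with p h hp
  rw [ae_restrict_iff' measurableSet_Ioo]
  filter_upwards [h] with v hv hvI using hv ⟨hvI.1, hvI.2, hp.2⟩

lemma exists_notMem_of_measure_lt_univ {X : Type*} [MeasurableSpace X] {μ : Measure X} {s : Set X}
    (hs : μ s < μ univ) {Q : X → Prop} (hQ : ∀ᵐ x ∂μ, Q x) : ∃ x, x ∉ s ∧ Q x := by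
  have frequently_notMem : ∃ᵐ x ∂μ, x ∉ s := fun h => by
    simp only [not_not] at h
    exact hs.ne (measure_congr (Filter.eventuallyEq_univ.2 h))
  exact (frequently_notMem.and_eventually hQ).exists

lemma SixTermAE.ae_abs_add_fiveTerm_le (h6 : SixTermAE R)
    (hc : ∀ q, IsApproxMedian (volume.restrict (Ioo 0 1)) (fun t => R (t * q, q)) (c q))
    (hδ : 0 < δ) {K : ℝ}
    (hK : 5 * ((δ⁻¹ : ℝ≥0) * (4 * (4 * ((δ⁻¹ * δ⁻¹ : ℝ≥0) ^ 2 * squareTail R K)))) < δ) :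
    ∀ᵐ p ∂(volume.restrict P2), (∀ i, δ ≤ fiveTermArg i p * (1 - fiveTermArg i p)) →
      |R p + fiveTerm c p| ≤ 5 * (4 * K + 1) := by
  filter_upwards [h6.ae_ae_sixTerm, ae_forall_fiveTermArg (h6.ae_sliceTail_le hc hδ K),
    ae_restrict_mem measurableSet_P2] with p h_six h_tail hp hδp
  have δ_le : (δ : ℝ) ≤ p.1 :=
    (hδp 0).trans (mul_le_of_le_one_right hp.1.le (sub_le_self _ hp.1.le))
  have bad_lt : volume.restrict (Ioo 0 p.1)
      {v | 5 * (4 * K + 1) < |coneTerm (fun w => R w - c w.2) v p.1 p.2|} <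
        volume.restrict (Ioo 0 p.1) univ := by
    refine (volume_lt_abs_coneTerm_le hp hδ hδp fun i => h_tail i (hδp i)).trans_lt
      (hK.trans_le ?_)
    rw [Measure.restrict_apply_univ, Real.volume_Ioo, sub_zero, ← ENNReal.ofReal_coe_nnreal]
    exact ENNReal.ofReal_le_ofReal δ_le
  obtain ⟨v, hv, hv_six⟩ := exists_notMem_of_measure_lt_univ bad_lt h_six
  rw [mem_ofPred_eq, coneTerm_sub_snd c hv_six] at hv
  exact not_lt.1 hv

lemma SixTermAE.isBoundedUnder_add_fiveTerm (h6 : SixTermAE R) (hR : Measurable R)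
    (hc : ∀ q, IsApproxMedian (volume.restrict (Ioo 0 1)) (fun t => R (t * q, q)) (c q))
    {p : ℝ × ℝ} (hp : p ∈ P2) :
    (𝓝 p ⊓ ae (volume.restrict P2)).IsBoundedUnder (· ≤ ·) fun z => |R z + fiveTerm c z| := by
  obtain ⟨δ, hδ, near⟩ := exists_eventually_le_fiveTermArg hp
  have tail_tendsto : Filter.Tendsto (fun n : ℕ => 5 * ((δ⁻¹ : ℝ≥0) *
      (4 * (4 * ((δ⁻¹ * δ⁻¹ : ℝ≥0) ^ 2 * squareTail R n))))) Filter.atTop (𝓝 0) := by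
    have scale (k : ℝ≥0) {u : ℕ → ℝ≥0∞} (hu : Filter.Tendsto u Filter.atTop (𝓝 0)) :
        Filter.Tendsto (fun n => k * u n) Filter.atTop (𝓝 0) := by
      simpa using ENNReal.Tendsto.const_mul hu (.inr ENNReal.coe_ne_top)
    exact_mod_cast scale 5 (scale _ (scale 4 (scale 4 (scale _ (tendsto_squareTail hR)))))
  obtain ⟨n, hn⟩ := (tail_tendsto.eventually_lt_const (ENNReal.coe_pos.2 hδ)).exists
  exact ⟨5 * (4 * n + 1), Filter.eventually_map.2 ((near.filter_mono inf_le_left).mp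
    ((h6.ae_abs_add_fiveTerm_le hc hδ hn).filter_mono inf_le_right))⟩

lemma exists_measurable_ae_eq_isBoundedUnder {X : Type*} [TopologicalSpace X]
    [SecondCountableTopology X] [MeasurableSpace X] {μ : Measure X} {s : Set X} {f : X → ℝ}
    (hf : Measurable f) (h : ∀ x ∈ s, (𝓝 x ⊓ ae μ).IsBoundedUnder (· ≤ ·) fun y => |f y|) :
    ∃ g, Measurable g ∧ g =ᵐ[μ] f ∧ ∀ x ∈ s, (𝓝 x).IsBoundedUnder (· ≤ ·) fun y => |g y| := by
  have local_bound : ∀ x, ∃ B, ∃ U, IsOpen U ∧ (x ∈ s → x ∈ U) ∧ ∀ᵐ y ∂μ, y ∈ U → |f y| ≤ B := by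
    intro x
    by_cases hx : x ∈ s
    · obtain ⟨B, hB⟩ := h x hx
      obtain ⟨U, hU, V, hV, bound⟩ := Filter.eventually_inf.1 (Filter.eventually_map.1 hB)
      exact ⟨B, interior U, isOpen_interior, fun _ => mem_interior_iff_mem_nhds.2 hU,
        Filter.mem_of_superset hV fun y hy hyU => bound y ⟨interior_subset hyU, hy⟩⟩
    · exact ⟨0, ∅, isOpen_empty, fun h => absurd h hx, by simp⟩
  choose B U hU mem_U bound using local_bound
  obtain ⟨t, -, t_countable, cover⟩ := TopologicalSpace.countable_cover_nhdsWithin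
    fun x hx => mem_nhdsWithin_of_mem_nhds ((hU x).mem_nhds (mem_U x hx))
  obtain ⟨N, hN, N_meas, N_null⟩ := exists_measurable_superset_of_null
    (ae_iff.1 ((ae_ball_iff t_countable).2 fun x _ => bound x))
  refine ⟨Nᶜ.indicator f, hf.indicator N_meas.compl, ?_, fun x hx => ?_⟩
  · filter_upwards [measure_eq_zero_iff_ae_notMem.1 N_null] with y hy
    exact indicator_of_mem hy f
  · obtain ⟨x', hx', hxU⟩ := mem_iUnion₂.1 (cover hx)
    refine ⟨max (B x') 0, Filter.eventually_map.2 ?_⟩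
    filter_upwards [(hU x').mem_nhds hxU] with y hy
    by_cases hyN : y ∈ N
    · simp [hyN]
    · rw [indicator_of_mem hyN]
      by_contra hlt
      exact hyN (hN fun all => hlt ((all x' hx' hy).trans (le_max_left _ _)))

lemma SixTermAE.exists_fiveTerm_ae_eq (h6 : SixTermAE R) (hR : Measurable R) :
    ∃ L, AEMeasurable L (volume.restrict (Ioo (0 : ℝ) 1)) ∧
      ∀ᵐ p ∂(volume.restrict P2), fiveTerm L p = R p := by
  have : IsProbabilityMeasure (volume.restrict (Ioo (0 : ℝ) 1)) := ⟨by simp⟩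
  obtain ⟨c, hc, median⟩ := exists_measurable_isApproxMedian (volume.restrict (Ioo (0 : ℝ) 1))
    (F := fun p => R (p.2 * p.1, p.1)) (by fun_prop)
  have measurable_add : Measurable fun p => R p + fiveTerm c p := by
    unfold fiveTerm
    fun_prop
  obtain ⟨T, hT, T_ae, T_bdd⟩ := exists_measurable_ae_eq_isBoundedUnder measurable_add
    fun p hp => h6.isBoundedUnder_add_fiveTerm hR median hp
  have T_six : SixTermAE T :=
    (h6.add (sixTermAE_fiveTerm c)).congr (T_ae.mono fun _ h => h.symm)
  obtain ⟨L, hL, L_eq⟩ := T_six.exists_fiveTerm_ae_eq_of_isBoundedUnder hT T_bdd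
  refine ⟨fun x => L x + -1 * c x, hL.add (hc.aemeasurable.const_mul _), ?_⟩
  filter_upwards [T_ae, L_eq] with p h_T h_L
  rw [fiveTerm_add_const_mul, h_L, h_T]
  ring

end LocalBoundedness

/-- **Existence** for the perturbed Spence–Abel system: a measurable a.e. solution with data
`(R, C)` exists if and only if `R` satisfies the 6-term equation and the symmetry equation
almost everywhere. -/
theorem perturbed_spence_abel_existence (R : ℝ × ℝ → ℝ)
    (hR : AEMeasurable R (volume.restrict P2)) (C : ℝ) :
    (∃ L : ℝ → ℝ, AEMeasurable L (volume.restrict (Set.Ioo (0:ℝ) 1)) ∧ SolvesAE R C L) ↔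
      (SixTermAE R ∧ SymmAE R) := by
  refine ⟨fun ⟨L, _, hL⟩ => ⟨hL.sixTermAE, hL.symmAE⟩, fun ⟨h6, hsymm⟩ => ?_⟩
  obtain ⟨L, hL, L_eq⟩ := (h6.congr hR.ae_eq_mk).exists_fiveTerm_ae_eq hR.measurable_mk
  refine exists_solvesAE_of_exists_fiveTerm_ae_eq C hsymm ⟨L, hL, ?_⟩
  filter_upwards [L_eq, hR.ae_eq_mk] with p h_L h_R
  rw [h_L, h_R]
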